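/- The Riemann Hypothesis holds if and only if, for every compact set K contained in the open strip D := {s ∈ ℂ : 1/2 < Re(s) < 1} having connected complement in ℂ and for every ε > 0, one has liminf_{T→∞} (1/T)·μ{τ ∈ [0,T] : sup_{s∈K} |ζ(s+iτ) − ζ(s)| < ε} > 0. -/

import Mathlib

open MeasureTheory Filter Complex
open scoped ENNReal

/-- The open strip `D = {s : 1/2 < Re s < 1}`. -/
def strip : Set ℂ := {s : ℂ | 1/2 < s.re ∧ s.re < 1}

/-- Lower density of a set of real numbers:
`liminf_{T→∞} (1/T)·μ(S ∩ [0,T])`. -/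
noncomputable def lowerDens (S : Set ℝ) : ℝ :=
  liminf (fun T : ℝ => (volume (S ∩ Set.Icc 0 T)).toReal / T) atTop

/-- `sup_{s ∈ K} |f s|`, valued in `ℝ≥0∞`. -/
noncomputable def supNorm (K : Set ℂ) (f : ℂ → ℂ) : ℝ≥0∞ :=
  ⨆ s ∈ K, (‖f s‖₊ : ℝ≥0∞)

/-!
Suppose that `ζ(ρ) = 0` with `ρ` in the strip. If the translate of `ζ` by `iτ` is close to `ζ`
around `ρ`, then by the maximum modulus principle it has a zero near `ρ`. There
`ζ(s + iτ) ∏_{p < P} (1 - p^(-s - iτ)) - 1` takes the value `-1`, so by the area mean value property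
its `L²` norm over a disc is bounded below. But this function tends to zero in mean square over `τ`
as `P → ∞`, because `ζ` is, in mean square on vertical lines, the limit of its Dirichlet polynomials
(a consequence of the Euler transform of the alternating zeta series). Hence such `τ` have lower
density zero on a suitable disc.

Conversely, assume the Riemann hypothesis. On a closed rectangle in the strip,
`ζ(s) ∏_{p < M} (1 - p^(-s))` has a logarithm. An `L²` density on the rectangle whose pairings with
the functions `p^(-s)` are absolutely summable over the primes is orthogonal to this logarithm: its
Cauchy transform, which those pairings determine through `-ζ'/ζ`, continues analytically across the
rectangle. By Hahn-Banach the logarithm is therefore an `L²` limit of combinations `∑ b_p p^(-s)`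
with `|b_p| ≤ 1`, and since `∑ ‖p^(-s)‖² < ∞` the coefficients can be rounded to unimodular ones.
This gives phases `ω_p` with `ζ(s) ∏_{p < P} (1 - ω_p p^(-s))` close to `1`. The weight
`∏_{p < P} |(p^(-iτ) + ω_p) / 2|^(2 L)` is concentrated where `p^(-iτ)` is close to `ω_p`, and the
function of the first part is small on average with respect to it. So for a set of `τ` of positive
lower density `ζ(s + iτ)` is close to `∏_{p < P} (1 - ω_p p^(-s))⁻¹`, hence to `ζ(s)`.
-/

section RiemannHypothesis

lemma Gammaℝ_ne_zero_of_ne_trivial_zero {s : ℂ} (hs : s ≠ 0) (h : ¬∃ n : ℕ, s = -2 * (n + 1)) :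
    Gammaℝ s ≠ 0 := by
  rw [Ne, Gammaℝ_eq_zero_iff]
  rintro ⟨n, hn⟩
  cases n with
  | zero => exact hs (by simpa using hn)
  | succ n => exact h ⟨n, by rw [hn]; push_cast; ring⟩

lemma riemannZeta_one_sub_eq_zero {s : ℂ} (hs : riemannZeta s = 0) (h0 : s ≠ 0) (h1 : s ≠ 1)
    (h : ¬∃ n : ℕ, s = -2 * (n + 1)) : riemannZeta (1 - s) = 0 := by
  rw [riemannZeta_def_of_ne_zero h0, div_eq_zero_iff,
    or_iff_left (Gammaℝ_ne_zero_of_ne_trivial_zero h0 h)] at hs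
  rw [riemannZeta_def_of_ne_zero (sub_ne_zero.mpr h1.symm), completedRiemannZeta_one_sub, hs,
    zero_div]

lemma exists_zero_mem_strip_of_not_riemannHypothesis (h : ¬RiemannHypothesis) :
    ∃ ρ ∈ strip, riemannZeta ρ = 0 := by
  simp only [RiemannHypothesis, not_forall] at h
  obtain ⟨s, hs, htriv, h1, hre⟩ := h
  have re_lt_one {z : ℂ} (hz : riemannZeta z = 0) : z.re < 1 :=
    lt_of_not_ge fun hc => riemannZeta_ne_zero_of_one_le_re hc hz
  rcases lt_or_gt_of_ne hre with hlt | hgt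
  · have h0 : s ≠ 0 := by
      rintro rfl
      norm_num [riemannZeta_zero] at hs
    have hs' := riemannZeta_one_sub_eq_zero hs h0 h1 htriv
    exact ⟨1 - s, ⟨by rw [sub_re, one_re]; linarith, re_lt_one hs'⟩, hs'⟩
  · exact ⟨s, ⟨hgt, re_lt_one hs⟩, hs⟩

lemma riemannZeta₁_of_ne_one {s : ℂ} (hs : s ≠ 1) :
    riemannZeta₁ s = (s - 1) * riemannZeta s := by
  rw [riemannZeta_eq_inv_sub_mul hs, mul_inv_cancel_left₀ (sub_ne_zero.mpr hs)]

lemma riemannZeta₁_ne_zero (h : RiemannHypothesis) {s : ℂ} (hs : 1 / 2 < s.re) :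
    riemannZeta₁ s ≠ 0 := by
  rcases eq_or_ne s 1 with rfl | h1
  · simp
  rw [riemannZeta₁_of_ne_one h1]
  refine mul_ne_zero (sub_ne_zero.mpr h1) fun h0 => hs.ne' (h s h0 ?_ h1)
  rintro ⟨n, rfl⟩
  norm_num at hs
  linarith [(n.cast_nonneg : (0 : ℝ) ≤ n)]

end RiemannHypothesis

section EulerTransform

variable {M : Type*} [AddCommMonoid M] {f : M → ℂ} {h x : M}

lemma summable_fwdDiff_iterate (hf : Summable fun n : ℕ => f (x + n • h)) (k : ℕ) :
    Summable fun n : ℕ => (fwdDiff h)^[k] f (x + n • h) := by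
  induction k with
  | zero => exact hf
  | succ k ih =>
    simp only [Function.iterate_succ_apply', fwdDiff, add_assoc, ← succ_nsmul]
    exact ((summable_nat_add_iff 1).mpr ih).sub ih

lemma summable_neg_one_pow_mul {a : ℕ → ℂ} (ha : Summable a) :
    Summable fun n => (-1 : ℂ) ^ n * a n :=
  .of_norm (by simpa using ha.norm)

lemma tsum_neg_one_pow_mul_eq_fwdDiff (hf : Summable fun n : ℕ => f (x + n • h)) :
    ∑' n : ℕ, (-1 : ℂ) ^ n * f (x + n • h) =
      1 / 2 * f x + -(1 / 2) * ∑' n : ℕ, (-1 : ℂ) ^ n * fwdDiff h f (x + n • h) := by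
  have hs := summable_neg_one_pow_mul hf
  have hs' := summable_neg_one_pow_mul ((summable_nat_add_iff 1).mpr hf)
  have hdiff : ∑' n : ℕ, (-1 : ℂ) ^ n * fwdDiff h f (x + n • h) =
      ∑' n : ℕ, (-1 : ℂ) ^ n * f (x + (n + 1) • h) - ∑' n : ℕ, (-1 : ℂ) ^ n * f (x + n • h) := by
    rw [← hs'.tsum_sub hs]
    simp only [fwdDiff, add_assoc, succ_nsmul, mul_sub]
  have hshift : ∑' n : ℕ, (-1 : ℂ) ^ n * f (x + n • h) =
      f x - ∑' n : ℕ, (-1 : ℂ) ^ n * f (x + (n + 1) • h) := by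
    rw [hs.tsum_eq_zero_add, sub_eq_add_neg, ← tsum_neg]
    simp [pow_succ]
  linear_combination (1 / 2 : ℂ) * hshift + (1 / 2 : ℂ) * hdiff

lemma tsum_neg_one_pow_mul_eq_sum_fwdDiff (hf : Summable fun n : ℕ => f (x + n • h)) (k : ℕ) :
    ∑' n : ℕ, (-1 : ℂ) ^ n * f (x + n • h) =
      ∑ j ∈ Finset.range k, 1 / 2 * (-(1 / 2)) ^ j * (fwdDiff h)^[j] f x +
        (-(1 / 2)) ^ k * ∑' n : ℕ, (-1 : ℂ) ^ n * (fwdDiff h)^[k] f (x + n • h) := by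
  induction k with
  | zero => simp
  | succ k ih =>
    rw [ih, tsum_neg_one_pow_mul_eq_fwdDiff (summable_fwdDiff_iterate hf k),
      Finset.sum_range_succ]
    simp only [Function.iterate_succ_apply']
    ring

end EulerTransform

section CpowDiff

/-- The `k`-th forward difference with step `1` of the function `x ↦ x ^ (-s)`; these are the
terms of the Euler transform of the alternating zeta series. -/
noncomputable def cpowDiff (k : ℕ) (s : ℂ) : ℝ → ℂ :=
  (fwdDiff 1)^[k] fun x : ℝ => (x : ℂ) ^ (-s)

lemma cpowDiff_zero (s : ℂ) (x : ℝ) : cpowDiff 0 s x = (x : ℂ) ^ (-s) := rfl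

lemma cpowDiff_succ (k : ℕ) (s : ℂ) (x : ℝ) :
    cpowDiff (k + 1) s x = cpowDiff k s (x + 1) - cpowDiff k s x := by
  simp only [cpowDiff, Function.iterate_succ_apply', fwdDiff]

lemma hasDerivAt_cpowDiff (k : ℕ) (s : ℂ) {x : ℝ} (hx : 0 < x) :
    HasDerivAt (cpowDiff k s) (-s * cpowDiff k (s + 1) x) x := by
  induction k generalizing x with
  | zero =>
    have h := (hasStrictDerivAt_cpow_const (c := -s) (Or.inl hx)).hasDerivAt.comp_ofReal
    rwa [show -s - 1 = -(s + 1) by ring] at h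
  | succ k ih =>
    have h := ((ih (x := x + 1) (by linarith)).comp_add_const x 1).sub (ih hx)
    rw [← mul_sub, ← cpowDiff_succ] at h
    exact h.congr_of_eventuallyEq (.of_forall fun y => cpowDiff_succ k s y)

lemma differentiable_cpowDiff (k : ℕ) {x : ℝ} (hx : 0 < x) :
    Differentiable ℂ fun s => cpowDiff k s x := by
  induction k generalizing x with
  | zero =>
    have hx0 : (x : ℂ) ≠ 0 := ofReal_ne_zero.mpr hx.ne'
    exact fun s => differentiableAt_id.neg.const_cpow (Or.inl hx0)
  | succ k ih =>
    simp only [cpowDiff_succ]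
    exact (ih (by linarith)).sub (ih hx)

lemma norm_cpowDiff_le_two_pow (k : ℕ) {s : ℂ} {x : ℝ} (hx : 0 < x) (hs : 0 ≤ s.re) :
    ‖cpowDiff k s x‖ ≤ 2 ^ k * x ^ (-s.re) := by
  induction k generalizing x with
  | zero => simp [cpowDiff_zero, norm_cpow_eq_rpow_re_of_pos hx]
  | succ k ih =>
    have hmono : (x + 1) ^ (-s.re) ≤ x ^ (-s.re) :=
      Real.rpow_le_rpow_of_nonpos hx (by linarith) (by linarith)
    calc ‖cpowDiff (k + 1) s x‖ ≤ ‖cpowDiff k s (x + 1)‖ + ‖cpowDiff k s x‖ := by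
          rw [cpowDiff_succ]; exact norm_sub_le _ _
      _ ≤ 2 ^ k * x ^ (-s.re) + 2 ^ k * x ^ (-s.re) := by
          gcongr
          · exact (ih (by linarith)).trans (by gcongr)
          · exact ih hx
      _ = 2 ^ (k + 1) * x ^ (-s.re) := by ring

lemma norm_cpowDiff_le (k : ℕ) {s : ℂ} {x : ℝ} (hx : 0 < x) (hs : 0 ≤ s.re) :
    ‖cpowDiff k s x‖ ≤ (‖s‖ + k) ^ k * x ^ (-s.re - k) := by
  induction k generalizing s x with
  | zero => simp [cpowDiff_zero, norm_cpow_eq_rpow_re_of_pos hx]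
  | succ k ih =>
    have hderiv : ∀ y ∈ Set.Icc x (x + 1), ‖-s * cpowDiff k (s + 1) y‖ ≤
        (‖s‖ + (k + 1 : ℕ)) ^ (k + 1) * x ^ (-s.re - (k + 1 : ℕ)) := by
      intro y hy
      have hy0 : 0 < y := hx.trans_le hy.1
      have hrpow : y ^ (-(s + 1).re - k) ≤ x ^ (-s.re - (k + 1 : ℕ)) := by
        rw [show -(s + 1).re - k = -s.re - (k + 1 : ℕ) by simp; ring]
        exact Real.rpow_le_rpow_of_nonpos hx hy.1 (by push_cast; linarith [k.cast_nonneg (α := ℝ)])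
      have hnorm : ‖s + 1‖ + k ≤ ‖s‖ + (k + 1 : ℕ) := by
        have := norm_add_le s 1
        simp only [norm_one, Nat.cast_add, Nat.cast_one] at this ⊢
        linarith
      have hs1 : 0 ≤ (s + 1).re := by simp only [add_re, one_re]; linarith
      calc ‖-s * cpowDiff k (s + 1) y‖ = ‖s‖ * ‖cpowDiff k (s + 1) y‖ := by rw [norm_mul, norm_neg]
        _ ≤ (‖s‖ + (k + 1 : ℕ)) *
            ((‖s‖ + (k + 1 : ℕ)) ^ k * x ^ (-s.re - (k + 1 : ℕ))) := by
          gcongr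
          · exact le_add_of_nonneg_right (Nat.cast_nonneg _)
          · exact (ih hy0 hs1).trans (by gcongr)
        _ = _ := by ring
    have hmvt := (convex_Icc x (x + 1)).norm_image_sub_le_of_norm_hasDerivWithin_le
      (fun y hy => (hasDerivAt_cpowDiff k s (hx.trans_le hy.1)).hasDerivWithinAt) hderiv
      (Set.left_mem_Icc.mpr (by linarith)) (Set.right_mem_Icc.mpr (by linarith))
    simpa [cpowDiff_succ] using hmvt

lemma summable_cpow_neg {s : ℂ} (hs : 1 < s.re) {x : ℝ} (hx : 0 < x) :
    Summable fun n : ℕ => ((x + n : ℝ) : ℂ) ^ (-s) := by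
  refine .of_norm (((Real.summable_one_div_nat_add_rpow x s.re).mpr hs).congr fun n => ?_)
  have hpos : 0 < x + n := by positivity
  rw [norm_cpow_eq_rpow_re_of_pos hpos, neg_re, Real.rpow_neg hpos.le, add_comm,
    abs_of_pos hpos, one_div]

lemma norm_cpowDiff_add_le (m M n : ℕ) {s : ℂ} (hs : 0 ≤ s.re) :
    ‖cpowDiff (m + 2) s (M + 1 + n)‖ ≤
      (‖s‖ + (m + 2 : ℕ)) ^ (m + 2) * ((M + 1 : ℝ) ^ m)⁻¹ * (1 / ((n : ℝ) + 1) ^ 2) := by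
  have hx : (0 : ℝ) < M + 1 + n := by positivity
  have : (0 : ℝ) ≤ M := M.cast_nonneg
  have : (0 : ℝ) ≤ n := n.cast_nonneg
  have hrpow : (M + 1 + n : ℝ) ^ (-s.re - (m + 2 : ℕ)) ≤
      ((M + 1 : ℝ) ^ m)⁻¹ * (1 / ((n : ℝ) + 1) ^ 2) := by
    calc (M + 1 + n : ℝ) ^ (-s.re - (m + 2 : ℕ)) ≤ (M + 1 + n : ℝ) ^ (-((m + 2 : ℕ) : ℝ)) :=
          Real.rpow_le_rpow_of_exponent_le (by linarith) (by linarith)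
      _ = ((M + 1 + n : ℝ) ^ m)⁻¹ * ((M + 1 + n : ℝ) ^ 2)⁻¹ := by
          rw [Real.rpow_neg hx.le, Real.rpow_natCast, pow_add, mul_inv]
      _ ≤ ((M + 1 : ℝ) ^ m)⁻¹ * (1 / ((n : ℝ) + 1) ^ 2) := by
          rw [one_div]
          have hMn : (M + 1 : ℝ) ≤ M + 1 + n := by linarith
          have hnM : (n + 1 : ℝ) ≤ M + 1 + n := by linarith
          gcongr
  calc _ ≤ (‖s‖ + (m + 2 : ℕ)) ^ (m + 2) * (M + 1 + n : ℝ) ^ (-s.re - (m + 2 : ℕ)) :=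
        norm_cpowDiff_le (m + 2) hx hs
    _ ≤ _ := by rw [mul_assoc]; gcongr

end CpowDiff

section Eta

lemma summable_one_div_nat_add_one_sq : Summable fun n : ℕ => 1 / ((n : ℝ) + 1) ^ 2 := by
  simpa using (summable_nat_add_iff 1).mpr (Real.summable_one_div_nat_pow.mpr one_lt_two)

lemma tsum_one_div_nat_add_one_sq_le : ∑' n : ℕ, 1 / ((n : ℝ) + 1) ^ 2 ≤ 2 := by
  have hsum : HasSum (fun n : ℕ => 1 / ((n : ℝ) + 1) ^ 2) (Real.pi ^ 2 / 6) := by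
    simpa using (hasSum_nat_add_iff' 1).mpr hasSum_zeta_two
  rw [hsum.tsum_eq]
  nlinarith [Real.pi_lt_d2, Real.pi_pos]

lemma summable_nat_add_one_cpow_neg {s : ℂ} (hs : 1 < s.re) :
    Summable fun n : ℕ => ((n + 1 : ℝ) : ℂ) ^ (-s) := by
  simpa only [add_comm] using summable_cpow_neg hs one_pos

lemma one_sub_two_cpow_mul_riemannZeta {s : ℂ} (hs : 1 < s.re) :
    (1 - 2 * (2 : ℂ) ^ (-s)) * riemannZeta s =
      ∑' n : ℕ, (-1 : ℂ) ^ n * ((n + 1 : ℝ) : ℂ) ^ (-s) := by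
  set a : ℕ → ℂ := fun n => ((n + 1 : ℝ) : ℂ) ^ (-s) with ha
  have hsum : Summable a := summable_nat_add_one_cpow_neg hs
  have hzeta : riemannZeta s = ∑' n, a n := by
    simp only [zeta_eq_tsum_one_div_nat_add_one_cpow hs, ha, cpow_neg, one_div]
    push_cast
    rfl
  have heven : Summable fun k => a (2 * k) := hsum.comp_injective fun x y h => by simpa using h
  have hodd : Summable fun k => a (2 * k + 1) :=
    hsum.comp_injective fun x y h => by simpa using h
  have hodd_eq : ∑' k, a (2 * k + 1) = (2 : ℂ) ^ (-s) * ∑' k, a k := by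
    rw [← tsum_mul_left]
    congr 1 with k
    simp only [ha]
    rw [show (((2 * k + 1 : ℕ) : ℝ) + 1 : ℝ) = 2 * (k + 1) by push_cast; ring, ofReal_mul,
      mul_cpow_ofReal_nonneg (by norm_num) (by positivity), ofReal_ofNat]
  have hsplit := tsum_even_add_odd heven hodd
  have hsplit_alt := tsum_even_add_odd (f := fun n => (-1 : ℂ) ^ n * a n)
    (by simpa [pow_mul] using heven) (by simpa [pow_mul, pow_succ] using hodd.neg)
  simp only [pow_add, pow_mul, neg_one_sq, one_pow, one_mul, pow_one, neg_mul, tsum_neg]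
    at hsplit_alt
  rw [hzeta, ← hsplit_alt]
  linear_combination 2 * hodd_eq - hsplit

/-- The Euler transform, of order `k`, of the tail `∑_{n ≥ 0} (-1) ^ n * (M + 1 + n) ^ (-s)` of
the alternating zeta series. For `2 ≤ k` it converges on the half plane `0 < re s`. -/
noncomputable def etaTail (k M : ℕ) (s : ℂ) : ℂ :=
  ∑ j ∈ Finset.range k, 1 / 2 * (-(1 / 2)) ^ j * cpowDiff j s (M + 1) +
    (-(1 / 2)) ^ k * ∑' n : ℕ, (-1 : ℂ) ^ n * cpowDiff k s (M + 1 + n)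

lemma tsum_neg_one_pow_mul_cpow_eq_etaTail {s : ℂ} (hs : 1 < s.re) (k M : ℕ) :
    ∑' n : ℕ, (-1 : ℂ) ^ n * ((M + 1 + n : ℝ) : ℂ) ^ (-s) = etaTail k M s := by
  have hsum := summable_cpow_neg hs (x := M + 1) (by positivity)
  simpa [etaTail, cpowDiff] using tsum_neg_one_pow_mul_eq_sum_fwdDiff
    (f := fun x : ℝ => (x : ℂ) ^ (-s)) (x := (M + 1 : ℝ)) (h := 1) (by simpa using hsum) k

lemma differentiableOn_tsum_cpowDiff (m M : ℕ) :
    DifferentiableOn ℂ (fun s => ∑' n : ℕ, (-1 : ℂ) ^ n * cpowDiff (m + 2) s (M + 1 + n))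
      {s | 0 < s.re} := by
  intro s hs
  set U : Set ℂ := {s | 0 < s.re} ∩ Metric.ball 0 (‖s‖ + 1)
  have hU : IsOpen U := (isOpen_re_gt 0).inter Metric.isOpen_ball
  have hterm (n : ℕ) : Differentiable ℂ fun s => (-1 : ℂ) ^ n * cpowDiff (m + 2) s (M + 1 + n) :=
    (differentiable_cpowDiff (m + 2) (by positivity)).const_mul _
  have hbound (n : ℕ) (w : ℂ) (hw : w ∈ U) :
      ‖(-1 : ℂ) ^ n * cpowDiff (m + 2) w (M + 1 + n)‖ ≤
        (‖s‖ + 1 + (m + 2 : ℕ)) ^ (m + 2) * ((M + 1 : ℝ) ^ m)⁻¹ * (1 / ((n : ℝ) + 1) ^ 2) := by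
    have hws : ‖w‖ ≤ ‖s‖ + 1 := (mem_ball_zero_iff.mp hw.2).le
    rw [norm_mul, norm_pow, norm_neg, norm_one, one_pow, one_mul]
    exact (norm_cpowDiff_add_le m M n (le_of_lt hw.1)).trans (by gcongr)
  exact ((differentiableOn_tsum_of_summable_norm (summable_one_div_nat_add_one_sq.mul_left _)
    (fun n => (hterm n).differentiableOn) hU hbound).differentiableAt
      (hU.mem_nhds ⟨hs, by simp⟩)).differentiableWithinAt

lemma differentiableOn_etaTail (m M : ℕ) :
    DifferentiableOn ℂ (etaTail (m + 2) M) {s | 0 < s.re} := by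
  unfold etaTail
  refine .add (.fun_sum fun j _ => ?_) ((differentiableOn_tsum_cpowDiff m M).const_mul _)
  exact ((differentiable_cpowDiff j (by positivity)).const_mul _).differentiableOn

/-- The partial sum `∑_{n ≤ M} (-1) ^ (n - 1) * n ^ (-s)` of the alternating zeta series. -/
noncomputable def etaPartialSum (M : ℕ) (s : ℂ) : ℂ :=
  ∑ n ∈ Finset.range M, (-1 : ℂ) ^ n * ((n + 1 : ℝ) : ℂ) ^ (-s)

lemma differentiable_etaPartialSum (M : ℕ) : Differentiable ℂ (etaPartialSum M) := by
  unfold etaPartialSum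
  refine .fun_sum fun n _ => .const_mul ?_ _
  simpa only [cpowDiff_zero] using differentiable_cpowDiff 0 (x := n + 1) (by positivity)

lemma one_sub_two_cpow_mul_riemannZeta_eq_of_one_lt_re (k M : ℕ) {s : ℂ} (hs : 1 < s.re) :
    (1 - 2 * (2 : ℂ) ^ (-s)) * riemannZeta s =
      etaPartialSum M s + (-1) ^ M * etaTail k M s := by
  rw [one_sub_two_cpow_mul_riemannZeta hs, etaPartialSum,
    ← (summable_neg_one_pow_mul (summable_nat_add_one_cpow_neg hs)).sum_add_tsum_nat_add M,
    ← tsum_neg_one_pow_mul_cpow_eq_etaTail hs k M, ← tsum_mul_left]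
  congr 2 with n
  rw [show ((n + M : ℕ) : ℝ) + 1 = M + 1 + n by push_cast; ring, pow_add]
  ring

lemma one_sub_two_cpow_mul_riemannZeta_eq (m M : ℕ) {s : ℂ} (hs : 0 < s.re) (h1 : s ≠ 1) :
    (1 - 2 * (2 : ℂ) ^ (-s)) * riemannZeta s =
      etaPartialSum M s + (-1) ^ M * etaTail (m + 2) M s := by
  set G : ℂ → ℂ := fun s => etaPartialSum M s + (-1) ^ M * etaTail (m + 2) M s
  have hpow : Differentiable ℂ fun s : ℂ => (2 : ℂ) ^ (-s) :=
    fun s => differentiableAt_id.neg.const_cpow (Or.inl two_ne_zero)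
  have hleft : AnalyticOnNhd ℂ (fun s => (1 - 2 * (2 : ℂ) ^ (-s)) * riemannZeta₁ s)
      {s | 0 < s.re} :=
    (((hpow.const_mul 2).const_sub 1).mul differentiable_riemannZeta₁).differentiableOn
      |>.analyticOnNhd (isOpen_re_gt 0)
  have hright : AnalyticOnNhd ℂ (fun s => (s - 1) * G s) {s | 0 < s.re} :=
    ((differentiable_id.sub_const 1).differentiableOn.mul
      ((differentiable_etaPartialSum M).differentiableOn.add
        ((differentiableOn_etaTail m M).const_mul _))).analyticOnNhd (isOpen_re_gt 0)
  have hnear : ∀ᶠ z in nhds (2 : ℂ),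
      (1 - 2 * (2 : ℂ) ^ (-z)) * riemannZeta₁ z = (z - 1) * G z := by
    filter_upwards [(isOpen_lt continuous_const continuous_re).mem_nhds
      (show (1 : ℝ) < (2 : ℂ).re by simp)] with z (hz : 1 < z.re)
    have hz1 : z ≠ 1 := by rintro rfl; simp at hz
    rw [riemannZeta₁_of_ne_one hz1, mul_left_comm,
      one_sub_two_cpow_mul_riemannZeta_eq_of_one_lt_re (m + 2) M hz]
  have heq := hleft.eqOn_of_preconnected_of_eventuallyEq hright
    (convex_halfSpace_re_gt 0).isPreconnected (z₀ := 2) (by simp) hnear hs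
  simp only [riemannZeta₁_of_ne_one h1] at heq
  exact mul_left_cancel₀ (sub_ne_zero.mpr h1) (by rw [← heq]; ring)

lemma norm_etaTail_le (m M : ℕ) {s : ℂ} (hs : 0 ≤ s.re) :
    ‖etaTail (m + 2) M s‖ ≤ (m + 2 : ℕ) * (M + 1 : ℝ) ^ (-s.re) +
      2 * (‖s‖ + (m + 2 : ℕ)) ^ (m + 2) * ((M + 1 : ℝ) ^ m)⁻¹ := by
  set C : ℝ := (‖s‖ + (m + 2 : ℕ)) ^ (m + 2) * ((M + 1 : ℝ) ^ m)⁻¹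
  have hhalf : ‖(-(1 / 2) : ℂ)‖ = 1 / 2 := by simp
  have hfinite : ∀ j ∈ Finset.range (m + 2),
      ‖1 / 2 * (-(1 / 2)) ^ j * cpowDiff j s (M + 1)‖ ≤ (M + 1 : ℝ) ^ (-s.re) := by
    intro j _
    have hb := norm_cpowDiff_le_two_pow j (x := (M : ℝ) + 1) (by positivity) hs
    calc ‖1 / 2 * (-(1 / 2)) ^ j * cpowDiff j s (M + 1)‖
        = 1 / 2 * (1 / 2) ^ j * ‖cpowDiff j s (M + 1)‖ := by
          rw [norm_mul, norm_mul, norm_pow, hhalf, ← norm_neg (1 / 2 : ℂ), hhalf]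
      _ ≤ 1 / 2 * (1 / 2) ^ j * (2 ^ j * (M + 1 : ℝ) ^ (-s.re)) := by gcongr
      _ = 1 / 2 * (M + 1 : ℝ) ^ (-s.re) * (1 / 2 * 2) ^ j := by rw [mul_pow]; ring
      _ ≤ (M + 1 : ℝ) ^ (-s.re) := by
          have : 0 ≤ (M + 1 : ℝ) ^ (-s.re) := by positivity
          norm_num
          linarith
  have htail : ‖∑' n : ℕ, (-1 : ℂ) ^ n * cpowDiff (m + 2) s (M + 1 + n)‖ ≤ C * 2 := by
    refine (tsum_of_norm_bounded (summable_one_div_nat_add_one_sq.mul_left C).hasSum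
      fun n => ?_).trans ?_
    · rw [norm_mul, norm_pow, norm_neg, norm_one, one_pow, one_mul]
      exact norm_cpowDiff_add_le m M n hs
    · rw [tsum_mul_left]
      gcongr
      exact tsum_one_div_nat_add_one_sq_le
  rw [etaTail]
  refine (norm_add_le _ _).trans (add_le_add ?_ ?_)
  · simpa using (norm_sum_le _ _).trans (Finset.sum_le_sum hfinite)
  · rw [norm_mul, norm_pow, hhalf]
    calc _ ≤ 1 * (C * 2) := by
          gcongr
          exact pow_le_one₀ (by norm_num) (by norm_num)
      _ = _ := by ring

lemma norm_one_sub_two_cpow_mul_riemannZeta_sub_le (m M : ℕ) {s : ℂ} (hs : 0 < s.re)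
    (h1 : s ≠ 1) :
    ‖(1 - 2 * (2 : ℂ) ^ (-s)) * riemannZeta s - etaPartialSum M s‖ ≤
      (m + 2 : ℕ) * (M + 1 : ℝ) ^ (-s.re) +
        2 * (‖s‖ + (m + 2 : ℕ)) ^ (m + 2) * ((M + 1 : ℝ) ^ m)⁻¹ := by
  rw [one_sub_two_cpow_mul_riemannZeta_eq m M hs h1, add_sub_cancel_left, norm_mul, norm_pow,
    norm_neg, norm_one, one_pow, one_mul]
  exact norm_etaTail_le m M hs.le

end Eta

section MeanSquareExpSum

variable {ι : Type*}

lemma norm_integral_exp_mul_I_le {a : ℝ} (ha : a ≠ 0) (T : ℝ) :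
    ‖∫ τ in (0 : ℝ)..T, cexp (a * I * τ)‖ ≤ 2 * |a|⁻¹ := by
  have hexp (x : ℝ) : ‖cexp (a * I * x)‖ = 1 := by
    rw [show (a : ℂ) * I * x = ((a * x : ℝ) : ℂ) * I by push_cast; ring, norm_exp_ofReal_mul_I]
  have ha' : (a : ℂ) * I ≠ 0 := mul_ne_zero (ofReal_ne_zero.mpr ha) I_ne_zero
  rw [integral_exp_mul_complex ha', norm_div, norm_mul, norm_I, mul_one, norm_real,
    Real.norm_eq_abs, div_eq_mul_inv]
  gcongr
  exact (norm_sub_le _ _).trans (by rw [hexp, hexp]; norm_num)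

lemma norm_sq_expSum (F : Finset ι) (l : ι → ℝ) (c : ι → ℂ) (τ : ℝ) :
    ((‖∑ i ∈ F, c i * cexp (-(l i * τ) * I)‖ ^ 2 : ℝ) : ℂ) =
      ∑ i ∈ F, ∑ j ∈ F, c i * (starRingEnd ℂ) (c j) * cexp ((l j - l i : ℝ) * I * τ) := by
  push_cast
  rw [← mul_conj', map_sum, Finset.sum_mul_sum]
  refine Finset.sum_congr rfl fun i _ => Finset.sum_congr rfl fun j _ => ?_
  have hexp : cexp (((l j : ℂ) - l i) * I * τ) =
      cexp (-(l i * τ) * I) * cexp ((starRingEnd ℂ) (-(l j * τ) * I)) := by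
    rw [← Complex.exp_add]
    congr 1
    simp only [map_mul, map_neg, conj_ofReal, conj_I]
    ring
  rw [map_mul, ← Complex.exp_conj, hexp]
  ring

lemma integral_norm_sq_expSum (F : Finset ι) (l : ι → ℝ) (c : ι → ℂ) (T : ℝ) :
    ((∫ τ in (0 : ℝ)..T, ‖∑ i ∈ F, c i * cexp (-(l i * τ) * I)‖ ^ 2 : ℝ) : ℂ) =
      ∑ i ∈ F, ∑ j ∈ F, c i * (starRingEnd ℂ) (c j) *
        ∫ τ in (0 : ℝ)..T, cexp ((l j - l i : ℝ) * I * τ) := by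
  rw [← intervalIntegral.integral_ofReal]
  simp only [norm_sq_expSum]
  rw [intervalIntegral.integral_finsetSum
    fun _ _ => Continuous.intervalIntegrable (by fun_prop) _ _]
  refine Finset.sum_congr rfl fun i _ => ?_
  rw [intervalIntegral.integral_finsetSum
    fun _ _ => Continuous.intervalIntegrable (by fun_prop) _ _]
  exact Finset.sum_congr rfl fun j _ => intervalIntegral.integral_const_mul _ _

lemma abs_integral_norm_sq_expSum_sub_le (F : Finset ι) {l : ι → ℝ} (hl : Set.InjOn l F)
    (c : ι → ℂ) (T : ℝ) :
    |(∫ τ in (0 : ℝ)..T, ‖∑ i ∈ F, c i * cexp (-(l i * τ) * I)‖ ^ 2) -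
        T * ∑ i ∈ F, ‖c i‖ ^ 2| ≤
      ∑ i ∈ F, ∑ j ∈ F, ‖c i‖ * ‖c j‖ * (2 * |l i - l j|⁻¹) := by
  classical
  have hdiag : ((T * ∑ i ∈ F, ‖c i‖ ^ 2 : ℝ) : ℂ) =
      ∑ i ∈ F, ∑ j ∈ F, if i = j then c i * (starRingEnd ℂ) (c j) * T else 0 := by
    push_cast
    rw [Finset.mul_sum]
    refine Finset.sum_congr rfl fun i hi => ?_
    rw [Finset.sum_ite_eq, if_pos hi, mul_conj', mul_comm]
  rw [← Real.norm_eq_abs, ← norm_real, ofReal_sub, integral_norm_sq_expSum, hdiag,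
    ← Finset.sum_sub_distrib]
  refine (norm_sum_le _ _).trans (Finset.sum_le_sum fun i hi => ?_)
  rw [← Finset.sum_sub_distrib]
  refine (norm_sum_le _ _).trans (Finset.sum_le_sum fun j hj => ?_)
  rcases eq_or_ne i j with rfl | hij
  · simp
  · rw [if_neg hij, sub_zero, norm_mul, norm_mul, RCLike.norm_conj, abs_sub_comm (l i)]
    gcongr
    exact norm_integral_exp_mul_I_le (sub_ne_zero.mpr fun h => hij (hl hi hj h.symm)) T

lemma exists_forall_abs_integral_norm_sq_expSum_sub_le (F : Finset ι) {l : ι → ℝ}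
    (hl : Set.InjOn l F) (B : ℝ) {ε : ℝ} (hε : 0 < ε) :
    ∃ T₀ > 0, ∀ T ≥ T₀, ∀ c : ι → ℂ, (∀ i ∈ F, ‖c i‖ ≤ B) →
      |(∫ τ in (0 : ℝ)..T, ‖∑ i ∈ F, c i * cexp (-(l i * τ) * I)‖ ^ 2) -
        T * ∑ i ∈ F, ‖c i‖ ^ 2| ≤ ε * T := by
  set A := ∑ i ∈ F, ∑ j ∈ F, B * B * (2 * |l i - l j|⁻¹)
  have hA : 0 ≤ A := Finset.sum_nonneg fun i _ => Finset.sum_nonneg fun j _ =>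
    mul_nonneg (mul_self_nonneg B) (by positivity)
  refine ⟨A / ε + 1, by positivity, fun T hT c hc => ?_⟩
  calc _ ≤ ∑ i ∈ F, ∑ j ∈ F, ‖c i‖ * ‖c j‖ * (2 * |l i - l j|⁻¹) :=
        abs_integral_norm_sq_expSum_sub_le F hl c T
    _ ≤ A := by
        refine Finset.sum_le_sum fun i hi => Finset.sum_le_sum fun j hj => ?_
        have hB : 0 ≤ B := (norm_nonneg _).trans (hc i hi)
        exact mul_le_mul_of_nonneg_right
          (mul_le_mul (hc i hi) (hc j hj) (norm_nonneg _) hB) (by positivity)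
    _ = ε * (A / ε) := by field_simp
    _ ≤ ε * T := by gcongr; linarith

end MeanSquareExpSum

section OffDiagonal

lemma sum_range_inv_add_one_le {n N : ℕ} (hn : n ≤ N) :
    ∑ k ∈ Finset.range n, ((k : ℝ) + 1)⁻¹ ≤ 1 + Real.log N := by
  calc ∑ k ∈ Finset.range n, ((k : ℝ) + 1)⁻¹ ≤ ∑ k ∈ Finset.range N, ((k : ℝ) + 1)⁻¹ :=
        Finset.sum_le_sum_of_subset_of_nonneg (by simpa using hn) fun _ _ _ => by positivity
    _ = (harmonic N : ℝ) := by simp [harmonic]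
    _ ≤ 1 + Real.log N := harmonic_le_one_add_log N

lemma sum_Ico_rpow_neg_le {β : ℝ} (hβ : β ≤ 1) (N : ℕ) :
    ∑ n ∈ Finset.Ico 1 N, (n : ℝ) ^ (-β) ≤ (N : ℝ) ^ (1 - β) * (1 + Real.log N) := by
  calc ∑ n ∈ Finset.Ico 1 N, (n : ℝ) ^ (-β)
      ≤ ∑ n ∈ Finset.Ico 1 N, (N : ℝ) ^ (1 - β) * (n : ℝ)⁻¹ := by
        refine Finset.sum_le_sum fun n hn => ?_
        obtain ⟨hn1, hnN⟩ := Finset.mem_Ico.mp hn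
        have hn0 : (0 : ℝ) < n := Nat.cast_pos.mpr hn1
        rw [show -β = (1 - β) + -1 by ring, Real.rpow_add hn0, Real.rpow_neg_one]
        gcongr
    _ = (N : ℝ) ^ (1 - β) * ∑ k ∈ Finset.range (N - 1), ((k : ℝ) + 1)⁻¹ := by
        rw [← Finset.mul_sum, Finset.sum_Ico_eq_sum_range]
        simp only [Nat.cast_add, Nat.cast_one, add_comm]
    _ ≤ (N : ℝ) ^ (1 - β) * (1 + Real.log N) := by
        gcongr
        exact sum_range_inv_add_one_le (Nat.sub_le _ _)

lemma sum_Ico_inv_abs_sub_le {n N : ℕ} (hn : n < N) :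
    ∑ m ∈ Finset.Ico 1 N, |(n : ℝ) - m|⁻¹ ≤ 2 * (1 + Real.log N) := by
  have hbelow : ∑ m ∈ Finset.range n, |(n : ℝ) - m|⁻¹ ≤ 1 + Real.log N := by
    refine le_of_eq_of_le ?_ (sum_range_inv_add_one_le hn.le)
    rw [← Finset.sum_range_reflect]
    refine Finset.sum_congr rfl fun j hj => ?_
    obtain ⟨d, rfl⟩ := Nat.exists_eq_add_of_lt (Finset.mem_range.mp hj)
    rw [show j + d + 1 - 1 - j = d by lia,
      show ((j + d + 1 : ℕ) : ℝ) - d = j + 1 by push_cast; ring, abs_of_nonneg (by positivity)]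
  have habove : ∑ m ∈ Finset.Ico (n + 1) N, |(n : ℝ) - m|⁻¹ ≤ 1 + Real.log N := by
    refine le_of_eq_of_le ?_ (sum_range_inv_add_one_le (Nat.sub_le N (n + 1)))
    rw [Finset.sum_Ico_eq_sum_range]
    refine Finset.sum_congr rfl fun j _ => ?_
    rw [show (n : ℝ) - (n + 1 + j : ℕ) = -(j + 1) by push_cast; ring, abs_neg,
      abs_of_nonneg (by positivity)]
  calc ∑ m ∈ Finset.Ico 1 N, |(n : ℝ) - m|⁻¹ ≤ ∑ m ∈ Finset.range N, |(n : ℝ) - m|⁻¹ :=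
        Finset.sum_le_sum_of_subset_of_nonneg
          (fun m hm => Finset.mem_range.mpr (Finset.mem_Ico.mp hm).2) fun _ _ _ => by positivity
    _ = ∑ m ∈ Finset.range n, |(n : ℝ) - m|⁻¹ + ∑ m ∈ Finset.Ico (n + 1) N, |(n : ℝ) - m|⁻¹ := by
        rw [← Finset.sum_range_add_sum_Ico _ hn, Finset.sum_range_succ, sub_self, abs_zero,
          inv_zero, add_zero]
    _ ≤ 2 * (1 + Real.log N) := by linarith

lemma sub_div_le_log_sub_log {x y : ℝ} (hx : 0 < x) (hy : 0 < y) :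
    (y - x) / y ≤ Real.log y - Real.log x := by
  have h := Real.one_sub_inv_le_log_of_pos (div_pos hy hx)
  rwa [Real.log_div hy.ne' hx.ne', inv_div, one_sub_div hy.ne'] at h

lemma rpow_mul_rpow_mul_inv_log_sub_le {a x y : ℝ} (ha : a ≤ 1) (hx : 0 < x) (hxy : x < y) :
    x ^ (-a) * y ^ (-a) * |Real.log y - Real.log x|⁻¹ ≤
      x ^ (-a) * y ^ (-a) + y ^ (-(2 * a - 1)) * |y - x|⁻¹ := by
  have hy : 0 < y := hx.trans hxy
  have hyx : 0 < y - x := sub_pos.mpr hxy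
  have hquot : 0 < (y - x) / y := div_pos hyx hy
  have hlog := sub_div_le_log_sub_log hx hy
  rw [abs_of_pos (hquot.trans_le hlog), abs_of_pos hyx]
  calc x ^ (-a) * y ^ (-a) * (Real.log y - Real.log x)⁻¹
      ≤ x ^ (-a) * y ^ (-a) * ((y - x) / y)⁻¹ := by gcongr
    _ = x ^ (-a) * y ^ (-a) + (x ^ (-a) * x) * y ^ (-a) * (y - x)⁻¹ := by
        field_simp
        ring
    _ = x ^ (-a) * y ^ (-a) + x ^ (1 - a) * y ^ (-a) * (y - x)⁻¹ := by
        rw [← Real.rpow_add_one hx.ne', neg_add_eq_sub]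
    _ ≤ x ^ (-a) * y ^ (-a) + y ^ (1 - a) * y ^ (-a) * (y - x)⁻¹ := by
        gcongr
    _ = x ^ (-a) * y ^ (-a) + y ^ (-(2 * a - 1)) * (y - x)⁻¹ := by
        rw [← Real.rpow_add hy]
        ring_nf

lemma rpow_mul_rpow_mul_inv_abs_log_sub_le {a : ℝ} (ha : 1 / 2 < a) (ha1 : a ≤ 1) {x y : ℝ}
    (hx : 0 < x) (hy : 0 < y) :
    x ^ (-a) * y ^ (-a) * |Real.log x - Real.log y|⁻¹ ≤
      x ^ (-a) * y ^ (-a) + x ^ (-(2 * a - 1)) * |x - y|⁻¹ := by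
  rcases lt_trichotomy y x with h | rfl | h
  · rw [mul_comm (x ^ (-a))]
    exact rpow_mul_rpow_mul_inv_log_sub_le ha1 hy h
  · simp only [sub_self, abs_zero, inv_zero, mul_zero, add_zero]
    positivity
  · rw [abs_sub_comm (Real.log x), abs_sub_comm x]
    refine (rpow_mul_rpow_mul_inv_log_sub_le ha1 hx h).trans ?_
    have hmono : y ^ (-(2 * a - 1)) ≤ x ^ (-(2 * a - 1)) :=
      Real.rpow_le_rpow_of_nonpos hx h.le (by linarith)
    gcongr

lemma sum_Ico_sum_Ico_rpow_add_le {a : ℝ} (ha1 : a ≤ 1) (N : ℕ) :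
    ∑ i ∈ Finset.Ico 1 N, ∑ j ∈ Finset.Ico 1 N,
        ((i : ℝ) ^ (-a) * (j : ℝ) ^ (-a) + (i : ℝ) ^ (-(2 * a - 1)) * |(i : ℝ) - j|⁻¹) ≤
      3 * ((N : ℝ) ^ (2 - 2 * a) * (1 + Real.log N) ^ 2) := by
  set L : ℝ := 1 + Real.log N
  have : 0 ≤ L := add_nonneg zero_le_one (Real.log_natCast_nonneg N)
  set J := Finset.Ico 1 N
  have hprod : ∑ i ∈ J, (i : ℝ) ^ (-a) * ∑ j ∈ J, (j : ℝ) ^ (-a) ≤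
      (N : ℝ) ^ (2 - 2 * a) * L ^ 2 := by
    rw [← Finset.sum_mul, ← sq, show 2 - 2 * a = (1 - a) * (2 : ℕ) by push_cast; ring,
      Real.rpow_mul_natCast N.cast_nonneg, ← mul_pow]
    exact pow_le_pow_left₀ (by positivity) (sum_Ico_rpow_neg_le ha1 N) 2
  have hdist : ∑ i ∈ J, (i : ℝ) ^ (-(2 * a - 1)) * ∑ j ∈ J, |(i : ℝ) - j|⁻¹ ≤
      2 * ((N : ℝ) ^ (2 - 2 * a) * L ^ 2) := by
    calc _ ≤ ∑ i ∈ J, (i : ℝ) ^ (-(2 * a - 1)) * (2 * L) := by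
          gcongr with i hi
          exact sum_Ico_inv_abs_sub_le (Finset.mem_Ico.mp hi).2
      _ ≤ (N : ℝ) ^ (1 - (2 * a - 1)) * L * (2 * L) := by
          rw [← Finset.sum_mul]
          gcongr
          exact sum_Ico_rpow_neg_le (by linarith) N
      _ = _ := by rw [show 1 - (2 * a - 1) = 2 - 2 * a by ring]; ring
  simp only [← Finset.mul_sum, Finset.sum_add_distrib]
  linarith

lemma sum_sum_mul_inv_log_sub_le {a : ℝ} (ha : 1 / 2 < a) (ha1 : a < 1) {N : ℕ} {F : Finset ℕ}
    (hF : F ⊆ Finset.Ico 1 N) {c : ℕ → ℂ} (hc : ∀ n ∈ F, ‖c n‖ ≤ (n : ℝ) ^ (-a)) :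
    ∑ i ∈ F, ∑ j ∈ F, ‖c i‖ * ‖c j‖ * (2 * |Real.log i - Real.log j|⁻¹) ≤
      6 * (N : ℝ) ^ (2 - 2 * a) * (1 + Real.log N) ^ 2 := by
  have hpair : ∀ i ∈ F, ∀ j ∈ F, ‖c i‖ * ‖c j‖ * (2 * |Real.log i - Real.log j|⁻¹) ≤
      2 * ((i : ℝ) ^ (-a) * (j : ℝ) ^ (-a) + (i : ℝ) ^ (-(2 * a - 1)) * |(i : ℝ) - j|⁻¹) := by
    intro i hi j hj
    have hi0 : (0 : ℝ) < i := Nat.cast_pos.mpr (Finset.mem_Ico.mp (hF hi)).1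
    have hj0 : (0 : ℝ) < j := Nat.cast_pos.mpr (Finset.mem_Ico.mp (hF hj)).1
    calc _ = 2 * (‖c i‖ * ‖c j‖ * |Real.log i - Real.log j|⁻¹) := by ring
      _ ≤ 2 * ((i : ℝ) ^ (-a) * (j : ℝ) ^ (-a) * |Real.log i - Real.log j|⁻¹) := by
          gcongr
          exacts [hc i hi, hc j hj]
      _ ≤ _ := by
          gcongr
          exact rpow_mul_rpow_mul_inv_abs_log_sub_le ha ha1.le hi0 hj0
  calc _ ≤ ∑ i ∈ Finset.Ico 1 N, ∑ j ∈ Finset.Ico 1 N,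
        2 * ((i : ℝ) ^ (-a) * (j : ℝ) ^ (-a) + (i : ℝ) ^ (-(2 * a - 1)) * |(i : ℝ) - j|⁻¹) := by
        refine (Finset.sum_le_sum fun i hi => Finset.sum_le_sum (hpair i hi)).trans ?_
        simp only [← Finset.sum_product']
        exact Finset.sum_le_sum_of_subset_of_nonneg (Finset.product_subset_product hF hF)
          fun _ _ _ => by positivity
    _ ≤ 6 * (N : ℝ) ^ (2 - 2 * a) * (1 + Real.log N) ^ 2 := by
        simp only [← Finset.mul_sum]
        linarith [sum_Ico_sum_Ico_rpow_add_le ha1.le N]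

lemma exists_forall_sum_rpow_neg_le {β : ℝ} (hβ : 1 < β) {δ : ℝ} (hδ : 0 < δ) :
    ∃ N₀ : ℕ, 1 ≤ N₀ ∧ ∀ F : Finset ℕ, (∀ n ∈ F, N₀ ≤ n) → ∑ n ∈ F, (n : ℝ) ^ (-β) ≤ δ := by
  have hsum : Summable fun n : ℕ => (n : ℝ) ^ (-β) := Real.summable_nat_rpow.mpr (by linarith)
  obtain ⟨s, hs⟩ := summable_iff_vanishing_norm.mp hsum δ hδ
  refine ⟨s.sup id + 1, by lia, fun F hF => (le_abs_self _).trans (hs F ?_).le⟩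
  rw [Finset.disjoint_left]
  intro n hn hns
  exact (Nat.lt_of_succ_le (hF n hn)).not_ge (Finset.le_sup (f := id) hns)

end OffDiagonal

section MeanSquare

variable {S : Set ℂ} {g h : ℂ → ℂ} {δ δ' : ℝ}

/-- `g` is continuous on every upward vertical line starting in `S`. -/
def ContinuousOnVerticals (S : Set ℂ) (g : ℂ → ℂ) : Prop :=
  ∀ s ∈ S, Continuous fun τ : ℝ => g (s + τ * I)

lemma continuousOnVerticals_of_continuous (hg : Continuous g) : ContinuousOnVerticals S g :=
  fun _ _ => hg.comp (by fun_prop)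

namespace ContinuousOnVerticals

lemma add (hg : ContinuousOnVerticals S g) (hh : ContinuousOnVerticals S h) :
    ContinuousOnVerticals S fun s => g s + h s :=
  fun s hs => (hg s hs).add (hh s hs)

lemma sub (hg : ContinuousOnVerticals S g) (hh : ContinuousOnVerticals S h) :
    ContinuousOnVerticals S fun s => g s - h s :=
  fun s hs => (hg s hs).sub (hh s hs)

lemma mul (hg : ContinuousOnVerticals S g) (hh : ContinuousOnVerticals S h) :
    ContinuousOnVerticals S fun s => g s * h s :=
  fun s hs => (hg s hs).mul (hh s hs)

lemma intervalIntegrable_norm_sq (hg : ContinuousOnVerticals S g) {s : ℂ} (hs : s ∈ S)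
    (a b : ℝ) : IntervalIntegrable (fun τ : ℝ => ‖g (s + τ * I)‖ ^ 2) volume a b :=
  ((hg s hs).norm.pow 2).intervalIntegrable a b

end ContinuousOnVerticals

lemma integral_norm_sq_add_le {E : Type*} [NormedAddCommGroup E] {f₁ f₂ : ℝ → E} {T : ℝ}
    (hT : 0 ≤ T) (h₁ : Continuous f₁) (h₂ : Continuous f₂) :
    ∫ τ in (0 : ℝ)..T, ‖f₁ τ + f₂ τ‖ ^ 2 ≤
      2 * (∫ τ in (0 : ℝ)..T, ‖f₁ τ‖ ^ 2) + 2 * ∫ τ in (0 : ℝ)..T, ‖f₂ τ‖ ^ 2 := by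
  have hi : ∀ {f : ℝ → E}, Continuous f →
      IntervalIntegrable (fun τ => ‖f τ‖ ^ 2) volume 0 T := fun hf =>
    (hf.norm.pow 2).intervalIntegrable 0 T
  rw [← intervalIntegral.integral_const_mul, ← intervalIntegral.integral_const_mul,
    ← intervalIntegral.integral_add ((hi h₁).const_mul 2) ((hi h₂).const_mul 2)]
  refine intervalIntegral.integral_mono_on hT (hi (h₁.add h₂))
    (((hi h₁).const_mul 2).add ((hi h₂).const_mul 2)) fun τ _ => ?_
  rw [← mul_add]
  exact (pow_le_pow_left₀ (norm_nonneg _) (norm_add_le _ _) 2).trans add_sq_le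

/-- The mean square of `g` on the vertical lines starting in `S` is eventually at most `δ`,
uniformly in the starting point. Continuity is included so that the integrals are meaningful. -/
structure MeanSquareLE (S : Set ℂ) (g : ℂ → ℂ) (δ : ℝ) : Prop where
  continuousOnVerticals : ContinuousOnVerticals S g
  eventually_le : ∃ T₀ > 0, ∀ T ≥ T₀, ∀ s ∈ S, ∫ τ in (0 : ℝ)..T, ‖g (s + τ * I)‖ ^ 2 ≤ δ * T

namespace MeanSquareLE

lemma mono (hg : MeanSquareLE S g δ) (hδ : δ ≤ δ') : MeanSquareLE S g δ' := by
  obtain ⟨T₀, hT₀, hle⟩ := hg.eventually_le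
  refine ⟨hg.continuousOnVerticals, T₀, hT₀, fun T hT s hs => (hle T hT s hs).trans ?_⟩
  have : 0 < T := hT₀.trans_le hT
  gcongr

lemma add (hg : MeanSquareLE S g δ) (hh : MeanSquareLE S h δ') :
    MeanSquareLE S (fun s => g s + h s) (2 * δ + 2 * δ') := by
  have hcg := hg.continuousOnVerticals
  have hch := hh.continuousOnVerticals
  obtain ⟨T₁, hT₁, hgle⟩ := hg.eventually_le
  obtain ⟨T₂, -, hhle⟩ := hh.eventually_le
  refine ⟨hcg.add hch, max T₁ T₂, lt_max_of_lt_left hT₁, fun T hT s hs => ?_⟩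
  have hT1 : T₁ ≤ T := (le_max_left _ _).trans hT
  linarith [integral_norm_sq_add_le (hT₁.trans_le hT1).le (hcg s hs) (hch s hs), hgle T hT1 s hs,
    hhle T ((le_max_right _ _).trans hT) s hs]

lemma of_norm_le (hg : MeanSquareLE S g δ) (hh : ContinuousOnVerticals S h) {B : ℝ}
    (hB : ∀ s ∈ S, ∀ τ : ℝ, ‖h (s + τ * I)‖ ≤ B * ‖g (s + τ * I)‖) :
    MeanSquareLE S h (B ^ 2 * δ) := by
  have hcg := hg.continuousOnVerticals
  obtain ⟨T₀, hT₀, hle⟩ := hg.eventually_le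
  refine ⟨hh, T₀, hT₀, fun T hT s hs => ?_⟩
  calc ∫ τ in (0 : ℝ)..T, ‖h (s + τ * I)‖ ^ 2
      ≤ ∫ τ in (0 : ℝ)..T, B ^ 2 * ‖g (s + τ * I)‖ ^ 2 :=
        intervalIntegral.integral_mono_on (hT₀.trans_le hT).le
          (hh.intervalIntegrable_norm_sq hs 0 T)
          ((hcg.intervalIntegrable_norm_sq hs 0 T).const_mul _) fun τ _ => by
            rw [← mul_pow]
            exact pow_le_pow_left₀ (norm_nonneg _) (hB s hs τ) 2
    _ ≤ B ^ 2 * δ * T := by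
        rw [intervalIntegral.integral_const_mul, mul_assoc]
        exact mul_le_mul_of_nonneg_left (hle T hT s hs) (sq_nonneg B)

end MeanSquareLE

end MeanSquare

section DirichletPoly

/-- The Dirichlet polynomial `∑ n ∈ F, c n * n ^ (-s)`. -/
noncomputable def dirichletPoly (F : Finset ℕ) (c : ℕ → ℂ) (s : ℂ) : ℂ :=
  ∑ n ∈ F, c n * (n : ℂ) ^ (-s)

lemma norm_natCast_cpow_neg {n : ℕ} (hn : 1 ≤ n) (s : ℂ) :
    ‖(n : ℂ) ^ (-s)‖ = (n : ℝ) ^ (-s.re) := by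
  rw [norm_natCast_cpow_of_pos hn, neg_re]

lemma norm_natCast_cpow_neg_le_one {n : ℕ} (hn : 1 ≤ n) {s : ℂ} (hs : 0 ≤ s.re) :
    ‖(n : ℂ) ^ (-s)‖ ≤ 1 := by
  rw [norm_natCast_cpow_neg hn]
  exact Real.rpow_le_one_of_one_le_of_nonpos (Nat.one_le_cast.mpr hn) (neg_nonpos.mpr hs)

/-- The unit complex number `n ^ (-iτ)`. -/
noncomputable def phase (n : ℕ) (τ : ℝ) : ℂ := cexp (-(Real.log n * τ) * I)

lemma norm_phase (n : ℕ) (τ : ℝ) : ‖phase n τ‖ = 1 := by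
  rw [phase, ← ofReal_mul, ← ofReal_neg, norm_exp_ofReal_mul_I]

lemma continuous_phase (n : ℕ) : Continuous (phase n) := by
  unfold phase
  fun_prop

lemma phase_one (τ : ℝ) : phase 1 τ = 1 := by simp [phase]

lemma phase_mul {m n : ℕ} (hm : m ≠ 0) (hn : n ≠ 0) (τ : ℝ) :
    phase (m * n) τ = phase m τ * phase n τ := by
  rw [phase, phase, phase, ← Complex.exp_add, Nat.cast_mul,
    Real.log_mul (Nat.cast_ne_zero.mpr hm) (Nat.cast_ne_zero.mpr hn)]
  push_cast
  ring_nf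

lemma phase_pow (n k : ℕ) (τ : ℝ) : phase (n ^ k) τ = phase n τ ^ k := by
  rw [phase, phase, ← Complex.exp_nat_mul, Nat.cast_pow, Real.log_pow]
  push_cast
  ring_nf

lemma natCast_cpow_neg_add_mul_I {n : ℕ} (hn : 1 ≤ n) (s : ℂ) (τ : ℝ) :
    (n : ℂ) ^ (-(s + τ * I)) = (n : ℂ) ^ (-s) * phase n τ := by
  have hn0 : (n : ℂ) ≠ 0 := Nat.cast_ne_zero.mpr (Nat.one_le_iff_ne_zero.mp hn)
  rw [neg_add, cpow_add _ _ hn0, cpow_def_of_ne_zero hn0 (-(τ * I)), ← natCast_log, phase]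
  ring_nf

lemma injOn_log_natCast : Set.InjOn (fun n : ℕ => Real.log n) {n | 1 ≤ n} :=
  fun _ ha _ hb hab => Nat.cast_injective
    (Real.log_injOn_pos (Set.mem_Ioi.mpr (Nat.cast_pos.mpr ha))
      (Set.mem_Ioi.mpr (Nat.cast_pos.mpr hb)) hab)

lemma exists_forall_abs_integral_norm_sq_sum_phase_sub_le {ι : Type*} {A : Finset ι} {f : ι → ℕ}
    (hf : Set.InjOn f A) (hf1 : ∀ i ∈ A, 1 ≤ f i) (B : ℝ) {ε : ℝ} (hε : 0 < ε) :
    ∃ T₀ > 0, ∀ T ≥ T₀, ∀ c : ι → ℂ, (∀ i ∈ A, ‖c i‖ ≤ B) →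
      |(∫ τ in (0 : ℝ)..T, ‖∑ i ∈ A, c i * phase (f i) τ‖ ^ 2) - T * ∑ i ∈ A, ‖c i‖ ^ 2| ≤
        ε * T :=
  exists_forall_abs_integral_norm_sq_expSum_sub_le A (injOn_log_natCast.comp hf hf1) B hε

lemma differentiable_natCast_cpow_neg {n : ℕ} (hn : 1 ≤ n) :
    Differentiable ℂ fun s : ℂ => (n : ℂ) ^ (-s) :=
  fun _ => differentiableAt_id.neg.const_cpow
    (Or.inl (Nat.cast_ne_zero.mpr (Nat.one_le_iff_ne_zero.mp hn)))

variable {F : Finset ℕ} {c : ℕ → ℂ}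

lemma continuous_dirichletPoly (hF : ∀ n ∈ F, 1 ≤ n) : Continuous (dirichletPoly F c) :=
  continuous_finsetSum _ fun n hn =>
    continuous_const.mul (differentiable_natCast_cpow_neg (hF n hn)).continuous

lemma dirichletPoly_add_mul_I (hF : ∀ n ∈ F, 1 ≤ n) (s : ℂ) (τ : ℝ) :
    dirichletPoly F c (s + τ * I) =
      ∑ n ∈ F, c n * (n : ℂ) ^ (-s) * phase n τ :=
  Finset.sum_congr rfl fun n hn => by rw [natCast_cpow_neg_add_mul_I (hF n hn), mul_assoc]

lemma meanSquareLE_dirichletPoly {S : Set ℂ} {a : ℝ} (ha : 0 ≤ a) (hS : ∀ s ∈ S, a ≤ s.re)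
    (hF : ∀ n ∈ F, 1 ≤ n) (c : ℕ → ℂ) {ε : ℝ} (hε : 0 < ε) :
    MeanSquareLE S (dirichletPoly F c) (∑ n ∈ F, ‖c n‖ ^ 2 * (n : ℝ) ^ (-(2 * a)) + ε) := by
  obtain ⟨T₀, hT₀, hmean⟩ := exists_forall_abs_integral_norm_sq_sum_phase_sub_le
    (Set.injOn_id _) hF (∑ n ∈ F, ‖c n‖) hε
  refine ⟨continuousOnVerticals_of_continuous (continuous_dirichletPoly hF), T₀, hT₀,
    fun T hT s hs => ?_⟩
  have hcoeff : ∀ n ∈ F, ‖c n * (n : ℂ) ^ (-s)‖ ≤ ∑ n ∈ F, ‖c n‖ := fun n hn => by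
    calc ‖c n * (n : ℂ) ^ (-s)‖ = ‖c n‖ * ‖(n : ℂ) ^ (-s)‖ := norm_mul _ _
      _ ≤ ‖c n‖ := mul_le_of_le_one_right (norm_nonneg _)
          (norm_natCast_cpow_neg_le_one (hF n hn) (ha.trans (hS s hs)))
      _ ≤ ∑ n ∈ F, ‖c n‖ :=
          Finset.single_le_sum (f := fun n => ‖c n‖) (fun _ _ => norm_nonneg _) hn
  have hdiag : ∑ n ∈ F, ‖c n * (n : ℂ) ^ (-s)‖ ^ 2 ≤
      ∑ n ∈ F, ‖c n‖ ^ 2 * (n : ℝ) ^ (-(2 * a)) := by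
    refine Finset.sum_le_sum fun n hn => ?_
    have hn1 : (1 : ℝ) ≤ n := Nat.one_le_cast.mpr (hF n hn)
    rw [norm_mul, mul_pow, norm_natCast_cpow_neg (hF n hn), ← Real.rpow_mul_natCast (by positivity)]
    gcongr
    push_cast
    linarith [hS s hs]
  have hupper := (abs_le.mp (hmean T hT _ hcoeff)).2
  simp only [id] at hupper
  simp only [dirichletPoly_add_mul_I hF]
  linarith [mul_le_mul_of_nonneg_left hdiag (hT₀.trans_le hT).le]

end DirichletPoly

section MeanSquareApprox

/-- On the vertical lines starting in `S`, the function `G` is the limit in mean square of the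
partial sums of the Dirichlet series with coefficients `c`. -/
def MeanSquareApprox (S : Set ℂ) (G : ℂ → ℂ) (c : ℕ → ℂ) : Prop :=
  ∀ δ > 0, ∃ N₀ : ℕ, ∀ N ≥ N₀, MeanSquareLE S (fun s => G s - dirichletPoly (Finset.Ico 1 N) c s) δ

/-- The coefficients of the product of `1 - α * p ^ (-s)` with the Dirichlet series with
coefficients `c`. -/
def mulEulerFactor (p : ℕ) (α : ℂ) (c : ℕ → ℂ) (n : ℕ) : ℂ :=
  c n - if p ∣ n then α * c (n / p) else 0

/-- The terms of the product of `1 - α * p ^ (-s)` with the `N`-th partial sum of a Dirichlet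
series which do not belong to the `N`-th partial sum of the product series, with opposite sign. -/
noncomputable def eulerFactorRemainder (p : ℕ) (α : ℂ) (c : ℕ → ℂ) (N : ℕ) : ℂ → ℂ :=
  dirichletPoly ((Finset.Ico N (p * N)).filter (p ∣ ·)) fun n => α * c (n / p)

lemma norm_one_sub_mul_natCast_cpow_neg_le {n : ℕ} (hn : 1 ≤ n) (α : ℂ) {s : ℂ} (hs : 0 ≤ s.re) :
    ‖1 - α * (n : ℂ) ^ (-s)‖ ≤ 1 + ‖α‖ :=
  calc ‖1 - α * (n : ℂ) ^ (-s)‖ ≤ ‖(1 : ℂ)‖ + ‖α * (n : ℂ) ^ (-s)‖ := norm_sub_le _ _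
    _ ≤ 1 + ‖α‖ := by
      rw [norm_one, norm_mul]
      gcongr
      exact mul_le_of_le_one_right (norm_nonneg _) (norm_natCast_cpow_neg_le_one hn hs)

variable {p : ℕ} (hp : 1 < p) (α : ℂ) (c : ℕ → ℂ)
include hp

lemma dirichletPoly_filter_dvd (N : ℕ) (s : ℂ) :
    dirichletPoly ((Finset.Ico 1 (p * N)).filter (p ∣ ·)) (fun n => α * c (n / p)) s =
      α * (p : ℂ) ^ (-s) * dirichletPoly (Finset.Ico 1 N) c s := by
  have hp0 : 0 < p := by lia
  rw [dirichletPoly, dirichletPoly, Finset.mul_sum]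
  symm
  refine Finset.sum_bij (fun n _ => p * n) (fun n hn => ?_) (fun n _ m _ h => ?_)
    (fun n hn => ?_) fun n _ => ?_
  · simp only [Finset.mem_filter, Finset.mem_Ico] at hn ⊢
    exact ⟨⟨Nat.mul_pos hp0 hn.1, Nat.mul_lt_mul_of_pos_left hn.2 hp0⟩, dvd_mul_right _ _⟩
  · exact Nat.eq_of_mul_eq_mul_left hp0 h
  · simp only [Finset.mem_filter, Finset.mem_Ico] at hn
    obtain ⟨⟨h1, h2⟩, k, rfl⟩ := hn
    exact ⟨k, Finset.mem_Ico.mpr ⟨Nat.pos_of_mul_pos_left h1, lt_of_mul_lt_mul_left h2 hp0.le⟩, rfl⟩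
  · rw [Nat.mul_div_cancel_left _ hp0, Nat.cast_mul, natCast_mul_natCast_cpow]
    ring

lemma dirichletPoly_mulEulerFactor (N : ℕ) (s : ℂ) :
    dirichletPoly (Finset.Ico 1 N) (mulEulerFactor p α c) s =
      (1 - α * (p : ℂ) ^ (-s)) * dirichletPoly (Finset.Ico 1 N) c s +
        eulerFactorRemainder p α c N s := by
  rcases N.eq_zero_or_pos with rfl | hN
  · simp [dirichletPoly, eulerFactorRemainder]
  rw [one_sub_mul, ← dirichletPoly_filter_dvd hp]
  simp only [eulerFactorRemainder, dirichletPoly, mulEulerFactor, Finset.sum_filter, sub_mul,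
    ite_mul, zero_mul, Finset.sum_sub_distrib]
  rw [← Finset.sum_Ico_consecutive _ hN (Nat.le_mul_of_pos_left N (by lia))]
  ring

variable {S : Set ℂ} {a : ℝ} (ha : 1 / 2 < a) (hS : ∀ s ∈ S, a ≤ s.re)
  {c} {B : ℝ} (hc : ∀ n, ‖c n‖ ≤ B)

omit hp in
include ha hS hc in
lemma exists_forall_meanSquareLE_eulerFactorRemainder {δ : ℝ} (hδ : 0 < δ) :
    ∃ N₀ : ℕ, ∀ N ≥ N₀, MeanSquareLE S (eulerFactorRemainder p α c N) δ := by
  set C : ℝ := (‖α‖ * B) ^ 2 + 1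
  have hC : 0 < C := by positivity
  obtain ⟨N₀, hN₀, htail⟩ :=
    exists_forall_sum_rpow_neg_le (β := 2 * a) (by linarith) (show 0 < δ / (2 * C) by positivity)
  refine ⟨N₀, fun N hN => ?_⟩
  set F := (Finset.Ico N (p * N)).filter (p ∣ ·)
  have hF : ∀ n ∈ F, N ≤ n := fun n hn => (Finset.mem_Ico.mp (Finset.mem_filter.mp hn).1).1
  refine (meanSquareLE_dirichletPoly (by linarith) hS (fun n hn => by have := hF n hn; lia) _
    (half_pos hδ)).mono ?_
  calc ∑ n ∈ F, ‖α * c (n / p)‖ ^ 2 * (n : ℝ) ^ (-(2 * a)) + δ / 2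
      ≤ ∑ n ∈ F, C * (n : ℝ) ^ (-(2 * a)) + δ / 2 := by
        gcongr with n
        rw [norm_mul]
        have hsq : (‖α‖ * ‖c (n / p)‖) ^ 2 ≤ (‖α‖ * B) ^ 2 := by
          gcongr
          exact hc _
        linarith
    _ ≤ C * (δ / (2 * C)) + δ / 2 := by
        rw [← Finset.mul_sum]
        gcongr
        exact htail F fun n hn => hN.le.trans (hF n hn)
    _ = δ := by field_simp; ring

include ha hS hc

lemma MeanSquareApprox.mulEulerFactor {G : ℂ → ℂ} (hG : MeanSquareApprox S G c) :
    MeanSquareApprox S (fun s => (1 - α * (p : ℂ) ^ (-s)) * G s) (mulEulerFactor p α c) := by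
  intro δ hδ
  have : 0 < (1 + ‖α‖) ^ 2 := by positivity
  obtain ⟨N₀, hN₀⟩ := hG (δ / (4 * (1 + ‖α‖) ^ 2)) (by positivity)
  obtain ⟨N₁, hN₁⟩ := exists_forall_meanSquareLE_eulerFactorRemainder (p := p) α ha hS hc
    (show 0 < δ / 4 by positivity)
  refine ⟨max N₀ N₁, fun N hN => ?_⟩
  have hdiff := hN₀ N ((le_max_left _ _).trans hN)
  have hrem := hN₁ N ((le_max_right _ _).trans hN)
  have hfactor : MeanSquareLE S
      (fun s => (1 - α * (p : ℂ) ^ (-s)) * (G s - dirichletPoly (Finset.Ico 1 N) c s))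
      ((1 + ‖α‖) ^ 2 * (δ / (4 * (1 + ‖α‖) ^ 2))) := by
    refine hdiff.of_norm_le ((continuousOnVerticals_of_continuous ?_).mul
      hdiff.continuousOnVerticals) fun s hs τ => ?_
    · exact continuous_const.sub (continuous_const.mul
        (differentiable_natCast_cpow_neg hp.le).continuous)
    · rw [norm_mul]
      gcongr
      exact norm_one_sub_mul_natCast_cpow_neg_le hp.le α (by simp; linarith [hS s hs])
  have hnegrem : MeanSquareLE S (fun s => -eulerFactorRemainder p α c N s) (1 ^ 2 * (δ / 4)) :=
    hrem.of_norm_le (fun s hs => (hrem.continuousOnVerticals s hs).neg) fun s _ τ => by simp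
  convert (hfactor.add hnegrem).mono (δ' := δ) (by field_simp; norm_num) using 2 with s
  rw [dirichletPoly_mulEulerFactor hp]
  ring

lemma MeanSquareApprox.of_mulEulerFactor {κ : ℝ} (hκ : 0 < κ)
    (hfactor : ∀ s ∈ S, ∀ τ : ℝ, κ ≤ ‖1 - α * (p : ℂ) ^ (-(s + τ * I))‖) {G : ℂ → ℂ}
    (hG : ContinuousOnVerticals S G)
    (hprod : MeanSquareApprox S (fun s => (1 - α * (p : ℂ) ^ (-s)) * G s)
      (_root_.mulEulerFactor p α c)) :
    MeanSquareApprox S G c := by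
  intro δ hδ
  obtain ⟨N₀, hN₀⟩ := hprod (κ ^ 2 * δ / 4) (by positivity)
  obtain ⟨N₁, hN₁⟩ := exists_forall_meanSquareLE_eulerFactorRemainder (p := p) α ha hS hc
    (show 0 < κ ^ 2 * δ / 4 by positivity)
  refine ⟨max N₀ N₁, fun N hN => ?_⟩
  have hsum := (hN₀ N ((le_max_left _ _).trans hN)).add (hN₁ N ((le_max_right _ _).trans hN))
  refine (hsum.of_norm_le (B := κ⁻¹) (hG.sub (continuousOnVerticals_of_continuous
    (continuous_dirichletPoly fun n hn => (Finset.mem_Ico.mp hn).1))) fun s hs τ => ?_).mono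
    (by field_simp; norm_num)
  rw [dirichletPoly_mulEulerFactor hp, ← sub_sub, sub_add_cancel, ← mul_sub, norm_mul,
    le_inv_mul_iff₀ hκ]
  gcongr
  exact hfactor s hs τ

end MeanSquareApprox

section EtaMeanSquare

lemma integral_norm_sq_dirichletPoly_le {a : ℝ} (ha : 1 / 2 < a) (ha1 : a < 1) {N : ℕ}
    {F : Finset ℕ} (hF : F ⊆ Finset.Ico 1 N) {c : ℕ → ℂ} (hc : ∀ n ∈ F, ‖c n‖ ≤ 1) {s : ℂ}
    (hs : a ≤ s.re) {T : ℝ} (hT : 0 ≤ T) :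
    ∫ τ in (0 : ℝ)..T, ‖dirichletPoly F c (s + τ * I)‖ ^ 2 ≤
      T * ∑ n ∈ F, (n : ℝ) ^ (-(2 * a)) + 6 * (N : ℝ) ^ (2 - 2 * a) * (1 + Real.log N) ^ 2 := by
  have hF1 : ∀ n ∈ F, 1 ≤ n := fun n hn => (Finset.mem_Ico.mp (hF hn)).1
  have hcoeff : ∀ n ∈ F, ‖c n * (n : ℂ) ^ (-s)‖ ≤ (n : ℝ) ^ (-a) := fun n hn => by
    rw [norm_mul, norm_natCast_cpow_neg (hF1 n hn)]
    calc ‖c n‖ * (n : ℝ) ^ (-s.re) ≤ 1 * (n : ℝ) ^ (-a) := by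
          gcongr
          · exact hc n hn
          · exact Nat.one_le_cast.mpr (hF1 n hn)
      _ = (n : ℝ) ^ (-a) := one_mul _
  have hdiag : ∑ n ∈ F, ‖c n * (n : ℂ) ^ (-s)‖ ^ 2 ≤ ∑ n ∈ F, (n : ℝ) ^ (-(2 * a)) := by
    refine Finset.sum_le_sum fun n hn => ?_
    calc ‖c n * (n : ℂ) ^ (-s)‖ ^ 2 ≤ ((n : ℝ) ^ (-a)) ^ 2 := by
          gcongr
          exact hcoeff n hn
      _ = (n : ℝ) ^ (-(2 * a)) := by
          rw [← Real.rpow_mul_natCast (by positivity)]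
          push_cast
          ring_nf
  have hoff := sum_sum_mul_inv_log_sub_le ha ha1 hF hcoeff
  have hmean := (abs_le.mp (abs_integral_norm_sq_expSum_sub_le F (injOn_log_natCast.mono hF1)
    (fun n => c n * (n : ℂ) ^ (-s)) T)).2
  simp only [dirichletPoly_add_mul_I hF1, phase]
  linarith [mul_le_mul_of_nonneg_left hdiag hT]

lemma mulEulerFactor_two_two_one_add_one (n : ℕ) :
    mulEulerFactor 2 2 1 (n + 1) = (-1) ^ n := by
  rcases Nat.even_or_odd n with h | h
  · rw [mulEulerFactor, if_neg (by grind), h.neg_one_pow, Pi.one_apply, sub_zero]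
  · rw [mulEulerFactor, if_pos (by grind), h.neg_one_pow, Pi.one_apply, Pi.one_apply]
    norm_num

lemma norm_mulEulerFactor_two_two_one_le {n : ℕ} (hn : 1 ≤ n) :
    ‖mulEulerFactor 2 2 1 n‖ ≤ 1 := by
  obtain ⟨k, rfl⟩ := Nat.exists_eq_add_of_le' hn
  simp [mulEulerFactor_two_two_one_add_one]

lemma etaPartialSum_eq_dirichletPoly (M : ℕ) (s : ℂ) :
    etaPartialSum M s = dirichletPoly (Finset.Ico 1 (M + 1)) (mulEulerFactor 2 2 1) s := by
  rw [dirichletPoly, Finset.sum_Ico_eq_sum_range, etaPartialSum]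
  refine Finset.sum_congr rfl fun n _ => ?_
  rw [add_comm 1 n, mulEulerFactor_two_two_one_add_one]
  push_cast
  rfl

lemma eventually_rpow_mul_one_add_log_sq_le {κ : ℝ} (hκ : 0 < κ) {η : ℝ} (hη : 0 < η) :
    ∀ᶠ x : ℝ in atTop, x ^ (1 - 2 * κ) * (1 + Real.log x) ^ 2 ≤ η * x ^ (1 - κ) := by
  have hlog : (fun x : ℝ => 1 + Real.log x) =o[atTop] fun x : ℝ => x ^ (κ / 2) :=
    (Real.isLittleO_const_log_atTop.trans (isLittleO_log_rpow_atTop (by positivity))).add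
      (isLittleO_log_rpow_atTop (by positivity))
  filter_upwards [(hlog.pow two_pos).bound hη, eventually_gt_atTop 0] with x hx hx0
  rw [Real.norm_of_nonneg (by positivity), Real.norm_of_nonneg (by positivity),
    ← Real.rpow_mul_natCast hx0.le, Nat.cast_two, div_mul_cancel₀ κ two_ne_zero] at hx
  calc x ^ (1 - 2 * κ) * (1 + Real.log x) ^ 2 ≤ x ^ (1 - 2 * κ) * (η * x ^ κ) := by gcongr
    _ = η * x ^ (1 - κ) := by
      rw [mul_left_comm, ← Real.rpow_add hx0]
      ring_nf

lemma tendsto_mul_rpow_neg_add_mul_pow_mul_rpow_neg {σ : ℝ} (hσ : 0 < σ) (A : ℝ) (k : ℕ) :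
    Tendsto (fun T : ℝ => A * T ^ (-σ) + 2 * (2 * T) ^ k * T ^ (-(k + 1 : ℝ))) atTop (nhds 0) := by
  have h₁ := (tendsto_rpow_neg_atTop hσ).const_mul A
  have h₂ := tendsto_inv_atTop_zero.const_mul (2 * 2 ^ k : ℝ)
  rw [mul_zero] at h₁ h₂
  rw [← add_zero (0 : ℝ)]
  refine h₁.add (h₂.congr' ?_)
  filter_upwards [eventually_gt_atTop (0 : ℝ)] with T hT
  rw [mul_pow, Real.rpow_neg hT.le, Real.rpow_add_one hT.ne', Real.rpow_natCast]
  field_simp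

lemma rpow_one_sub_le_three_mul {κ x T : ℝ} (hκ : 0 ≤ κ) (hκ1 : κ ≤ 1) (hx : 0 ≤ x) (hT : 1 ≤ T)
    (hxT : x ≤ 3 * T ^ (1 + κ)) : x ^ (1 - κ) ≤ 3 * T := by
  have hT0 : 0 < T := zero_lt_one.trans_le hT
  calc x ^ (1 - κ) ≤ (3 * T ^ (1 + κ)) ^ (1 - κ) := by gcongr
    _ = 3 ^ (1 - κ) * T ^ (1 - κ ^ 2) := by
        rw [Real.mul_rpow (by norm_num) (by positivity), ← Real.rpow_mul hT0.le]
        ring_nf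
    _ ≤ 3 ^ (1 : ℝ) * T ^ (1 : ℝ) := by
        gcongr
        · norm_num
        · linarith
        · exact sub_le_self _ (sq_nonneg κ)
    _ = 3 * T := by rw [Real.rpow_one, Real.rpow_one]

/- The length of the partial sum is `T ^ (1 + κ)`: a bit more than `T`, so that the error term of
the Euler transform of a fixed high order `m` is small, but little enough for the off-diagonal
terms of the mean square to be `o(T)`. -/
lemma exists_order_eventually_exists_length {κ : ℝ} (hκ : 0 < κ) (hκ1 : κ ≤ 1) {σ : ℝ}
    (hσ : 0 < σ) {δ : ℝ} (hδ : 0 < δ) :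
    ∃ m : ℕ, ∀ᶠ T : ℝ in atTop, ∃ M : ℕ,
      (m + 2 : ℕ) * (M + 1 : ℝ) ^ (-σ) + 2 * (2 * T) ^ (m + 2) * ((M + 1 : ℝ) ^ m)⁻¹ ≤ δ ∧
      6 * ((M + 1 : ℕ) : ℝ) ^ (1 - 2 * κ) * (1 + Real.log (M + 1 : ℕ)) ^ 2 ≤ δ * T ∧
      T ≤ M + 1 := by
  obtain ⟨m, hm⟩ := exists_nat_ge (3 / κ)
  rw [div_le_iff₀ hκ] at hm
  refine ⟨m, ?_⟩
  obtain ⟨x₀, hx₀⟩ := eventually_atTop.mp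
    (eventually_rpow_mul_one_add_log_sq_le hκ (show 0 < δ / 18 by positivity))
  filter_upwards [(tendsto_mul_rpow_neg_add_mul_pow_mul_rpow_neg hσ (m + 2 : ℕ)
    (m + 2)).eventually_le_const hδ, eventually_ge_atTop x₀, eventually_ge_atTop 1]
    with T herr hTx hT1
  have hT0 : 0 < T := zero_lt_one.trans_le hT1
  set M := ⌈T ^ (1 + κ)⌉₊
  have hTκ : 1 ≤ T ^ (1 + κ) := Real.one_le_rpow hT1 (by linarith)
  have hceil : T ^ (1 + κ) ≤ M := Nat.le_ceil _
  have hlower : T ^ (1 + κ) ≤ M + 1 := by linarith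
  have hupper : (M : ℝ) + 1 ≤ 3 * T ^ (1 + κ) := by
    linarith [Nat.ceil_lt_add_one (zero_le_one.trans hTκ)]
  have hTM : T ≤ M + 1 := (Real.self_le_rpow_of_one_le hT1 (by linarith)).trans hlower
  refine ⟨M, le_trans ?_ herr, ?_, hTM⟩
  · have hpow : T ^ ((m + 2 : ℕ) + 1 : ℝ) ≤ (M + 1 : ℝ) ^ m :=
      calc T ^ ((m + 2 : ℕ) + 1 : ℝ) ≤ T ^ ((1 + κ) * m) :=
            Real.rpow_le_rpow_of_exponent_le hT1 (by push_cast; linarith)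
        _ = (T ^ (1 + κ)) ^ m := Real.rpow_mul_natCast hT0.le _ _
        _ ≤ (M + 1 : ℝ) ^ m := by gcongr
    rw [Real.rpow_neg hT0.le (_ + 1)]
    gcongr _ * ?_ + _ * ?_
    · exact Real.rpow_le_rpow_of_nonpos hT0 hTM (by linarith)
    · gcongr
  · have hpow := rpow_one_sub_le_three_mul hκ.le hκ1 (by positivity) hT1 hupper
    push_cast
    linarith [hx₀ (M + 1) (hTx.trans hTM), mul_le_mul_of_nonneg_left hpow hδ.le]

/-- The part of the vertical strip `a ≤ Re s ≤ b` within distance `R` of the origin. -/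
def truncatedStrip (a b R : ℝ) : Set ℂ := {s | a ≤ s.re ∧ s.re ≤ b ∧ ‖s‖ ≤ R}

lemma ne_one_of_re_lt_one {s : ℂ} (hs : s.re < 1) : s ≠ 1 := by
  rintro rfl
  exact lt_irrefl _ hs

variable {a b R : ℝ}

lemma continuousOnVerticals_riemannZeta (hb : b < 1) :
    ContinuousOnVerticals (truncatedStrip a b R) riemannZeta := fun s hs =>
  continuous_iff_continuousAt.mpr fun τ =>
    (differentiableAt_riemannZeta (ne_one_of_re_lt_one (by simpa using hs.2.1.trans_lt hb))
      ).continuousAt.comp (f := fun τ : ℝ => s + τ * I) (by fun_prop)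

/-- The Dirichlet eta function `(1 - 2 ^ (1 - s)) ζ(s)`, in the shape of an Euler factor times the
zeta function. -/
noncomputable def dirichletEta (s : ℂ) : ℂ := (1 - 2 * ((2 : ℕ) : ℂ) ^ (-s)) * riemannZeta s

lemma continuousOnVerticals_dirichletEta (hb : b < 1) :
    ContinuousOnVerticals (truncatedStrip a b R) dirichletEta :=
  (continuousOnVerticals_of_continuous (continuous_const.sub (continuous_const.mul
    (differentiable_natCast_cpow_neg one_le_two).continuous))).mul
      (continuousOnVerticals_riemannZeta hb)

lemma eventually_exists_forall_norm_dirichletEta_sub_le (ha : 1 / 2 < a) (ha1 : a < 1)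
    (hb : b < 1) {δ : ℝ} (hδ : 0 < δ) :
    ∀ᶠ T : ℝ in atTop, ∃ M : ℕ, T ≤ M + 1 ∧
      6 * ((M + 1 : ℕ) : ℝ) ^ (2 - 2 * a) * (1 + Real.log (M + 1 : ℕ)) ^ 2 ≤ δ * T ∧
      ∀ s ∈ truncatedStrip a b R, ∀ τ ∈ Set.Icc 0 T,
        ‖dirichletEta (s + τ * I) -
          dirichletPoly (Finset.Ico 1 (M + 1)) (mulEulerFactor 2 2 1) (s + τ * I)‖ ≤ δ := by
  obtain ⟨m, hm⟩ := exists_order_eventually_exists_length (κ := a - 1 / 2) (σ := a) (by linarith)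
    (by linarith) (by linarith) hδ
  filter_upwards [hm, eventually_ge_atTop (R + (m + 2 : ℕ))] with T ⟨M, herr, hlen, hTM⟩ hT
  refine ⟨M, hTM, by convert hlen using 4; ring, fun s hs τ hτ => ?_⟩
  have hre : (s + τ * I).re = s.re := by simp
  have hnorm : ‖s + τ * I‖ + (m + 2 : ℕ) ≤ 2 * T := by
    have : ‖s + τ * I‖ ≤ R + T := (norm_add_le _ _).trans
      (add_le_add hs.2.2 (by simpa [abs_of_nonneg hτ.1] using hτ.2))
    linarith
  have heta := norm_one_sub_two_cpow_mul_riemannZeta_sub_le m M (s := s + τ * I)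
    (by linarith [hs.1]) (ne_one_of_re_lt_one (by linarith [hs.2.1]))
  rw [← etaPartialSum_eq_dirichletPoly]
  refine (heta.trans ?_).trans herr
  rw [hre]
  gcongr
  · linarith [(Nat.cast_nonneg M : (0 : ℝ) ≤ M)]
  · exact hs.1

lemma eventually_integral_norm_sq_dirichletEta_sub_le (ha : 1 / 2 < a) (hb : b < 1) (hab : a ≤ b)
    {δ : ℝ} (hδ : 0 < δ) {N : ℕ} (hN : 1 ≤ N)
    (htail : ∀ F : Finset ℕ, (∀ n ∈ F, N ≤ n) → ∑ n ∈ F, (n : ℝ) ^ (-(2 * a)) ≤ δ / 8) :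
    ∀ᶠ T : ℝ in atTop, ∀ s ∈ truncatedStrip a b R, ∫ τ in (0 : ℝ)..T, ‖dirichletEta (s + τ * I) -
      dirichletPoly (Finset.Ico 1 N) (mulEulerFactor 2 2 1) (s + τ * I)‖ ^ 2 ≤ δ * T := by
  set c := mulEulerFactor 2 2 1
  set η := min (δ / 8) 1
  have hη : 0 < η := by positivity
  filter_upwards [eventually_exists_forall_norm_dirichletEta_sub_le (R := R) ha (hab.trans_lt hb)
    hb hη, eventually_ge_atTop (N : ℝ)] with T ⟨M, hTM, hlen, hclose⟩ hNT s hs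
  have hT0 : 0 ≤ T := N.cast_nonneg.trans hNT
  have hNM : N ≤ M + 1 := by exact_mod_cast hNT.trans hTM
  set Q : ℂ → ℂ := fun s => dirichletEta s - dirichletPoly (Finset.Ico 1 (M + 1)) c s
  set P : ℂ → ℂ := dirichletPoly (Finset.Ico N (M + 1)) c
  have hP : ContinuousOnVerticals (truncatedStrip a b R) P := continuousOnVerticals_of_continuous
    (continuous_dirichletPoly fun n hn => hN.trans (Finset.mem_Ico.mp hn).1)
  have hQ : ContinuousOnVerticals (truncatedStrip a b R) Q :=
    (continuousOnVerticals_dirichletEta hb).sub (continuousOnVerticals_of_continuous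
      (continuous_dirichletPoly fun n hn => (Finset.mem_Ico.mp hn).1))
  have hPmean : ∫ τ in (0 : ℝ)..T, ‖P (s + τ * I)‖ ^ 2 ≤ T * (δ / 8) + η * T := by
    refine (integral_norm_sq_dirichletPoly_le ha (hab.trans_lt hb) (Finset.Ico_subset_Ico_left hN)
      (fun n hn => norm_mulEulerFactor_two_two_one_le (hN.trans (Finset.mem_Ico.mp hn).1))
      hs.1 hT0).trans (add_le_add ?_ hlen)
    gcongr
    exact htail _ fun n hn => (Finset.mem_Ico.mp hn).1
  have hQmean : ∫ τ in (0 : ℝ)..T, ‖Q (s + τ * I)‖ ^ 2 ≤ η * T := by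
    refine (intervalIntegral.integral_mono_on hT0 (hQ.intervalIntegrable_norm_sq hs 0 T)
      (intervalIntegrable_const (c := η)) fun τ hτ => ?_).trans_eq (by simp [mul_comm])
    calc ‖Q (s + τ * I)‖ ^ 2 ≤ η ^ 2 := by gcongr; exact hclose s hs τ hτ
      _ ≤ η := pow_le_of_le_one hη.le (min_le_right _ _) two_ne_zero
  have hsplit : ∀ z, dirichletEta z - dirichletPoly (Finset.Ico 1 N) c z = Q z + P z := fun z => by
    simp only [Q, P, dirichletPoly]
    rw [← Finset.sum_Ico_consecutive _ hN hNM]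
    ring
  have hηT : η * T ≤ δ / 8 * T := by gcongr; exact min_le_left _ _
  simp only [hsplit]
  linarith [integral_norm_sq_add_le hT0 (hQ s hs) (hP s hs), mul_nonneg hδ.le hT0]

lemma meanSquareApprox_dirichletEta (ha : 1 / 2 < a) (hb : b < 1) (hab : a ≤ b) :
    MeanSquareApprox (truncatedStrip a b R) dirichletEta (mulEulerFactor 2 2 1) := by
  intro δ hδ
  obtain ⟨N₀, hN₀, htail⟩ := exists_forall_sum_rpow_neg_le (β := 2 * a) (by linarith)
    (show 0 < δ / 8 by positivity)
  refine ⟨N₀, fun N hN => ⟨(continuousOnVerticals_dirichletEta hb).sub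
    (continuousOnVerticals_of_continuous
      (continuous_dirichletPoly fun n hn => (Finset.mem_Ico.mp hn).1)), ?_⟩⟩
  obtain ⟨T₀, hT₀⟩ := eventually_atTop.mp (eventually_integral_norm_sq_dirichletEta_sub_le (R := R)
    ha hb hab hδ (hN₀.trans hN) fun F hF => htail F fun n hn => hN.trans (hF n hn))
  exact ⟨max T₀ 1, by positivity, fun T hT => hT₀ T ((le_max_left _ _).trans hT)⟩

lemma two_rpow_sub_one_le_norm_one_sub_two_mul_two_cpow {s : ℂ} (hs : s.re ≤ b) :
    (2 : ℝ) ^ (1 - b) - 1 ≤ ‖1 - 2 * ((2 : ℕ) : ℂ) ^ (-s)‖ := by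
  calc (2 : ℝ) ^ (1 - b) - 1 ≤ 2 ^ (1 - s.re) - 1 := by gcongr; norm_num
    _ = ‖2 * ((2 : ℕ) : ℂ) ^ (-s)‖ - ‖(1 : ℂ)‖ := by
      rw [norm_mul, norm_natCast_cpow_neg one_le_two, norm_one, sub_eq_add_neg 1,
        Real.rpow_add two_pos, Real.rpow_one, norm_ofNat, Nat.cast_two]
    _ ≤ ‖1 - 2 * ((2 : ℕ) : ℂ) ^ (-s)‖ := by
      rw [norm_sub_rev]
      exact norm_sub_norm_le _ _

lemma meanSquareApprox_riemannZeta (ha : 1 / 2 < a) (hb : b < 1) (hab : a ≤ b) :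
    MeanSquareApprox (truncatedStrip a b R) riemannZeta 1 :=
  MeanSquareApprox.of_mulEulerFactor one_lt_two 2 ha (fun _ hs => hs.1) (B := 1) (by simp)
    (sub_pos.mpr (Real.one_lt_rpow one_lt_two (sub_pos.mpr hb)))
    (fun _ hs _ => two_rpow_sub_one_le_norm_one_sub_two_mul_two_cpow (by simpa using hs.2.1))
    (continuousOnVerticals_riemannZeta hb) (meanSquareApprox_dirichletEta ha hb hab)

end EtaMeanSquare

section Sieve

/-- Every prime factor of `n` is at least `P`. -/
def IsRough (P n : ℕ) : Prop := ∀ p, p.Prime → p ∣ n → P ≤ p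

open Classical in
/-- The indicator function of the integers without prime factors below `P`. -/
noncomputable def roughIndicator (P n : ℕ) : ℂ := if IsRough P n then 1 else 0

/-- The finite product `∏ p < P, (1 - p ^ (-s))` over primes, inverse to a partial Euler product. -/
noncomputable def invEulerProduct (P : ℕ) (s : ℂ) : ℂ := ∏ p ∈ P.primesBelow, (1 - (p : ℂ) ^ (-s))

lemma norm_roughIndicator_le_one (P n : ℕ) : ‖roughIndicator P n‖ ≤ 1 := by
  unfold roughIndicator
  split_ifs <;> simp

lemma isRough_succ_iff_of_prime {k : ℕ} (hk : k.Prime) (n : ℕ) :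
    IsRough (k + 1) n ↔ IsRough k n ∧ ¬ k ∣ n := by
  refine ⟨fun h => ⟨fun p hp hd => (Nat.le_succ k).trans (h p hp hd), fun hd => ?_⟩,
    fun h p hp hd => (h.1 p hp hd).lt_of_ne ?_⟩
  · exact absurd (h k hk hd) (by lia)
  · rintro rfl
    exact h.2 hd

lemma isRough_succ_iff_of_not_prime {k : ℕ} (hk : ¬ k.Prime) (n : ℕ) :
    IsRough (k + 1) n ↔ IsRough k n :=
  forall₃_congr fun _ hp _ =>
    ⟨fun h => (Nat.le_succ k).trans h, fun h => h.lt_of_ne fun he => hk (he ▸ hp)⟩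

lemma isRough_mul_self_iff {k : ℕ} (hk : k.Prime) (n : ℕ) : IsRough k (k * n) ↔ IsRough k n :=
  ⟨fun h p hp hd => h p hp (hd.mul_left k), fun h p hp hd => ((Nat.Prime.dvd_mul hp).mp hd).elim
    (fun hd => ((Nat.prime_dvd_prime_iff_eq hp hk).mp hd).ge) (h p hp)⟩

lemma mulEulerFactor_roughIndicator {k : ℕ} (hk : k.Prime) :
    mulEulerFactor k 1 (roughIndicator k) = roughIndicator (k + 1) := by
  ext n
  have hsucc := isRough_succ_iff_of_prime hk n
  by_cases hd : k ∣ n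
  · obtain ⟨m, rfl⟩ := hd
    have hmul := isRough_mul_self_iff hk m
    by_cases hm : IsRough k m <;>
      simp [mulEulerFactor, roughIndicator, hsucc, hmul, hm, Nat.mul_div_cancel_left m hk.pos]
  · by_cases hn : IsRough k n <;> simp [mulEulerFactor, roughIndicator, hsucc, hn, hd]

lemma roughIndicator_succ_of_not_prime {k : ℕ} (hk : ¬ k.Prime) :
    roughIndicator (k + 1) = roughIndicator k := by
  ext n
  have hsucc := isRough_succ_iff_of_not_prime hk n
  by_cases hn : IsRough k n <;> simp [roughIndicator, hsucc, hn]

lemma invEulerProduct_succ_of_prime {k : ℕ} (hk : k.Prime) (s : ℂ) :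
    invEulerProduct (k + 1) s = (1 - (k : ℂ) ^ (-s)) * invEulerProduct k s := by
  rw [invEulerProduct, Nat.primesBelow_succ, if_pos hk,
    Finset.prod_insert (Nat.notMem_primesBelow k), invEulerProduct]

lemma invEulerProduct_succ_of_not_prime {k : ℕ} (hk : ¬ k.Prime) (s : ℂ) :
    invEulerProduct (k + 1) s = invEulerProduct k s := by
  rw [invEulerProduct, Nat.primesBelow_succ, if_neg hk, invEulerProduct]

lemma differentiable_invEulerProduct (P : ℕ) : Differentiable ℂ (invEulerProduct P) :=
  Differentiable.fun_finsetProd fun _ hp => (differentiable_const 1).sub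
    (differentiable_natCast_cpow_neg (Nat.prime_of_mem_primesBelow hp).one_le)

lemma meanSquareApprox_invEulerProduct_mul_riemannZeta {a b R : ℝ} (ha : 1 / 2 < a) (hb : b < 1)
    (hab : a ≤ b) (P : ℕ) :
    MeanSquareApprox (truncatedStrip a b R) (fun s => invEulerProduct P s * riemannZeta s)
      (roughIndicator P) := by
  induction P with
  | zero =>
    have hone : roughIndicator 0 = 1 := by ext n; simp [roughIndicator, IsRough]
    simpa [hone, invEulerProduct] using meanSquareApprox_riemannZeta ha hb hab
  | succ k ih =>
    by_cases hk : k.Prime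
    · have hstep := MeanSquareApprox.mulEulerFactor hk.one_lt 1 ha (fun _ hs => hs.1)
        (norm_roughIndicator_le_one k) ih
      simpa only [mulEulerFactor_roughIndicator hk, one_mul, ← mul_assoc,
        ← invEulerProduct_succ_of_prime hk] using hstep
    · simpa only [roughIndicator_succ_of_not_prime hk, invEulerProduct_succ_of_not_prime hk]
        using ih

end Sieve

section SmoothExpSum

/-- `Q` is a finite exponential sum `∑ q i * (f i) ^ (-iτ)` whose frequencies `f i` are distinct
integers with all prime factors below `P`, and `w = ∑ ‖q i‖ ^ 2` is its mean square. -/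
def IsSmoothExpSum (P : ℕ) (Q : ℝ → ℂ) (w : ℝ) : Prop :=
  ∃ (ι : Type) (A : Finset ι) (f : ι → ℕ) (q : ι → ℂ), Set.InjOn f A ∧
    (∀ i ∈ A, f i ∈ P.smoothNumbers) ∧
    (∀ τ, Q τ = ∑ i ∈ A, q i * phase (f i) τ) ∧ ∑ i ∈ A, ‖q i‖ ^ 2 = w

lemma one_le_of_mem_smoothNumbers {P n : ℕ} (h : n ∈ P.smoothNumbers) : 1 ≤ n :=
  Nat.one_le_iff_ne_zero.mpr (Nat.ne_zero_of_mem_smoothNumbers h)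

lemma coprime_of_mem_smoothNumbers_of_isRough {P m n : ℕ} (hm : m ∈ P.smoothNumbers)
    (hn : IsRough P n) : m.Coprime n :=
  Nat.coprime_of_dvd fun p hp hpm hpn =>
    (Nat.mem_smoothNumbers'.mp hm p hp hpm).not_ge (hn p hp hpn)

lemma injOn_mul_smoothNumbers_isRough (P : ℕ) :
    Set.InjOn (fun x : ℕ × ℕ => x.1 * x.2) (P.smoothNumbers ×ˢ {n | IsRough P n}) := by
  rintro ⟨m, n⟩ ⟨hm, hn⟩ ⟨m', n'⟩ ⟨hm', hn'⟩ (heq : m * n = m' * n')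
  have hdvd : m ∣ m' := (coprime_of_mem_smoothNumbers_of_isRough hm hn').dvd_of_dvd_mul_right
    (heq ▸ dvd_mul_right m n)
  have hdvd' : m' ∣ m := (coprime_of_mem_smoothNumbers_of_isRough hm' hn).dvd_of_dvd_mul_right
    (heq ▸ dvd_mul_right m' n')
  obtain rfl := Nat.dvd_antisymm hdvd hdvd'
  rw [Nat.eq_of_mul_eq_mul_left (one_le_of_mem_smoothNumbers hm) heq]

lemma isRough_pow_self {k : ℕ} (hk : k.Prime) (a : ℕ) : IsRough k (k ^ a) := fun _ hp hd =>
  ((Nat.prime_dvd_prime_iff_eq hp hk).mp (hp.dvd_of_dvd_pow hd)).ge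

lemma sum_norm_sq_mul_choose_div {ω : ℂ} (hω : ‖ω‖ = 1) (L : ℕ) :
    ∑ j ∈ Finset.range (L + 1), ‖ω ^ (L - j) * L.choose j / 2 ^ L‖ ^ 2 =
      L.centralBinom / 4 ^ L := by
  have hterm : ∀ j, ‖ω ^ (L - j) * L.choose j / 2 ^ L‖ ^ 2 =
      ((L.choose j ^ 2 : ℕ) : ℝ) / 4 ^ L := by
    intro j
    rw [norm_div, norm_mul, norm_pow, hω, one_pow, one_mul, norm_natCast, norm_pow, norm_ofNat,
      div_pow, ← pow_mul, mul_comm L 2, pow_mul]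
    norm_num
  simp only [hterm]
  rw [← Finset.sum_div, ← Nat.cast_sum, Nat.sum_range_choose_sq, Nat.centralBinom]

namespace IsSmoothExpSum

variable {P : ℕ} {Q : ℝ → ℂ} {w : ℝ}

lemma one (P : ℕ) : IsSmoothExpSum P (fun _ => 1) 1 :=
  ⟨Unit, {()}, fun _ => 1, fun _ => 1, by simp, by simp [Nat.mem_smoothNumbers],
    by simp [phase_one], by simp⟩

lemma continuous (h : IsSmoothExpSum P Q w) : Continuous Q := by
  obtain ⟨ι, A, f, q, -, -, hQ, -⟩ := h
  rw [funext hQ]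
  exact continuous_finsetSum _ fun i _ => continuous_const.mul (continuous_phase _)

lemma succ (h : IsSmoothExpSum P Q w) : IsSmoothExpSum (P + 1) Q w := by
  obtain ⟨ι, A, f, q, hf, hs, hQ, hw⟩ := h
  exact ⟨ι, A, f, q, hf, fun i hi => Nat.smoothNumbers_mono P.le_succ (hs i hi), hQ, hw⟩

lemma eventually_abs_integral_norm_sq_sub_le (h : IsSmoothExpSum P Q w) {ε : ℝ} (hε : 0 < ε) :
    ∀ᶠ T in atTop, |(∫ τ in (0 : ℝ)..T, ‖Q τ‖ ^ 2) - T * w| ≤ ε * T := by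
  obtain ⟨ι, A, f, q, hf, hs, hQ, rfl⟩ := h
  obtain ⟨T₀, -, hT₀⟩ := exists_forall_abs_integral_norm_sq_sum_phase_sub_le hf
    (fun i hi => one_le_of_mem_smoothNumbers (hs i hi)) (∑ i ∈ A, ‖q i‖) hε
  filter_upwards [eventually_ge_atTop T₀] with T hT
  simp only [hQ]
  exact hT₀ T hT q fun i hi =>
    Finset.single_le_sum (f := fun i => ‖q i‖) (fun i _ => norm_nonneg _) hi

lemma mul_phase_add_div_two_pow {k : ℕ} (hk : k.Prime) (h : IsSmoothExpSum k Q w) {ω : ℂ}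
    (hω : ‖ω‖ = 1) (L : ℕ) :
    IsSmoothExpSum (k + 1) (fun τ => Q τ * ((phase k τ + ω) / 2) ^ L)
      (w * (L.centralBinom / 4 ^ L)) := by
  obtain ⟨ι, A, f, q, hf, hs, hQ, rfl⟩ := h
  refine ⟨ι × ℕ, A ×ˢ Finset.range (L + 1), fun x => f x.1 * k ^ x.2,
    fun x => q x.1 * (ω ^ (L - x.2) * L.choose x.2 / 2 ^ L), ?_, ?_, fun τ => ?_, ?_⟩
  · rintro ⟨i, a⟩ hi ⟨j, b⟩ hj heq
    rw [Finset.coe_product] at hi hj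
    have hpair := injOn_mul_smoothNumbers_isRough k (x₁ := (f i, k ^ a)) (x₂ := (f j, k ^ b))
      ⟨hs i hi.1, isRough_pow_self hk a⟩ ⟨hs j hj.1, isRough_pow_self hk b⟩ heq
    rw [Prod.mk_inj] at hpair ⊢
    exact ⟨hf hi.1 hj.1 hpair.1, Nat.pow_right_injective hk.two_le hpair.2⟩
  · rintro ⟨i, a⟩ hi
    change f i * k ^ a ∈ (k + 1).smoothNumbers
    rw [mul_comm]
    exact Nat.pow_mul_mem_smoothNumbers hk.ne_zero a (hs i (Finset.mem_product.mp hi).1)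
  · beta_reduce
    rw [hQ, div_pow, add_pow, Finset.sum_div, Finset.sum_mul_sum, Finset.sum_product]
    refine Finset.sum_congr rfl fun i hi => Finset.sum_congr rfl fun j _ => ?_
    rw [phase_mul (Nat.ne_zero_of_mem_smoothNumbers (hs i hi)) (pow_ne_zero _ hk.ne_zero),
      phase_pow]
    ring
  · rw [Finset.sum_product, Finset.sum_mul, ← sum_norm_sq_mul_choose_div hω]
    refine Finset.sum_congr rfl fun i _ => ?_
    rw [Finset.mul_sum]
    exact Finset.sum_congr rfl fun j _ => by rw [norm_mul, mul_pow]

end IsSmoothExpSum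

end SmoothExpSum

section PhaseWeight

/-- A weight concentrated, for large exponents `L p`, on those `τ` for which `p ^ (-iτ)` is close
to `ω p` for all primes `p < P`. -/
noncomputable def phaseWeight (P : ℕ) (ω : ℕ → ℂ) (L : ℕ → ℕ) (τ : ℝ) : ℂ :=
  ∏ p ∈ P.primesBelow, ((phase p τ + ω p) / 2) ^ L p

/-- The mean square of `phaseWeight P ω L`. -/
noncomputable def phaseWeightMean (P : ℕ) (L : ℕ → ℕ) : ℝ :=
  ∏ p ∈ P.primesBelow, ((L p).centralBinom / 4 ^ L p : ℝ)

lemma phaseWeightMean_pos (P : ℕ) (L : ℕ → ℕ) : 0 < phaseWeightMean P L :=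
  Finset.prod_pos fun p _ => div_pos (Nat.cast_pos.mpr (Nat.centralBinom_pos _)) (by positivity)

lemma prod_apply_update_eq_mul {ι β M : Type*} [DecidableEq ι] [CommMonoid M] {s : Finset ι}
    (g : ι → β → M) (L : ι → β) {i : ι} (hi : i ∈ s) {b : β} {x : M}
    (hx : g i b = g i (L i) * x) :
    ∏ j ∈ s, g j (Function.update L i b j) = (∏ j ∈ s, g j (L j)) * x := by
  rw [← Finset.mul_prod_erase _ _ hi, ← Finset.mul_prod_erase s (fun j => g j (L j)) hi,
    Function.update_self, hx, mul_right_comm]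
  congr 2
  exact Finset.prod_congr rfl fun j hj => by
    rw [Function.update_of_ne (Finset.ne_of_mem_erase hj)]

variable {P : ℕ} {ω : ℕ → ℂ} {p : ℕ}

lemma phaseWeight_update_succ (hp : p ∈ P.primesBelow) (ω : ℕ → ℂ) (L : ℕ → ℕ) (τ : ℝ) :
    phaseWeight P ω (Function.update L p (L p + 1)) τ =
      phaseWeight P ω L τ * ((phase p τ + ω p) / 2) :=
  prod_apply_update_eq_mul (fun q n => ((phase q τ + ω q) / 2) ^ n) L hp (pow_succ _ _)

lemma phaseWeightMean_update_succ (hp : p ∈ P.primesBelow) (L : ℕ → ℕ) :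
    phaseWeightMean P (Function.update L p (L p + 1)) =
      phaseWeightMean P L * (1 - 1 / (2 * (L p + 1))) := by
  refine prod_apply_update_eq_mul (fun _ n => (n.centralBinom / 4 ^ n : ℝ)) L hp ?_
  have hrec : ((L p : ℝ) + 1) * (L p + 1).centralBinom =
      2 * (2 * L p + 1) * (L p).centralBinom := by
    exact_mod_cast Nat.succ_mul_centralBinom_succ (L p)
  rw [pow_succ]
  field_simp
  linear_combination 2 * hrec

variable (hω : ∀ p, ‖ω p‖ = 1)
include hω

lemma norm_phaseWeight_le_one (P : ℕ) (L : ℕ → ℕ) (τ : ℝ) : ‖phaseWeight P ω L τ‖ ≤ 1 := by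
  rw [phaseWeight, norm_prod]
  refine Finset.prod_le_one (fun _ _ => norm_nonneg _) fun p _ => ?_
  rw [norm_pow]
  refine pow_le_one₀ (norm_nonneg _) ?_
  rw [norm_div, norm_ofNat, div_le_one two_pos]
  linarith [norm_add_le (phase p τ) (ω p), norm_phase p τ, hω p]

lemma isSmoothExpSum_phaseWeight (P : ℕ) (L : ℕ → ℕ) :
    IsSmoothExpSum P (phaseWeight P ω L) (phaseWeightMean P L) := by
  induction P with
  | zero =>
    have hone : phaseWeight 0 ω L = fun _ => 1 := by
      ext τ
      simp [phaseWeight]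
    simpa [hone, phaseWeightMean] using IsSmoothExpSum.one 0
  | succ k ih =>
    unfold phaseWeight phaseWeightMean at ih ⊢
    by_cases hk : k.Prime
    · simp only [Nat.primesBelow_succ, if_pos hk,
        Finset.prod_insert (Nat.notMem_primesBelow k)]
      simpa only [mul_comm] using ih.mul_phase_add_div_two_pow hk (hω k) (L k)
    · simpa only [Nat.primesBelow_succ, if_neg hk] using ih.succ

/- By the parallelogram law the deviation `‖p ^ (-iτ) - ω p‖ ^ 2` is the relative loss in weight
when the exponent of `p` is increased by one. -/
lemma norm_phaseWeight_sq_mul_norm_phase_sub_sq (hp : p ∈ P.primesBelow) (L : ℕ → ℕ) (τ : ℝ) :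
    ‖phaseWeight P ω L τ‖ ^ 2 * ‖phase p τ - ω p‖ ^ 2 =
      4 * ‖phaseWeight P ω L τ‖ ^ 2 -
        4 * ‖phaseWeight P ω (Function.update L p (L p + 1)) τ‖ ^ 2 := by
  have hpar := parallelogram_law_with_norm ℝ (phase p τ) (ω p)
  rw [norm_phase, hω] at hpar
  rw [phaseWeight_update_succ hp, norm_mul, norm_div, norm_ofNat]
  linear_combination ‖phaseWeight P ω L τ‖ ^ 2 * hpar

lemma eventually_integral_phaseWeight_mul_norm_phase_sub_le (hp : p ∈ P.primesBelow) (L : ℕ → ℕ)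
    {ε : ℝ} (hε : 0 < ε) :
    ∀ᶠ T in atTop, ∫ τ in (0 : ℝ)..T, ‖phaseWeight P ω L τ‖ ^ 2 * ‖phase p τ - ω p‖ ^ 2 ≤
      (phaseWeightMean P L * (2 / (L p + 1)) + ε) * T := by
  have h₁ := isSmoothExpSum_phaseWeight hω P L
  have h₂ := isSmoothExpSum_phaseWeight hω P (Function.update L p (L p + 1))
  filter_upwards [h₁.eventually_abs_integral_norm_sq_sub_le (show 0 < ε / 8 by positivity),
    h₂.eventually_abs_integral_norm_sq_sub_le (show 0 < ε / 8 by positivity)] with T hT₁ hT₂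
  have hi : ∀ {Q w}, IsSmoothExpSum P Q w →
      IntervalIntegrable (fun τ => 4 * ‖Q τ‖ ^ 2) volume 0 T := fun h =>
    (continuous_const.mul (h.continuous.norm.pow 2)).intervalIntegrable 0 T
  simp only [norm_phaseWeight_sq_mul_norm_phase_sub_sq hω hp]
  rw [intervalIntegral.integral_sub (hi h₁) (hi h₂), intervalIntegral.integral_const_mul,
    intervalIntegral.integral_const_mul]
  have hmean : phaseWeightMean P L * (2 / (L p + 1)) =
      4 * (phaseWeightMean P L - phaseWeightMean P (Function.update L p (L p + 1))) := by
    rw [phaseWeightMean_update_succ hp]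
    field_simp
    ring
  rw [hmean]
  linarith [(abs_le.mp hT₁).2, (abs_le.mp hT₂).1]

lemma exists_smoothExpSum_concentrated_near_phases (P : ℕ) {η : ℝ} (hη : 0 < η) :
    ∃ (Q : ℝ → ℂ) (w : ℝ), 0 < w ∧ IsSmoothExpSum P Q w ∧ (∀ τ, ‖Q τ‖ ≤ 1) ∧
      ∀ᶠ T in atTop, ∫ τ in (0 : ℝ)..T,
        ‖Q τ‖ ^ 2 * ∑ p ∈ P.primesBelow, ‖phase p τ - ω p‖ ^ 2 ≤ η * w * T := by
  set k := P.primesBelow.card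
  obtain ⟨L, hL⟩ := exists_nat_ge (4 * k / η)
  rw [div_le_iff₀ hη] at hL
  set w := phaseWeightMean P fun _ => L
  have hw : 0 < w := phaseWeightMean_pos P _
  have hQ := isSmoothExpSum_phaseWeight hω P fun _ => L
  refine ⟨phaseWeight P ω fun _ => L, w, hw, hQ, norm_phaseWeight_le_one hω P _, ?_⟩
  filter_upwards [(Filter.eventually_all_finset P.primesBelow).mpr fun p hp =>
    eventually_integral_phaseWeight_mul_norm_phase_sub_le hω hp (fun _ => L)
      (show 0 < η * w / (2 * (k + 1)) by positivity), eventually_ge_atTop 0] with T hT hT0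
  have hi : ∀ p ∈ P.primesBelow, IntervalIntegrable
      (fun τ => ‖phaseWeight P ω (fun _ => L) τ‖ ^ 2 * ‖phase p τ - ω p‖ ^ 2) volume 0 T :=
    fun p _ => ((hQ.continuous.norm.pow 2).mul
      (((continuous_phase p).sub continuous_const).norm.pow 2)).intervalIntegrable 0 T
  simp only [Finset.mul_sum]
  rw [intervalIntegral.integral_finsetSum hi]
  calc _ ≤ ∑ p ∈ P.primesBelow, (w * (2 / (L + 1)) + η * w / (2 * (k + 1))) * T :=
        Finset.sum_le_sum hT
    _ = w * T * (2 * k / (L + 1) + η / 2 * (k / (k + 1))) := by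
        rw [Finset.sum_const, nsmul_eq_mul]
        field_simp
        rfl
    _ ≤ w * T * (η / 2 + η / 2 * 1) := by
        have hdiv : 2 * k / (L + 1) ≤ η / 2 := by
          rw [div_le_iff₀ (by positivity)]
          linarith
        have hdiv' : (k : ℝ) / (k + 1) ≤ 1 := by
          rw [div_le_one (by positivity)]
          linarith
        gcongr
    _ = η * w * T := by ring

end PhaseWeight

section EulerError

lemma sum_phase_mul_dirichletPoly {P : ℕ} {ι : Type*} {A : Finset ι} {f : ι → ℕ}
    {q : ι → ℂ} {F : Finset ℕ} (hf : ∀ i ∈ A, f i ∈ P.smoothNumbers) (hF : ∀ n ∈ F, 1 ≤ n)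
    (s : ℂ) (τ : ℝ) :
    (∑ i ∈ A, q i * phase (f i) τ) * dirichletPoly F 1 (s + τ * I) =
      ∑ x ∈ A ×ˢ F, q x.1 * (x.2 : ℂ) ^ (-s) * phase (f x.1 * x.2) τ := by
  rw [dirichletPoly_add_mul_I hF, Finset.sum_mul_sum, Finset.sum_product]
  refine Finset.sum_congr rfl fun i hi => Finset.sum_congr rfl fun n hn => ?_
  rw [phase_mul (Nat.ne_zero_of_mem_smoothNumbers (hf i hi)) (Nat.one_le_iff_ne_zero.mp (hF n hn)),
    Pi.one_apply]
  ring

variable {P : ℕ} {Q : ℝ → ℂ} {w : ℝ}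

lemma IsSmoothExpSum.eventually_integral_norm_sq_mul_dirichletPoly_le (h : IsSmoothExpSum P Q w)
    {F : Finset ℕ} (hF : ∀ n ∈ F, IsRough P n) (hF1 : ∀ n ∈ F, 1 ≤ n) {a : ℝ} (ha : 0 ≤ a)
    {ε : ℝ} (hε : 0 < ε) :
    ∀ᶠ T in atTop, ∀ s : ℂ, a ≤ s.re →
      ∫ τ in (0 : ℝ)..T, ‖Q τ * dirichletPoly F 1 (s + τ * I)‖ ^ 2 ≤
        (w * ∑ n ∈ F, (n : ℝ) ^ (-(2 * a)) + ε) * T := by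
  obtain ⟨ι, A, f, q, hf, hs, hQ, rfl⟩ := h
  have hinj : Set.InjOn (fun x : ι × ℕ => f x.1 * x.2) (A ×ˢ F : Finset (ι × ℕ)) := by
    rintro ⟨i, m⟩ hi ⟨j, n⟩ hj heq
    rw [Finset.coe_product] at hi hj
    have hpair := injOn_mul_smoothNumbers_isRough P (x₁ := (f i, m)) (x₂ := (f j, n))
      ⟨hs i hi.1, hF m hi.2⟩ ⟨hs j hj.1, hF n hj.2⟩ heq
    rw [Prod.mk_inj] at hpair ⊢
    exact ⟨hf hi.1 hj.1 hpair.1, hpair.2⟩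
  obtain ⟨T₀, -, hmean⟩ := exists_forall_abs_integral_norm_sq_sum_phase_sub_le hinj
    (fun x hx => Nat.mul_pos (one_le_of_mem_smoothNumbers (hs _ (Finset.mem_product.mp hx).1))
      (hF1 _ (Finset.mem_product.mp hx).2)) (∑ i ∈ A, ‖q i‖) hε
  filter_upwards [eventually_ge_atTop T₀, eventually_ge_atTop 0] with T hT hT0 s hsa
  have hcoeff : ∀ x ∈ A ×ˢ F, ‖q x.1 * (x.2 : ℂ) ^ (-s)‖ ≤ ∑ i ∈ A, ‖q i‖ := fun x hx => by
    obtain ⟨hi, hn⟩ := Finset.mem_product.mp hx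
    rw [norm_mul]
    exact (mul_le_of_le_one_right (norm_nonneg _)
      (norm_natCast_cpow_neg_le_one (hF1 _ hn) (ha.trans hsa))).trans
        (Finset.single_le_sum (f := fun i => ‖q i‖) (fun _ _ => norm_nonneg _) hi)
  have hdiag : ∑ x ∈ A ×ˢ F, ‖q x.1 * (x.2 : ℂ) ^ (-s)‖ ^ 2 ≤
      (∑ i ∈ A, ‖q i‖ ^ 2) * ∑ n ∈ F, (n : ℝ) ^ (-(2 * a)) := by
    rw [Finset.sum_mul_sum, ← Finset.sum_product']
    refine Finset.sum_le_sum fun x hx => ?_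
    have hn := hF1 _ (Finset.mem_product.mp hx).2
    rw [norm_mul, mul_pow, norm_natCast_cpow_neg hn, ← Real.rpow_mul_natCast (by positivity)]
    gcongr
    · exact Nat.one_le_cast.mpr hn
    · push_cast
      linarith
  simp only [hQ, sum_phase_mul_dirichletPoly hs hF1]
  linarith [(abs_le.mp (hmean T hT _ hcoeff)).2, mul_le_mul_of_nonneg_left hdiag hT0]

/-- The deviation of `ζ` from the Euler product over the primes below `P`, normalised by that
product. -/
noncomputable def eulerError (P : ℕ) (s : ℂ) : ℂ := invEulerProduct P s * riemannZeta s - 1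

open Classical in
lemma dirichletPoly_roughIndicator (P : ℕ) {N : ℕ} (hN : 2 ≤ N) (s : ℂ) :
    dirichletPoly (Finset.Ico 1 N) (roughIndicator P) s =
      1 + dirichletPoly {n ∈ Finset.Ico 2 N | IsRough P n} 1 s := by
  have hone : IsRough P 1 := fun p hp hd => absurd (Nat.dvd_one.mp hd) hp.ne_one
  rw [dirichletPoly, Finset.sum_eq_sum_Ico_succ_bot (by lia), dirichletPoly, Finset.sum_filter]
  congr 1
  · simp [roughIndicator, hone]
  · refine Finset.sum_congr rfl fun n _ => ?_
    by_cases hn : IsRough P n <;> simp [roughIndicator, hn]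

lemma IsRough.le_of_two_le {n : ℕ} (hn : IsRough P n) (h : 2 ≤ n) : P ≤ n :=
  (hn _ (Nat.minFac_prime (by lia)) n.minFac_dvd).trans (Nat.minFac_le (by lia))

variable {a b R t ε : ℝ}

lemma eventually_integral_norm_sq_mul_eulerError_le (ha : 1 / 2 < a) (hb : b < 1) (hab : a ≤ b)
    (hQ : IsSmoothExpSum P Q w) (hQ1 : ∀ τ, ‖Q τ‖ ≤ 1)
    (ht : ∀ F : Finset ℕ, (∀ n ∈ F, P ≤ n) → ∑ n ∈ F, (n : ℝ) ^ (-(2 * a)) ≤ t) (hw : 0 ≤ w)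
    (hε : 0 < ε) :
    ∀ᶠ T in atTop, ∀ s ∈ truncatedStrip a b R,
      ∫ τ in (0 : ℝ)..T, ‖Q τ * eulerError P (s + τ * I)‖ ^ 2 ≤ (2 * w * t + ε) * T := by
  classical
  obtain ⟨N₀, hN₀⟩ := meanSquareApprox_invEulerProduct_mul_riemannZeta (R := R) ha hb hab P (ε / 4)
    (by positivity)
  set N := max N₀ 2
  have hN : 2 ≤ N := le_max_right _ _
  obtain ⟨hcont, T₁, -, hT₁⟩ := hN₀ N (le_max_left _ _)
  set F : Finset ℕ := {n ∈ Finset.Ico 2 N | IsRough P n} with hFdef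
  have hF : ∀ n ∈ F, 2 ≤ n ∧ IsRough P n := fun n hn => by
    rw [hFdef, Finset.mem_filter, Finset.mem_Ico] at hn
    exact ⟨hn.1.1, hn.2⟩
  have hF1 : ∀ n ∈ F, 1 ≤ n := fun n hn => one_le_two.trans (hF n hn).1
  have htail : w * ∑ n ∈ F, (n : ℝ) ^ (-(2 * a)) ≤ w * t :=
    mul_le_mul_of_nonneg_left (ht F fun n hn => (hF n hn).2.le_of_two_le (hF n hn).1) hw
  filter_upwards [eventually_ge_atTop T₁, eventually_ge_atTop 0,
    hQ.eventually_integral_norm_sq_mul_dirichletPoly_le (fun n hn => (hF n hn).2) hF1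
      (show 0 ≤ a by linarith) (show 0 < ε / 4 by positivity)] with T hT hT0 hpoly s hs
  set X : ℝ → ℂ := fun τ => invEulerProduct P (s + τ * I) * riemannZeta (s + τ * I) -
    dirichletPoly (Finset.Ico 1 N) (roughIndicator P) (s + τ * I)
  set D : ℝ → ℂ := fun τ => dirichletPoly F 1 (s + τ * I)
  have hX : Continuous X := hcont s hs
  have hD : Continuous D := (continuous_dirichletPoly hF1).comp (by fun_prop)
  have hsplit : ∀ τ : ℝ, Q τ * eulerError P (s + τ * I) = Q τ * X τ + Q τ * D τ := fun τ => by
    simp only [X, D, dirichletPoly_roughIndicator P hN, eulerError]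
    ring
  have hQX : Continuous fun τ => Q τ * X τ := hQ.continuous.mul hX
  have hXle : ∫ τ in (0 : ℝ)..T, ‖Q τ * X τ‖ ^ 2 ≤ ∫ τ in (0 : ℝ)..T, ‖X τ‖ ^ 2 := by
    refine intervalIntegral.integral_mono_on hT0
      ((hQX.norm.pow 2).intervalIntegrable 0 T)
      ((hX.norm.pow 2).intervalIntegrable 0 T) fun τ _ => ?_
    rw [norm_mul]
    exact pow_le_pow_left₀ (by positivity) (mul_le_of_le_one_left (norm_nonneg _) (hQ1 τ)) 2
  have hQD : Continuous fun τ => Q τ * D τ := hQ.continuous.mul hD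
  have hsum := integral_norm_sq_add_le hT0 hQX hQD
  simp only [hsplit]
  linarith [hpoly s hs.1, hT₁ T hT s hs, mul_le_mul_of_nonneg_right htail hT0]

lemma continuousOn_eulerError (P : ℕ) : ContinuousOn (eulerError P) {1}ᶜ := fun _ hs =>
  (((differentiable_invEulerProduct P _).continuousAt.mul
    (differentiableAt_riemannZeta hs).continuousAt).sub continuousAt_const).continuousWithinAt

/-- The `L²` norm squared of the vertical translate by `τ` of `eulerError P` over `K`. -/
noncomputable def eulerErrorArea (P : ℕ) (K : Set ℂ) (τ : ℝ) : ℝ :=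
  ∫ s in K, ‖eulerError P (s + τ * I)‖ ^ 2

variable {K : Set ℂ} {T : ℝ}

lemma integrable_norm_sq_mul_eulerError (hK : IsCompact K) (hKre : ∀ s ∈ K, s.re < 1) (P : ℕ)
    (hQ : Continuous Q) (T : ℝ) :
    Integrable (fun x : ℝ × ℂ => ‖Q x.1 * eulerError P (x.2 + x.1 * I)‖ ^ 2)
      ((volume.restrict (Set.Ioc 0 T)).prod (volume.restrict K)) := by
  rw [Measure.prod_restrict]
  refine IntegrableOn.mono_set (t := Set.Icc 0 T ×ˢ K) ?_
    (Set.prod_mono Set.Ioc_subset_Icc_self le_rfl)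
  refine ContinuousOn.integrableOn_compact (isCompact_Icc.prod hK) ?_
  refine (((hQ.comp continuous_fst).continuousOn.mul
    ((continuousOn_eulerError P).comp (by fun_prop) fun x hx => ?_)).norm).pow 2
  exact ne_one_of_re_lt_one (by simpa using hKre _ hx.2)

lemma norm_sq_mul_eulerErrorArea (Q : ℝ → ℂ) (P : ℕ) (K : Set ℂ) (τ : ℝ) :
    ‖Q τ‖ ^ 2 * eulerErrorArea P K τ = ∫ s in K, ‖Q τ * eulerError P (s + τ * I)‖ ^ 2 := by
  simp only [eulerErrorArea, norm_mul, mul_pow, integral_const_mul]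

lemma intervalIntegrable_norm_sq_mul_eulerErrorArea (hK : IsCompact K)
    (hKre : ∀ s ∈ K, s.re < 1) (P : ℕ) (hQ : Continuous Q) (hT : 0 ≤ T) :
    IntervalIntegrable (fun τ => ‖Q τ‖ ^ 2 * eulerErrorArea P K τ) volume 0 T := by
  simp only [norm_sq_mul_eulerErrorArea]
  rw [intervalIntegrable_iff_integrableOn_Ioc_of_le hT]
  exact (integrable_norm_sq_mul_eulerError hK hKre P hQ T).integral_prod_left

lemma integral_norm_sq_mul_eulerErrorArea (hK : IsCompact K) (hKre : ∀ s ∈ K, s.re < 1) (P : ℕ)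
    (hQ : Continuous Q) (hT : 0 ≤ T) :
    ∫ τ in (0 : ℝ)..T, ‖Q τ‖ ^ 2 * eulerErrorArea P K τ =
      ∫ s in K, ∫ τ in (0 : ℝ)..T, ‖Q τ * eulerError P (s + τ * I)‖ ^ 2 := by
  simp only [norm_sq_mul_eulerErrorArea, intervalIntegral.integral_of_le hT]
  exact integral_integral_swap (integrable_norm_sq_mul_eulerError hK hKre P hQ T)

lemma eventually_integral_norm_sq_mul_eulerErrorArea_le (ha : 1 / 2 < a) (hb : b < 1)
    (hab : a ≤ b) (hQ : IsSmoothExpSum P Q w) (hQ1 : ∀ τ, ‖Q τ‖ ≤ 1)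
    (ht : ∀ F : Finset ℕ, (∀ n ∈ F, P ≤ n) → ∑ n ∈ F, (n : ℝ) ^ (-(2 * a)) ≤ t) (hw : 0 ≤ w)
    (hε : 0 < ε) (hK : IsCompact K) (hKS : K ⊆ truncatedStrip a b R) :
    ∀ᶠ T in atTop, ∫ τ in (0 : ℝ)..T, ‖Q τ‖ ^ 2 * eulerErrorArea P K τ ≤
      volume.real K * ((2 * w * t + ε) * T) := by
  filter_upwards [eventually_integral_norm_sq_mul_eulerError_le ha hb hab hQ hQ1 ht hw hε,
    eventually_ge_atTop 0] with T hT hT0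
  rw [integral_norm_sq_mul_eulerErrorArea hK (fun s hs => (hKS hs).2.1.trans_lt hb) P
    hQ.continuous hT0, mul_comm]
  refine (Real.le_norm_self _).trans
    (norm_setIntegral_le_of_norm_le_const hK.measure_lt_top fun s hs => ?_)
  rw [Real.norm_of_nonneg (intervalIntegral.integral_nonneg hT0 fun _ _ => by positivity)]
  exact hT s (hKS hs)

end EulerError

section AreaMeanValue

variable {E : Type*} [NormedAddCommGroup E] [NormedSpace ℂ E] {z : ℂ} {r : ℝ}

lemma setIntegral_ball_eq_setIntegral_circleMap (f : ℂ → E) (z : ℂ) (r : ℝ) :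
    ∫ w in Metric.ball z r, f w =
      ∫ x in Set.Ioo 0 r ×ˢ Set.Ioo (-Real.pi) Real.pi, x.1 • f (circleMap z x.1 x.2) := by
  have hpolar : ∀ x : ℝ × ℝ, z + Complex.polarCoord.symm x = circleMap z x.1 x.2 := fun x => by
    rw [Complex.polarCoord_symm_apply, circleMap, Complex.exp_mul_I]
    simp
  have hset : Set.Ioo 0 r ×ˢ Set.Ioo (-Real.pi) Real.pi =
      Set.Ioi 0 ×ˢ Set.Ioo (-Real.pi) Real.pi ∩ {x : ℝ × ℝ | x.1 < r} := by
    ext x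
    simp only [Set.mem_prod, Set.mem_Ioo, Set.mem_inter_iff, Set.mem_Ioi, Set.mem_ofPred_eq]
    tauto
  rw [← integral_indicator measurableSet_ball, ← integral_add_left_eq_self _ z,
    ← Complex.integral_comp_polarCoord_symm, polarCoord_target, hset,
    ← MeasureTheory.setIntegral_indicator (measurableSet_lt measurable_fst measurable_const)]
  refine setIntegral_congr_fun (measurableSet_Ioi.prod measurableSet_Ioo) fun x hx => ?_
  have hmem : circleMap z x.1 x.2 ∈ Metric.ball z r ↔ x.1 < r := by
    rw [Metric.mem_ball, dist_eq_norm, circleMap_sub_center, norm_circleMap_zero, abs_of_pos hx.1]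
  by_cases hxr : x.1 < r
  · rw [hpolar, Set.indicator_of_mem (hmem.mpr hxr),
      Set.indicator_of_mem (s := {x : ℝ × ℝ | x.1 < r}) hxr]
  · rw [hpolar, Set.indicator_of_notMem (mt hmem.mp hxr),
      Set.indicator_of_notMem (s := {x : ℝ × ℝ | x.1 < r}) hxr, smul_zero]

variable [CompleteSpace E] {f : ℂ → E}

lemma setIntegral_circleMap_eq (hf : DiffContOnCl ℂ f (Metric.ball z |r|)) :
    ∫ θ in Set.Ioo (-Real.pi) Real.pi, f (circleMap z r θ) = (2 * Real.pi) • f z := by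
  have hper : Function.Periodic (fun θ => f (circleMap z r θ)) (2 * Real.pi) := fun θ => by
    simp only [periodic_circleMap z r θ]
  rw [← hf.circleAverage, Real.circleAverage_def, smul_inv_smul₀ (by positivity),
    ← zero_add (2 * Real.pi), ← hper.intervalIntegral_add_eq (-Real.pi) 0,
    intervalIntegral.integral_of_le (by linarith [Real.pi_pos]), integral_Ioc_eq_integral_Ioo]
  ring_nf

lemma setIntegral_ball_eq_smul (hr : 0 < r) (hf : DiffContOnCl ℂ f (Metric.ball z r)) :
    ∫ w in Metric.ball z r, f w = (Real.pi * r ^ 2) • f z := by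
  have hcont : ContinuousOn (fun x : ℝ × ℝ => x.1 • f (circleMap z x.1 x.2))
      (Set.Icc 0 r ×ˢ Set.Icc (-Real.pi) Real.pi) := by
    refine continuousOn_fst.smul (hf.continuousOn.comp (by fun_prop) fun x hx => ?_)
    rw [closure_ball _ hr.ne', Metric.mem_closedBall, dist_eq_norm, circleMap_sub_center,
      norm_circleMap_zero, abs_of_nonneg hx.1.1]
    exact hx.1.2
  have hint : IntegrableOn (fun x : ℝ × ℝ => x.1 • f (circleMap z x.1 x.2))
      (Set.Ioo 0 r ×ˢ Set.Ioo (-Real.pi) Real.pi) (volume.prod volume) :=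
    (hcont.integrableOn_compact (isCompact_Icc.prod isCompact_Icc)).mono_set
      (Set.prod_mono Set.Ioo_subset_Icc_self Set.Ioo_subset_Icc_self)
  rw [setIntegral_ball_eq_setIntegral_circleMap, Measure.volume_eq_prod, setIntegral_prod _ hint]
  have hcircle : ∀ ρ ∈ Set.Ioo 0 r, ∫ θ in Set.Ioo (-Real.pi) Real.pi, ρ • f (circleMap z ρ θ) =
      ρ • (2 * Real.pi) • f z := fun ρ hρ => by
    rw [integral_smul, setIntegral_circleMap_eq (hf.mono (Metric.ball_subset_ball _))]
    rw [abs_of_pos hρ.1]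
    exact hρ.2.le
  rw [setIntegral_congr_fun measurableSet_Ioo hcircle, integral_smul_const,
    ← integral_Ioc_eq_integral_Ioo, ← intervalIntegral.integral_of_le hr.le, integral_id, smul_smul]
  congr 1
  ring

lemma mul_norm_sq_le_setIntegral_norm_sq {g : ℂ → ℂ} {K : Set ℂ} (hr : 0 < r)
    (hg : DiffContOnCl ℂ g (Metric.ball z r)) (hK : Metric.ball z r ⊆ K)
    (hint : IntegrableOn (fun w => ‖g w‖ ^ 2) K) :
    Real.pi * r ^ 2 * ‖g z‖ ^ 2 ≤ ∫ w in K, ‖g w‖ ^ 2 :=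
  calc Real.pi * r ^ 2 * ‖g z‖ ^ 2 = ‖(Real.pi * r ^ 2) • (g z • g z)‖ := by
        rw [norm_smul, norm_smul, Real.norm_of_nonneg (by positivity), sq ‖g z‖]
    _ = ‖∫ w in Metric.ball z r, g w • g w‖ := by rw [setIntegral_ball_eq_smul hr (hg.smul hg)]
    _ ≤ ∫ w in Metric.ball z r, ‖g w • g w‖ := norm_integral_le_integral_norm _
    _ = ∫ w in Metric.ball z r, ‖g w‖ ^ 2 := by simp only [norm_smul, sq]
    _ ≤ ∫ w in K, ‖g w‖ ^ 2 :=
        setIntegral_mono_set hint (ae_of_all _ fun _ => by positivity) hK.eventuallyLE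

end AreaMeanValue

section Topology

lemma isConnected_compl_closedBall {E : Type*} [NormedAddCommGroup E] [NormedSpace ℝ E]
    (h : 1 < Module.rank ℝ E) (c : E) {r : ℝ} (hr : 0 ≤ r) :
    IsConnected (Metric.closedBall c r)ᶜ := by
  have himage : (Metric.closedBall c r)ᶜ =
      (fun x : ℝ × E => c + x.1 • x.2) '' (Set.Ioi r ×ˢ Metric.sphere 0 1) := by
    ext z
    simp only [Set.mem_compl_iff, Metric.mem_closedBall, not_le, dist_eq_norm]
    constructor
    · intro hz
      have hz0 : ‖z - c‖ ≠ 0 := (hr.trans_lt hz).ne'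
      refine ⟨(‖z - c‖, ‖z - c‖⁻¹ • (z - c)), ⟨hz, ?_⟩, ?_⟩
      · rw [mem_sphere_zero_iff_norm, norm_smul, norm_inv, norm_norm, inv_mul_cancel₀ hz0]
      · simp only [smul_inv_smul₀ hz0, add_sub_cancel]
    · rintro ⟨⟨t, v⟩, ⟨ht, hv⟩, rfl⟩
      rw [mem_sphere_zero_iff_norm] at hv
      rw [add_sub_cancel_left, norm_smul, hv, mul_one]
      exact lt_of_lt_of_le ht (Real.le_norm_self t)
  rw [himage]
  exact (isConnected_Ioi.prod (isConnected_sphere h 0 zero_le_one)).image _ (by fun_prop)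

/- Otherwise the maximum modulus principle for `1 / f` bounds `|f ρ|` from below by `m / 2`. -/
lemma exists_zero_of_norm_sub_lt {f g : ℂ → ℂ} {ρ : ℂ} {r m : ℝ} (hr : 0 < r) (hρ : g ρ = 0)
    (hg : ∀ s ∈ Metric.sphere ρ r, m ≤ ‖g s‖) (hf : DiffContOnCl ℂ f (Metric.ball ρ r))
    (hfg : ∀ s ∈ Metric.closedBall ρ r, ‖f s - g s‖ < m / 2) :
    ∃ z ∈ Metric.closedBall ρ r, f z = 0 := by
  by_contra! hne
  have hcenter : ‖f ρ‖ < m / 2 := by simpa [hρ] using hfg ρ (Metric.mem_closedBall_self hr.le)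
  have hm : 0 < m / 2 := (norm_nonneg _).trans_lt hcenter
  have hboundary : ∀ z ∈ frontier (Metric.ball ρ r), ‖f⁻¹ z‖ ≤ (m / 2)⁻¹ := fun z hz => by
    rw [frontier_ball _ hr.ne'] at hz
    rw [Pi.inv_apply, norm_inv]
    refine inv_anti₀ hm ?_
    have hclose := hfg z (Metric.sphere_subset_closedBall hz)
    rw [norm_sub_rev] at hclose
    linarith [norm_sub_norm_le (g z) (f z), hg z hz]
  have hle := norm_le_of_forall_mem_frontier_norm_le Metric.isBounded_ball
    (hf.inv (by rwa [closure_ball _ hr.ne'])) hboundary (subset_closure (Metric.mem_ball_self hr))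
  rw [Pi.inv_apply, norm_inv,
    inv_le_inv₀ (norm_pos_iff.mpr (hne ρ (Metric.mem_closedBall_self hr.le))) hm] at hle
  linarith

end Topology

section SelfApprox

variable {K : Set ℂ} {ε : ℝ}

/-- The set of `τ` for which the translate of `ζ` by `iτ` is `ε`-close to `ζ` uniformly on `K`. -/
noncomputable def selfApproxTimes (K : Set ℂ) (ε : ℝ) : Set ℝ :=
  {τ | supNorm K (fun s => riemannZeta (s + τ * I) - riemannZeta s) < ENNReal.ofReal ε}

lemma norm_lt_of_supNorm_lt {f : ℂ → ℂ} (h : supNorm K f < ENNReal.ofReal ε) {s : ℂ}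
    (hs : s ∈ K) : ‖f s‖ < ε := by
  have hle : ‖f s‖ₑ ≤ supNorm K f := le_iSup₂ (f := fun s (_ : s ∈ K) => ‖f s‖ₑ) s hs
  rw [← ENNReal.ofReal_lt_ofReal_iff_of_nonneg (norm_nonneg _), ofReal_norm]
  exact hle.trans_lt h

lemma lowerDens_le_of_eventually_le {S : Set ℝ} {c : ℝ}
    (h : ∀ᶠ T in atTop, volume.real (S ∩ Set.Icc 0 T) ≤ c * T) : lowerDens S ≤ c := by
  refine liminf_le_of_frequently_le (Eventually.frequently ?_) ⟨0, eventually_map.mpr ?_⟩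
  · filter_upwards [h, eventually_gt_atTop 0] with T hT hT0
    exact (div_le_iff₀ hT0).mpr hT
  · filter_upwards [eventually_ge_atTop 0] with T hT
    positivity

lemma mul_volume_inter_Icc_le_integral {f : ℝ → ℝ} {S : Set ℝ} {c T : ℝ} (hT : 0 ≤ T)
    (hf : ∀ τ, 0 ≤ f τ) (hint : IntervalIntegrable f volume 0 T) (hS : ∀ τ ∈ S, c ≤ f τ)
    (hc : 0 ≤ c) :
    c * volume.real (S ∩ Set.Icc 0 T) ≤ ∫ τ in (0 : ℝ)..T, f τ := by
  rw [intervalIntegral.integral_of_le hT, ← integral_Icc_eq_integral_Ioc]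
  refine le_trans ?_ (mul_meas_ge_le_integral_of_nonneg (ae_of_all _ hf)
    ((intervalIntegrable_iff_integrableOn_Icc_of_le hT).mp hint) c)
  rw [measureReal_restrict_apply' measurableSet_Icc]
  gcongr
  · exact measure_ne_top_of_subset Set.inter_subset_right measure_Icc_lt_top.ne
  · exact hS

lemma isOpen_strip : IsOpen strip :=
  (isOpen_lt continuous_const continuous_re).inter (isOpen_lt continuous_re continuous_const)

lemma exists_subset_truncatedStrip (hK : IsCompact K) (hKs : K ⊆ strip) :
    ∃ a b R, 1 / 2 < a ∧ b < 1 ∧ a ≤ b ∧ K ⊆ truncatedStrip a b R := by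
  rcases K.eq_empty_or_nonempty with rfl | hne
  · exact ⟨3 / 4, 3 / 4, 0, by norm_num, by norm_num, le_rfl, Set.empty_subset _⟩
  obtain ⟨x, hx, hmin⟩ := hK.exists_isMinOn hne continuous_re.continuousOn
  obtain ⟨y, hy, hmax⟩ := hK.exists_isMaxOn hne continuous_re.continuousOn
  obtain ⟨R, hR⟩ := hK.isBounded.exists_norm_le
  exact ⟨x.re, y.re, R, (hKs hx).1, (hKs hy).2, hmin hy, fun s hs => ⟨hmin hs, hmax hs, hR s hs⟩⟩

lemma exists_eventually_integral_eulerErrorArea_le (hK : IsCompact K) (hKs : K ⊆ strip) {δ : ℝ}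
    (hδ : 0 < δ) :
    ∃ P, ∀ᶠ T in atTop, ∫ τ in (0 : ℝ)..T, eulerErrorArea P K τ ≤ δ * T := by
  obtain ⟨a, b, R, ha, hb, hab, hKS⟩ := exists_subset_truncatedStrip hK hKs
  set V := volume.real K
  have hV : 0 ≤ V := measureReal_nonneg
  set η := δ / (3 * (V + 1))
  have hη : 0 < η := by positivity
  obtain ⟨P, -, hP⟩ := exists_forall_sum_rpow_neg_le (show 1 < 2 * a by linarith) hη
  refine ⟨P, ?_⟩
  filter_upwards [eventually_integral_norm_sq_mul_eulerErrorArea_le ha hb hab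
    (IsSmoothExpSum.one P) (by simp) hP zero_le_one hη hK hKS, eventually_ge_atTop 0] with T hT hT0
  simp only [norm_one, one_pow, one_mul] at hT
  have hVη : V * (3 * η) ≤ δ := by
    calc V * (3 * η) ≤ (V + 1) * (3 * η) := by gcongr; linarith
      _ = δ := by simp only [η]; field_simp
  calc _ ≤ V * ((2 * 1 * η + η) * T) := by simpa using hT
    _ = V * (3 * η) * T := by ring
    _ ≤ δ * T := by gcongr

lemma differentiableOn_eulerError_add (P : ℕ) (τ : ℝ) :
    DifferentiableOn ℂ (fun s => eulerError P (s + τ * I)) {s | s.re < 1} := fun s hs => by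
  have hshift : DifferentiableAt ℂ (fun s : ℂ => s + τ * I) s := by fun_prop
  have hne : s + τ * I ≠ 1 := ne_one_of_re_lt_one (by simpa using hs)
  exact ((((differentiable_invEulerProduct P).differentiableAt.mul
    (differentiableAt_riemannZeta hne)).sub_const 1).comp s hshift).differentiableWithinAt

lemma exists_sphere_le_norm_riemannZeta {ρ : ℂ} (hρ : ρ ∈ strip) :
    ∃ r > 0, ∃ m > 0, Metric.closedBall ρ (2 * r) ⊆ strip ∧
      ∀ s ∈ Metric.sphere ρ r, m ≤ ‖riemannZeta s‖ := by
  obtain ⟨R, hR, hball⟩ := Metric.nhds_basis_closedBall.mem_iff.mp (isOpen_strip.mem_nhds hρ)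
  have hfin := ((isCompact_closedBall ρ R).inter_riemannZetaZeros_finite).image fun z => dist z ρ
  obtain ⟨r, ⟨hr, hrR⟩, hr_notMem⟩ :=
    ((Set.Ioo_infinite (show 0 < R / 2 by positivity)).sdiff hfin).nonempty
  have hsphere : Metric.sphere ρ r ⊆ Metric.closedBall ρ R :=
    Metric.sphere_subset_closedBall.trans (Metric.closedBall_subset_closedBall (by linarith))
  have hne : ∀ s ∈ Metric.sphere ρ r, riemannZeta s ≠ 0 := fun s hs h =>
    hr_notMem ⟨s, ⟨hsphere hs, h⟩, hs⟩
  have hcont : ContinuousOn (fun s => ‖riemannZeta s‖) (Metric.sphere ρ r) := fun s hs =>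
    (differentiableAt_riemannZeta (ne_one_of_re_lt_one
      (hball (hsphere hs)).2)).continuousAt.norm.continuousWithinAt
  obtain ⟨s₀, hs₀, hmin⟩ := (isCompact_sphere ρ r).exists_isMinOn
    (NormedSpace.sphere_nonempty.mpr hr.le) hcont
  exact ⟨r, hr, ‖riemannZeta s₀‖, norm_pos_iff.mpr (hne s₀ hs₀),
    (Metric.closedBall_subset_closedBall (by linarith)).trans hball, fun s hs => hmin hs⟩

/- A translate of `ζ` close to `ζ` around a zero `ρ` has a zero near `ρ`, where the Euler error
equals `-1`. -/
lemma mul_sq_le_eulerErrorArea {ρ : ℂ} {r m : ℝ} (hr : 0 < r) (hρ : riemannZeta ρ = 0)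
    (hsub : Metric.closedBall ρ (2 * r) ⊆ strip)
    (hm : ∀ s ∈ Metric.sphere ρ r, m ≤ ‖riemannZeta s‖) (P : ℕ) {τ : ℝ}
    (hτ : τ ∈ selfApproxTimes (Metric.closedBall ρ r) (m / 2)) :
    Real.pi * r ^ 2 ≤ eulerErrorArea P (Metric.closedBall ρ (2 * r)) τ := by
  have hsub_re : Metric.closedBall ρ (2 * r) ⊆ {s | s.re < 1} := fun s hs => (hsub hs).2
  have hshift : DiffContOnCl ℂ (fun s => riemannZeta (s + τ * I)) (Metric.ball ρ r) := by
    refine DifferentiableOn.diffContOnCl fun s hs => DifferentiableAt.differentiableWithinAt ?_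
    rw [closure_ball _ hr.ne'] at hs
    have hs1 : s.re < 1 := hsub_re (Metric.closedBall_subset_closedBall (by linarith) hs)
    exact (differentiableAt_riemannZeta (ne_one_of_re_lt_one (by simpa using hs1))).comp
      (f := fun s : ℂ => s + τ * I) s (by fun_prop)
  obtain ⟨z, hz, hz0⟩ := exists_zero_of_norm_sub_lt hr hρ hm hshift fun s hs =>
    norm_lt_of_supNorm_lt hτ hs
  have hzball : Metric.closedBall z r ⊆ Metric.closedBall ρ (2 * r) :=
    Metric.closedBall_subset_closedBall' (by linarith [Metric.mem_closedBall.mp hz])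
  have hdiff := (differentiableOn_eulerError_add P τ).mono hsub_re
  have harea := mul_norm_sq_le_setIntegral_norm_sq hr
    ((hdiff.mono hzball).diffContOnCl_ball le_rfl) (Metric.ball_subset_closedBall.trans hzball)
    ((hdiff.continuousOn.norm.pow 2).integrableOn_compact (isCompact_closedBall _ _))
  simpa [eulerError, hz0, eulerErrorArea] using harea

theorem riemannHypothesis_of_selfApprox
    (h : ∀ c r, 0 < r → Metric.closedBall c r ⊆ strip →
      ∀ ε > 0, 0 < lowerDens (selfApproxTimes (Metric.closedBall c r) ε)) :
    RiemannHypothesis := by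
  by_contra hRH
  obtain ⟨ρ, hρ, hρ0⟩ := exists_zero_mem_strip_of_not_riemannHypothesis hRH
  obtain ⟨r, hr, m, hm, hsub, hsphere⟩ := exists_sphere_le_norm_riemannZeta hρ
  have hpos := h ρ r hr ((Metric.closedBall_subset_closedBall (by linarith)).trans hsub) (m / 2)
    (by positivity)
  set S := selfApproxTimes (Metric.closedBall ρ r) (m / 2)
  have hK := isCompact_closedBall ρ (2 * r)
  have := Real.pi_pos
  obtain ⟨P, hP⟩ := exists_eventually_integral_eulerErrorArea_le hK hsub
    (show 0 < Real.pi * r ^ 2 * (lowerDens S / 2) by positivity)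
  refine (half_lt_self hpos).not_ge (lowerDens_le_of_eventually_le ?_)
  filter_upwards [hP, eventually_ge_atTop 0] with T hT hT0
  have hint := intervalIntegrable_norm_sq_mul_eulerErrorArea hK (fun s hs => (hsub hs).2) P
    (Q := fun _ => 1) continuous_const hT0
  simp only [norm_one, one_pow, one_mul] at hint
  have hmarkov := (mul_volume_inter_Icc_le_integral hT0
    (fun τ => integral_nonneg fun _ => by positivity) hint
    (fun τ hτ => mul_sq_le_eulerErrorArea hr hρ0 hsub hsphere P hτ) (by positivity)).trans hT
  exact le_of_mul_le_mul_left (hmarkov.trans_eq (mul_assoc _ _ _)) (by positivity)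

end SelfApprox

section LowerDensity

lemma integral_le_measureReal_setOf_pos {α : Type*} [MeasurableSpace α] {μ : Measure α}
    [IsFiniteMeasure μ] {f : α → ℝ} (hf : Integrable f μ) (hf1 : ∀ x, f x ≤ 1) :
    ∫ x, f x ∂μ ≤ μ.real {x | 0 < f x} := by
  have hmeas : NullMeasurableSet {x | 0 < f x} μ :=
    nullMeasurableSet_lt aemeasurable_const hf.aemeasurable
  calc ∫ x, f x ∂μ ≤ ∫ x, Set.indicator {x | 0 < f x} 1 x ∂μ := by
        refine integral_mono hf ((integrable_const 1).indicator₀ hmeas)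
          (Set.le_indicator (fun x _ => hf1 x) fun x hx => not_lt.mp hx)
    _ = μ.real {x | 0 < f x} := by simp [integral_indicator₀ hmeas]

lemma lowerDens_pos_of_eventually_le {S : Set ℝ} {c : ℝ} (hc : 0 < c)
    (h : ∀ᶠ T in atTop, c * T ≤ volume.real (S ∩ Set.Icc 0 T)) : 0 < lowerDens S := by
  refine hc.trans_le (le_liminf_of_le ?_ ?_)
  · refine IsBoundedUnder.isCoboundedUnder_ge ⟨1, eventually_map.mpr ?_⟩
    filter_upwards [eventually_gt_atTop 0] with T hT
    have hle := measureReal_mono (μ := volume)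
      (Set.inter_subset_right (s := S) (t := Set.Icc 0 T)) measure_Icc_lt_top.ne
    rw [Real.volume_real_Icc_of_le hT.le, sub_zero] at hle
    exact (div_le_one hT).mpr hle
  · filter_upwards [h, eventually_gt_atTop 0] with T hT hT0
    exact (le_div_iff₀ hT0).mpr hT

lemma lowerDens_pos_of_eventually_le_integral {S : Set ℝ} {f : ℝ → ℝ} {c : ℝ} (hc : 0 < c)
    (hf1 : ∀ τ, f τ ≤ 1) (hS : ∀ τ, 0 < f τ → τ ∈ S)
    (hf : ∀ᶠ T in atTop, IntervalIntegrable f volume 0 T)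
    (h : ∀ᶠ T in atTop, c * T ≤ ∫ τ in (0 : ℝ)..T, f τ) : 0 < lowerDens S := by
  refine lowerDens_pos_of_eventually_le hc ?_
  filter_upwards [hf, h, eventually_ge_atTop 0] with T hfT hT hT0
  refine hT.trans ?_
  rw [intervalIntegral.integral_of_le hT0, ← integral_Icc_eq_integral_Ioc]
  refine (integral_le_measureReal_setOf_pos
    ((intervalIntegrable_iff_integrableOn_Icc_of_le hT0).mp hfT) hf1).trans ?_
  rw [measureReal_restrict_apply' measurableSet_Icc]
  exact measureReal_mono (Set.inter_subset_inter_left _ hS)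
    (measure_ne_top_of_subset Set.inter_subset_right measure_Icc_lt_top.ne)

variable {a b R t κ η : ℝ} {P : ℕ} {K : Set ℂ} {S : Set ℝ} {ω : ℕ → ℂ}

lemma lowerDens_pos_of_weight {W D E : ℝ → ℝ} {w : ℝ} (hw : 0 < w) (hη : 0 < η) (hκ : 0 < κ)
    (hW0 : ∀ τ, 0 ≤ W τ) (hW1 : ∀ τ, W τ ≤ 1) (hD0 : ∀ τ, 0 ≤ D τ) (hE0 : ∀ τ, 0 ≤ E τ)
    (hS : ∀ τ, D τ ≤ η → E τ ≤ κ → τ ∈ S)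
    (hWi : ∀ᶠ T in atTop, IntervalIntegrable W volume 0 T)
    (hDi : ∀ᶠ T in atTop, IntervalIntegrable (fun τ => W τ * D τ) volume 0 T)
    (hEi : ∀ᶠ T in atTop, IntervalIntegrable (fun τ => W τ * E τ) volume 0 T)
    (hWT : ∀ᶠ T in atTop, 3 / 4 * w * T ≤ ∫ τ in (0 : ℝ)..T, W τ)
    (hDT : ∀ᶠ T in atTop, ∫ τ in (0 : ℝ)..T, W τ * D τ ≤ η * (w / 4 * T))
    (hET : ∀ᶠ T in atTop, ∫ τ in (0 : ℝ)..T, W τ * E τ ≤ κ * (w / 4 * T)) :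
    0 < lowerDens S := by
  refine lowerDens_pos_of_eventually_le_integral (c := w / 4) (f := fun τ => W τ -
    η⁻¹ * (W τ * D τ) - κ⁻¹ * (W τ * E τ)) (by positivity) (fun τ => ?_) (fun τ hτ => ?_) ?_ ?_
  · have hWD := mul_nonneg (inv_nonneg.mpr hη.le) (mul_nonneg (hW0 τ) (hD0 τ))
    have hWE := mul_nonneg (inv_nonneg.mpr hκ.le) (mul_nonneg (hW0 τ) (hE0 τ))
    linarith [hW1 τ]
  · have hfactor : 0 < W τ * (1 - η⁻¹ * D τ - κ⁻¹ * E τ) := hτ.trans_eq (by ring)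
    have hpos := pos_of_mul_pos_right hfactor (hW0 τ)
    have hD := mul_nonneg (inv_nonneg.mpr hη.le) (hD0 τ)
    have hE := mul_nonneg (inv_nonneg.mpr hκ.le) (hE0 τ)
    exact hS τ ((inv_mul_le_one₀ hη).mp (by linarith)) ((inv_mul_le_one₀ hκ).mp (by linarith))
  · filter_upwards [hWi, hDi, hEi] with T hWi hDi hEi using
      (hWi.sub (hDi.const_mul _)).sub (hEi.const_mul _)
  · filter_upwards [hWi, hDi, hEi, hWT, hDT, hET] with T hWi hDi hEi hW hD hE
    rw [intervalIntegral.integral_sub (hWi.sub (hDi.const_mul _)) (hEi.const_mul _),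
      intervalIntegral.integral_sub hWi (hDi.const_mul _), intervalIntegral.integral_const_mul,
      intervalIntegral.integral_const_mul]
    linarith [(inv_mul_le_iff₀ hη).mpr hD, (inv_mul_le_iff₀ hκ).mpr hE]

/- `‖Q‖²` is a weight concentrated where the phases are near `ω`, and the Euler error is small on
average with respect to it. -/
lemma lowerDens_pos_of_forall_phase_near (ha : 1 / 2 < a) (hb : b < 1) (hab : a ≤ b)
    (hK : IsCompact K) (hKS : K ⊆ truncatedStrip a b R) (hω : ∀ p, ‖ω p‖ = 1) (hη : 0 < η)
    (hκ : 0 < κ) (ht0 : 0 < t)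
    (ht : ∀ F : Finset ℕ, (∀ n ∈ F, P ≤ n) → ∑ n ∈ F, (n : ℝ) ^ (-(2 * a)) ≤ t)
    (hκt : volume.real K * (3 * t) ≤ κ / 4)
    (hS : ∀ τ, ∑ p ∈ P.primesBelow, ‖phase p τ - ω p‖ ^ 2 ≤ η → eulerErrorArea P K τ ≤ κ → τ ∈ S) :
    0 < lowerDens S := by
  obtain ⟨Q, w, hw, hQ, hQ1, hQω⟩ :=
    exists_smoothExpSum_concentrated_near_phases hω P (show 0 < η / 4 by positivity)
  have hWc : Continuous fun τ => ‖Q τ‖ ^ 2 := hQ.continuous.norm.pow 2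
  have hDc : Continuous fun τ => ∑ p ∈ P.primesBelow, ‖phase p τ - ω p‖ ^ 2 :=
    continuous_finsetSum _ fun p _ => ((continuous_phase p).sub continuous_const).norm.pow 2
  refine lowerDens_pos_of_weight hw hη hκ (W := fun τ => ‖Q τ‖ ^ 2) (fun τ => by positivity)
    (fun τ => pow_le_one₀ (norm_nonneg _) (hQ1 τ)) (fun τ => by positivity)
    (fun τ => integral_nonneg fun _ => by positivity) hS
    (.of_forall fun T => hWc.intervalIntegrable 0 T)
    (.of_forall fun T => (hWc.mul hDc).intervalIntegrable 0 T) ?_ ?_ ?_ ?_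
  · filter_upwards [eventually_ge_atTop 0] with T hT using
      intervalIntegrable_norm_sq_mul_eulerErrorArea hK (fun s hs => (hKS hs).2.1.trans_lt hb) P
        hQ.continuous hT
  · filter_upwards [hQ.eventually_abs_integral_norm_sq_sub_le (show 0 < w / 4 by positivity)]
      with T hT
    linarith [(abs_le.mp hT).1]
  · filter_upwards [hQω] with T hT using hT.trans_eq (by ring)
  · filter_upwards [eventually_integral_norm_sq_mul_eulerErrorArea_le ha hb hab hQ hQ1 ht hw.le
      (show 0 < w * t by positivity) hK hKS, eventually_ge_atTop 0] with T hT hT0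
    calc _ ≤ volume.real K * (3 * t) * (w * T) := hT.trans_eq (by ring)
      _ ≤ κ / 4 * (w * T) := by gcongr
      _ = κ * (w / 4 * T) := by ring

end LowerDensity

section TwistedEulerProduct

/-- The product of the Euler factors `1 - ω p * p⁻ˢ`, which is `invEulerProduct P s` with the value
`1` replaced by the phase `ω p` at each prime `p < P`. -/
noncomputable def twistedInvEulerProduct (ω : ℕ → ℂ) (P : ℕ) (s : ℂ) : ℂ :=
  ∏ p ∈ P.primesBelow, (1 - ω p * (p : ℂ) ^ (-s))

lemma invEulerProduct_add_mul_I (P : ℕ) (s : ℂ) (τ : ℝ) :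
    invEulerProduct P (s + τ * I) = twistedInvEulerProduct (phase · τ) P s :=
  Finset.prod_congr rfl fun p hp => by
    rw [natCast_cpow_neg_add_mul_I (Nat.prime_of_mem_primesBelow hp).one_le, mul_comm]

lemma norm_prod_sub_prod_le {ι 𝕜 : Type*} [NormedField 𝕜] {S : Finset ι} {x y : ι → 𝕜} {C : ℝ}
    (hC : 1 ≤ C) (hx : ∀ i ∈ S, ‖x i‖ ≤ C) (hy : ∀ i ∈ S, ‖y i‖ ≤ C) :
    ‖∏ i ∈ S, x i - ∏ i ∈ S, y i‖ ≤ C ^ S.card * ∑ i ∈ S, ‖x i - y i‖ := by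
  classical
  induction S using Finset.induction_on with
  | empty => simp
  | insert a S ha ih =>
    rw [Finset.forall_mem_insert] at hx hy
    have hprod : ‖∏ i ∈ S, y i‖ ≤ C ^ S.card := by
      rw [norm_prod]
      exact (Finset.prod_le_prod (fun _ _ => norm_nonneg _) hy.2).trans_eq (Finset.prod_const C)
    rw [Finset.prod_insert ha, Finset.prod_insert ha, Finset.sum_insert ha,
      Finset.card_insert_of_notMem ha]
    calc ‖x a * ∏ i ∈ S, x i - y a * ∏ i ∈ S, y i‖
        = ‖x a * (∏ i ∈ S, x i - ∏ i ∈ S, y i) + (x a - y a) * ∏ i ∈ S, y i‖ := by ring_nf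
      _ ≤ ‖x a‖ * ‖∏ i ∈ S, x i - ∏ i ∈ S, y i‖ + ‖x a - y a‖ * ‖∏ i ∈ S, y i‖ :=
          (norm_add_le _ _).trans_eq (by rw [norm_mul, norm_mul])
      _ ≤ C * (C ^ S.card * ∑ i ∈ S, ‖x i - y i‖) + ‖x a - y a‖ * (C ^ S.card * C) := by
          gcongr
          · exact hx.1
          · exact ih hx.2 hy.2
          · exact hprod.trans (le_mul_of_one_le_right (by positivity) hC)
      _ = C ^ (S.card + 1) * (‖x a - y a‖ + ∑ i ∈ S, ‖x i - y i‖) := by ring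

lemma norm_twistedInvEulerProduct_sub_sq_le {ω ω' : ℕ → ℂ} (hω : ∀ p, ‖ω p‖ = 1)
    (hω' : ∀ p, ‖ω' p‖ = 1) (P : ℕ) {s : ℂ} (hs : 0 ≤ s.re) :
    ‖twistedInvEulerProduct ω P s - twistedInvEulerProduct ω' P s‖ ^ 2 ≤
      (2 ^ P.primesBelow.card) ^ 2 * P.primesBelow.card *
        ∑ p ∈ P.primesBelow, ‖ω p - ω' p‖ ^ 2 := by
  have hcpow : ∀ p ∈ P.primesBelow, ‖(p : ℂ) ^ (-s)‖ ≤ 1 := fun p hp =>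
    norm_natCast_cpow_neg_le_one (Nat.prime_of_mem_primesBelow hp).one_le hs
  have hfactor : ∀ u : ℂ, ‖u‖ = 1 → ∀ p ∈ P.primesBelow, ‖1 - u * (p : ℂ) ^ (-s)‖ ≤ 2 :=
    fun u hu p hp => (norm_sub_le _ _).trans <| by
      rw [norm_mul, hu, norm_one]
      linarith [hcpow p hp]
  have hdiff : ∀ p ∈ P.primesBelow,
      ‖(1 - ω p * (p : ℂ) ^ (-s)) - (1 - ω' p * (p : ℂ) ^ (-s))‖ ≤ ‖ω p - ω' p‖ := fun p hp => by
    rw [sub_sub_sub_cancel_left, ← sub_mul, norm_mul, norm_sub_rev]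
    exact mul_le_of_le_one_right (norm_nonneg _) (hcpow p hp)
  calc _ ≤ (2 ^ P.primesBelow.card * ∑ p ∈ P.primesBelow, ‖ω p - ω' p‖) ^ 2 := by
        gcongr
        exact (norm_prod_sub_prod_le one_le_two (fun p hp => hfactor _ (hω p) p hp)
          fun p hp => hfactor _ (hω' p) p hp).trans (by gcongr with p hp; exact hdiff p hp)
    _ ≤ _ := by
        rw [mul_pow, mul_assoc]
        gcongr
        exact sq_sum_le_card_mul_sum_sq

lemma exists_forall_norm_twistedInvEulerProduct_sub_le {ω : ℕ → ℂ} (hω : ∀ p, ‖ω p‖ = 1) (P : ℕ)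
    {δ : ℝ} (hδ : 0 < δ) :
    ∃ η > 0, ∀ ω' : ℕ → ℂ, (∀ p, ‖ω' p‖ = 1) → ∑ p ∈ P.primesBelow, ‖ω' p - ω p‖ ^ 2 ≤ η →
      ∀ s : ℂ, 0 ≤ s.re →
        ‖twistedInvEulerProduct ω' P s - twistedInvEulerProduct ω P s‖ ≤ δ := by
  set n : ℕ := P.primesBelow.card
  refine ⟨δ ^ 2 / ((2 ^ n) ^ 2 * (n + 1)), by positivity, fun ω' hω' hη s hs => ?_⟩
  refine (sq_le_sq₀ (norm_nonneg _) hδ.le).mp ?_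
  calc _ ≤ (2 ^ n) ^ 2 * n * (δ ^ 2 / ((2 ^ n) ^ 2 * (n + 1))) :=
        (norm_twistedInvEulerProduct_sub_sq_le hω' hω P hs).trans (by gcongr)
    _ ≤ (2 ^ n) ^ 2 * (n + 1) * (δ ^ 2 / ((2 ^ n) ^ 2 * (n + 1))) := by
        gcongr
        linarith
    _ = δ ^ 2 := mul_div_cancel₀ _ (by positivity)

end TwistedEulerProduct

section SelfApproxOfPhases

lemma norm_sub_le_of_norm_mul_sub_one_le {R : Type*} [NormedCommRing R] {A A₀ Z Z₀ : R} {M δ : ℝ}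
    (hδ : δ ≤ 1 / 4) (hZ₀ : ‖Z₀‖ ≤ M) (hAZ : ‖A * Z - 1‖ ≤ δ) (hAZ₀ : ‖A₀ * Z₀ - 1‖ ≤ δ)
    (hA : ‖A - A₀‖ * M ≤ δ) : ‖Z - Z₀‖ ≤ 6 * M * δ := by
  have : 0 ≤ δ := (norm_nonneg _).trans hAZ
  have hM : 0 ≤ M := (norm_nonneg _).trans hZ₀
  have hZ : ‖Z‖ ≤ M + ‖Z - Z₀‖ := by linarith [norm_le_norm_add_norm_sub' Z Z₀]
  have hle : ‖Z - Z₀‖ ≤ M * δ + (M + ‖Z - Z₀‖) * δ + (M + ‖Z - Z₀‖) * δ :=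
    calc ‖Z - Z₀‖ = ‖Z₀ * (A * Z - 1) - Z * (A₀ * Z₀ - 1) - Z * ((A - A₀) * Z₀)‖ := by ring_nf
      _ ≤ ‖Z₀‖ * ‖A * Z - 1‖ + ‖Z‖ * ‖A₀ * Z₀ - 1‖ + ‖Z‖ * (‖A - A₀‖ * ‖Z₀‖) := by
          refine (norm_sub_le _ _).trans (add_le_add ((norm_sub_le _ _).trans
            (add_le_add (norm_mul_le _ _) (norm_mul_le _ _))) ((norm_mul_le _ _).trans ?_))
          gcongr
          exact norm_mul_le _ _
      _ ≤ _ := by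
          gcongr
          exact (by gcongr : ‖A - A₀‖ * ‖Z₀‖ ≤ ‖A - A₀‖ * M).trans hA
  nlinarith [norm_nonneg (Z - Z₀), mul_le_mul_of_nonneg_left hδ (norm_nonneg (Z - Z₀))]

lemma supNorm_lt_of_forall_norm_le {K : Set ℂ} {f : ℂ → ℂ} {ε δ : ℝ} (hε : 0 < ε) (hδ : δ < ε)
    (h : ∀ s ∈ K, ‖f s‖ ≤ δ) : supNorm K f < ENNReal.ofReal ε := by
  refine lt_of_le_of_lt (iSup₂_le fun s hs => ?_) ((ENNReal.ofReal_lt_ofReal_iff hε).mpr hδ)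
  rw [← enorm_eq_nnnorm, ← ofReal_norm]
  exact ENNReal.ofReal_le_ofReal (h s hs)

lemma norm_eulerError_le_of_eulerErrorArea_le {K : Set ℂ} (hK : IsCompact K)
    (hK1 : ∀ s ∈ K, s.re < 1) {P : ℕ} {τ δ r : ℝ} (hr : 0 < r) (hδ : 0 ≤ δ)
    (hτ : eulerErrorArea P K τ ≤ Real.pi * r ^ 2 * δ ^ 2) {s : ℂ}
    (hs : Metric.closedBall s r ⊆ K) : ‖eulerError P (s + τ * I)‖ ≤ δ := by
  have hdiff := (differentiableOn_eulerError_add P τ).mono hK1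
  have harea := (mul_norm_sq_le_setIntegral_norm_sq hr ((hdiff.mono hs).diffContOnCl_ball le_rfl)
    (Metric.ball_subset_closedBall.trans hs)
    ((hdiff.continuousOn.norm.pow 2).integrableOn_compact hK)).trans hτ
  exact (sq_le_sq₀ (norm_nonneg _) hδ).mp (le_of_mul_le_mul_left harea (by positivity))

theorem lowerDens_selfApproxTimes_pos {K : Set ℂ} (hK : IsCompact K) (hKs : K ⊆ strip)
    (h : ∀ δ > 0, ∀ N, ∃ P ≥ N, ∃ ω : ℕ → ℂ, (∀ p, ‖ω p‖ = 1) ∧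
      ∀ s ∈ K, ‖twistedInvEulerProduct ω P s * riemannZeta s - 1‖ ≤ δ) {ε : ℝ} (hε : 0 < ε) :
    0 < lowerDens (selfApproxTimes K ε) := by
  obtain ⟨r, hr, hsub⟩ := hK.exists_cthickening_subset_open isOpen_strip hKs
  set K' := Metric.cthickening r K
  have hK' : IsCompact K' := hK.cthickening
  obtain ⟨a, b, R, ha, hb, hab, hKS⟩ := exists_subset_truncatedStrip hK' hsub
  obtain ⟨M, hM, hζ⟩ : ∃ M > 0, ∀ s ∈ K, ‖riemannZeta s‖ ≤ M := by
    obtain ⟨M, hM⟩ := hK.exists_bound_of_continuousOn fun s hs => (differentiableAt_riemannZeta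
      (ne_one_of_re_lt_one (hKs hs).2)).continuousAt.continuousWithinAt
    exact ⟨max M 1, by positivity, fun s hs => (hM s hs).trans (le_max_left _ _)⟩
  obtain ⟨δ, hδ0, hδ⟩ := exists_between (show 0 < min (1 / 4) (ε / (6 * M)) by positivity)
  obtain ⟨hδ4, hδε⟩ := lt_min_iff.mp hδ
  rw [lt_div_iff₀ (by positivity), mul_comm] at hδε
  set κ := Real.pi * r ^ 2 * δ ^ 2
  have hκ : 0 < κ := by positivity
  set V := volume.real K'
  have hV : 0 ≤ V := measureReal_nonneg
  set t := κ / (12 * (V + 1))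
  have ht : 0 < t := by positivity
  have hκt : V * (3 * t) ≤ κ / 4 :=
    calc V * (3 * t) ≤ (V + 1) * (3 * t) := by gcongr; linarith
      _ = κ / 4 := by simp only [t]; field_simp; norm_num
  obtain ⟨N, -, hN⟩ := exists_forall_sum_rpow_neg_le (show 1 < 2 * a by linarith) ht
  obtain ⟨P, hNP, ω, hω, hωζ⟩ := h δ hδ0 N
  obtain ⟨η, hη, hstab⟩ :=
    exists_forall_norm_twistedInvEulerProduct_sub_le hω P (show 0 < δ / M by positivity)
  refine lowerDens_pos_of_forall_phase_near ha hb hab hK' hKS hω hη hκ ht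
    (fun F hF => hN F fun n hn => hNP.trans (hF n hn)) hκt fun τ hphase harea =>
      supNorm_lt_of_forall_norm_le hε hδε fun s hs => ?_
  have herror := norm_eulerError_le_of_eulerErrorArea_le hK' (fun s hs => (hsub hs).2) hr hδ0.le
    harea (Metric.closedBall_subset_cthickening hs r)
  have hs0 : 0 ≤ s.re := by linarith [(hKs hs).1]
  rw [eulerError, invEulerProduct_add_mul_I] at herror
  exact norm_sub_le_of_norm_mul_sub_one_le hδ4.le (hζ s hs) herror (hωζ s hs)
    ((le_div_iff₀ hM).mp (hstab _ (norm_phase · τ) hphase s hs0))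

end SelfApproxOfPhases

section UnimodularRounding

open scoped InnerProductSpace

lemma exists_norm_add_eq_one_and_norm_sub_eq_one {b : ℂ} (hb : ‖b‖ ≤ 1) :
    ∃ u : ℂ, ‖u‖ ≤ 1 ∧ ‖b + u‖ = 1 ∧ ‖b - u‖ = 1 := by
  have ht : √(1 - ‖b‖ ^ 2) ^ 2 = 1 - ‖b‖ ^ 2 := Real.sq_sqrt (by nlinarith [norm_nonneg b])
  set t := √(1 - ‖b‖ ^ 2)
  have hnorm (x y : ℝ) (hxy : x ^ 2 + y ^ 2 = 1) : ‖(x + y * I) * cexp (b.arg * I)‖ = 1 := by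
    rw [norm_mul, norm_exp_ofReal_mul_I, mul_one, norm_add_mul_I, hxy, Real.sqrt_one]
  refine ⟨t * I * cexp (b.arg * I), ?_, ?_, ?_⟩
  · rw [norm_mul, norm_exp_ofReal_mul_I, norm_mul, norm_I, norm_real, mul_one, mul_one,
      ← sq_le_one_iff₀ (norm_nonneg _), Real.norm_eq_abs, sq_abs, ht]
    linarith [sq_nonneg ‖b‖]
  · rw [← hnorm ‖b‖ t (by linarith), add_mul, norm_mul_exp_arg_mul_I]
  · rw [← hnorm ‖b‖ (-t) (by linarith [neg_sq t]), add_mul, norm_mul_exp_arg_mul_I]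
    push_cast
    ring_nf

variable {ι H : Type*} [NormedAddCommGroup H] [InnerProductSpace ℂ H]

lemma exists_norm_add_sub_smul_sq_le (v x : H) {b : ℂ} (hb : ‖b‖ ≤ 1) :
    ∃ ω : ℂ, ‖ω‖ = 1 ∧ ‖v + (ω - b) • x‖ ^ 2 ≤ ‖v‖ ^ 2 + ‖x‖ ^ 2 := by
  obtain ⟨u, hu, hadd, hsub⟩ := exists_norm_add_eq_one_and_norm_sub_eq_one hb
  have hux : ‖u • x‖ * ‖u • x‖ ≤ ‖x‖ * ‖x‖ := by
    have : ‖u • x‖ ≤ ‖x‖ := by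
      rw [norm_smul]
      exact mul_le_of_le_one_left (norm_nonneg x) hu
    gcongr
  have hpar := parallelogram_law_with_norm ℂ v (u • x)
  rcases le_total ‖v + u • x‖ ‖v - u • x‖ with h | h
  · refine ⟨b + u, hadd, ?_⟩
    rw [add_sub_cancel_left]
    nlinarith [norm_nonneg (v + u • x)]
  · refine ⟨b - u, hsub, ?_⟩
    rw [sub_sub_cancel_left, neg_smul, ← sub_eq_add_neg]
    nlinarith [norm_nonneg (v - u • x)]

lemma exists_norm_sum_sub_smul_sq_le (x : ι → H) {b : ι → ℂ} (hb : ∀ i, ‖b i‖ ≤ 1)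
    (F : Finset ι) :
    ∃ ω : ι → ℂ, (∀ i, ‖ω i‖ = 1) ∧ ‖∑ i ∈ F, (ω i - b i) • x i‖ ^ 2 ≤ ∑ i ∈ F, ‖x i‖ ^ 2 := by
  classical
  induction F using Finset.induction_on with
  | empty => exact ⟨fun _ => 1, by simp, by simp⟩
  | insert a F ha ih =>
    obtain ⟨ω, hω, hF⟩ := ih
    obtain ⟨v, hv, hav⟩ :=
      exists_norm_add_sub_smul_sq_le (∑ i ∈ F, (ω i - b i) • x i) (x a) (hb a)
    refine ⟨Function.update ω a v,
      (Function.forall_update_iff ω fun _ z => ‖z‖ = 1).mpr ⟨hv, fun i _ => hω i⟩, ?_⟩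
    have hupd : ∑ i ∈ F, (Function.update ω a v i - b i) • x i = ∑ i ∈ F, (ω i - b i) • x i :=
      Finset.sum_congr rfl fun i hi => by
        rw [Function.update_of_ne (ne_of_mem_of_not_mem hi ha)]
    rw [Finset.sum_insert ha, Finset.sum_insert ha, Function.update_self, hupd, add_comm]
    linarith

/-- The linear combinations of `x` with finitely supported coefficients from the closed unit
disc. -/
noncomputable def unitDiscCombinations (x : ι → H) : Set H :=
  Finsupp.linearCombination ℂ x '' {b | ∀ i, ‖b i‖ ≤ 1}

lemma convex_unitDiscCombinations (x : ι → H) : Convex ℝ (unitDiscCombinations x) := by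
  refine Convex.linear_image ?_ ((Finsupp.linearCombination ℂ x).restrictScalars ℝ)
  intro b hb c hc u v hu hv huv i
  calc ‖u • b i + v • c i‖ ≤ u * ‖b i‖ + v * ‖c i‖ := by
        refine (norm_add_le _ _).trans_eq ?_
        rw [norm_smul, norm_smul, Real.norm_of_nonneg hu, Real.norm_of_nonneg hv]
    _ ≤ u * 1 + v * 1 := by gcongr <;> [exact hb i; exact hc i]
    _ = 1 := by linarith

lemma sum_norm_le_of_forall_re_lt (x : ι → H) {f : H →L[ℂ] ℂ} {u : ℝ}
    (hf : ∀ c ∈ unitDiscCombinations x, (f c).re < u) (F : Finset ι) :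
    ∑ i ∈ F, ‖f (x i)‖ ≤ u := by
  set b : ι →₀ ℂ := Finsupp.indicator F fun i _ => starRingEnd ℂ (f (x i)) / ‖f (x i)‖
  have hb : ∀ i, ‖b i‖ ≤ 1 := fun i => by
    by_cases hi : i ∈ F
    · rw [Finsupp.indicator_of_mem hi, norm_div, RCLike.norm_conj, norm_real, norm_norm]
      exact div_self_le_one _
    · simp [b, Finsupp.indicator_of_notMem hi]
  refine le_of_eq_of_le ?_ (hf _ ⟨b, hb, rfl⟩).le
  have hsum : Finsupp.linearCombination ℂ x b =
      ∑ i ∈ F, (starRingEnd ℂ (f (x i)) / ‖f (x i)‖) • x i :=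
    Finsupp.sum_indicator_index _ fun i _ => zero_smul ℂ (x i)
  rw [hsum, map_sum, re_sum]
  refine Finset.sum_congr rfl fun i _ => ?_
  rw [map_smul, smul_eq_mul, div_mul_eq_mul_div, conj_mul', ← ofReal_pow, ← ofReal_div, ofReal_re,
    sq, mul_self_div_self]

variable [CompleteSpace H]

lemma mem_closure_unitDiscCombinations {x : ι → H} {g : H}
    (hg : ∀ φ : H, Summable (fun i => ‖⟪φ, x i⟫_ℂ‖) → ⟪φ, g⟫_ℂ = 0) :
    g ∈ closure (unitDiscCombinations x) := by
  by_contra hmem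
  obtain ⟨f, u, hf, hu⟩ := RCLike.geometric_hahn_banach_closed_point (𝕜 := ℂ)
    (convex_unitDiscCombinations x).closure isClosed_closure hmem
  replace hf : ∀ c ∈ unitDiscCombinations x, (f c).re < u := fun c hc => hf c (subset_closure hc)
  have hu0 : 0 < u := by simpa using hf 0 ⟨0, by simp, by simp⟩
  have hriesz (y : H) : ⟪(InnerProductSpace.toDual ℂ H).symm f, y⟫_ℂ = f y :=
    InnerProductSpace.toDual_symm_apply
  have hfg := hg ((InnerProductSpace.toDual ℂ H).symm f) (by
    simp only [hriesz]
    exact summable_of_sum_le (fun _ => norm_nonneg _) (sum_norm_le_of_forall_re_lt x hf))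
  rw [hriesz] at hfg
  rw [hfg] at hu
  exact hu0.not_gt hu

theorem eventually_exists_norm_sum_smul_sub_le {x : ι → H} {g : H}
    (hg : ∀ φ : H, Summable (fun i => ‖⟪φ, x i⟫_ℂ‖) → ⟪φ, g⟫_ℂ = 0) {ε : ℝ} (hε : 0 < ε)
    (hx : ∀ F : Finset ι, ∑ i ∈ F, ‖x i‖ ^ 2 ≤ ε ^ 2) :
    ∀ᶠ F : Finset ι in atTop, ∃ ω : ι → ℂ, (∀ i, ‖ω i‖ = 1) ∧
      ‖∑ i ∈ F, ω i • x i - g‖ ≤ 2 * ε := by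
  obtain ⟨-, ⟨b, hb, rfl⟩, hdist⟩ :=
    Metric.mem_closure_iff.mp (mem_closure_unitDiscCombinations hg) ε hε
  filter_upwards [eventually_ge_atTop b.support] with F hF
  obtain ⟨ω, hω, hround⟩ := exists_norm_sum_sub_smul_sq_le x hb F
  have hsum : Finsupp.linearCombination ℂ x b = ∑ i ∈ F, b i • x i :=
    Finsupp.sum_of_support_subset _ hF _ fun i _ => zero_smul ℂ (x i)
  refine ⟨ω, hω, ?_⟩
  calc ‖∑ i ∈ F, ω i • x i - g‖
      = ‖∑ i ∈ F, (ω i - b i) • x i + (∑ i ∈ F, b i • x i - g)‖ := by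
        simp only [sub_smul, Finset.sum_sub_distrib, sub_add_sub_cancel]
    _ ≤ ‖∑ i ∈ F, (ω i - b i) • x i‖ + ‖∑ i ∈ F, b i • x i - g‖ := norm_add_le _ _
    _ ≤ ε + ε := by
        gcongr
        · exact (pow_le_pow_iff_left₀ (norm_nonneg _) hε.le two_ne_zero).mp (hround.trans (hx F))
        · rw [← hsum, ← dist_eq_norm, dist_comm]
          exact hdist.le
    _ = 2 * ε := by ring

end UnimodularRounding

section PrimeSum

open ArithmeticFunction.vonMangoldt

lemma norm_natCast_cpow_neg_le {n : ℕ} (hn : 1 ≤ n) {z : ℂ} {σ : ℝ} (hz : σ ≤ z.re) :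
    ‖(n : ℂ) ^ (-z)‖ ≤ (n : ℝ) ^ (-σ) := by
  rw [norm_natCast_cpow_neg hn]
  exact Real.rpow_le_rpow_of_exponent_le (by exact_mod_cast hn) (by linarith)

lemma norm_natCast_cpow_neg_le_three_fourths {n : ℕ} (hn : 2 ≤ n) {z : ℂ} (hz : 1 / 2 ≤ z.re) :
    ‖(n : ℂ) ^ (-z)‖ ≤ 3 / 4 := by
  calc ‖(n : ℂ) ^ (-z)‖ ≤ (n : ℝ) ^ (-(1 / 2) : ℝ) := norm_natCast_cpow_neg_le (by omega) hz
    _ ≤ (2 : ℝ) ^ (-(1 / 2) : ℝ) :=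
        Real.rpow_le_rpow_of_nonpos (by norm_num) (by exact_mod_cast hn) (by norm_num)
    _ ≤ 3 / 4 := by
        rw [Real.rpow_neg (by norm_num), ← Real.sqrt_eq_rpow,
          inv_le_comm₀ (by positivity) (by norm_num)]
        exact Real.le_sqrt_of_sq_le (by norm_num)

lemma one_fourth_le_norm_one_sub_natCast_cpow_neg {n : ℕ} (hn : 2 ≤ n) {z : ℂ}
    (hz : 1 / 2 ≤ z.re) : 1 / 4 ≤ ‖1 - (n : ℂ) ^ (-z)‖ := by
  have h := norm_sub_norm_le (1 : ℂ) ((n : ℂ) ^ (-z))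
  rw [norm_one] at h
  linarith [norm_natCast_cpow_neg_le_three_fourths hn hz]

/-- The contribution `∑_{k ≥ 2} log p / p ^ (k z)` of the proper powers of `p` to `-ζ' / ζ`,
summed as a geometric series. -/
noncomputable def primePowerTail (p : Nat.Primes) (z : ℂ) : ℂ :=
  Real.log p * ((p : ℂ) ^ (-z)) ^ 2 / (1 - (p : ℂ) ^ (-z))

lemma differentiableAt_primePowerTail (p : Nat.Primes) {z : ℂ} (hz : 1 / 2 ≤ z.re) :
    DifferentiableAt ℂ (primePowerTail p) z := by
  have hp := (differentiable_natCast_cpow_neg p.2.one_le).differentiableAt (x := z)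
  refine ((hp.pow 2).const_mul _).div ((differentiableAt_const _).sub hp) (norm_pos_iff.mp ?_)
  exact lt_of_lt_of_le (by norm_num) (one_fourth_le_norm_one_sub_natCast_cpow_neg p.2.two_le hz)

lemma norm_primePowerTail_le {σ : ℝ} (hσ : 1 / 2 < σ) (p : Nat.Primes) {z : ℂ} (hz : σ ≤ z.re) :
    ‖primePowerTail p z‖ ≤ 4 / (σ - 1 / 2) * (p : ℝ) ^ (-(σ + 1 / 2)) := by
  have hp : (0 : ℝ) < p := by exact_mod_cast p.2.pos
  have hσ' : 0 < σ - 1 / 2 := by linarith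
  have hlog : 0 ≤ Real.log p := Real.log_natCast_nonneg _
  have hden := one_fourth_le_norm_one_sub_natCast_cpow_neg p.2.two_le (hσ.le.trans hz)
  calc ‖primePowerTail p z‖
      = Real.log p * ‖(p : ℂ) ^ (-z)‖ ^ 2 / ‖1 - (p : ℂ) ^ (-z)‖ := by
        rw [primePowerTail, norm_div, norm_mul, norm_pow, norm_real, Real.norm_of_nonneg hlog]
    _ ≤ (p : ℝ) ^ (σ - 1 / 2) / (σ - 1 / 2) * ((p : ℝ) ^ (-σ)) ^ 2 / (1 / 4) := by
        gcongr
        · exact Real.log_le_rpow_div hp.le hσ'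
        · exact norm_natCast_cpow_neg_le p.2.one_le hz
    _ = 4 / (σ - 1 / 2) * ((p : ℝ) ^ (σ - 1 / 2) * ((p : ℝ) ^ (-σ) * (p : ℝ) ^ (-σ))) := by ring
    _ = 4 / (σ - 1 / 2) * (p : ℝ) ^ (-(σ + 1 / 2)) := by
        rw [← Real.rpow_add hp, ← Real.rpow_add hp]
        ring_nf

lemma summable_primePowerTail_bound {σ : ℝ} (hσ : 1 / 2 < σ) :
    Summable fun p : Nat.Primes => 4 / (σ - 1 / 2) * (p : ℝ) ^ (-(σ + 1 / 2)) :=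
  (Nat.Primes.summable_rpow.mpr (by linarith)).mul_left _

lemma tsum_vonMangoldt_term_prime_pow (p : Nat.Primes) {z : ℂ} (hz : 1 / 2 ≤ z.re) :
    ∑' k : ℕ, LSeries.term (fun n => (Λ n : ℂ)) z (p ^ (k + 2)) = primePowerTail p z := by
  have hterm (k : ℕ) : LSeries.term (fun n => (Λ n : ℂ)) z (p ^ (k + 2)) =
      Real.log p * ((p : ℂ) ^ (-z)) ^ 2 * ((p : ℂ) ^ (-z)) ^ k := by
    have hp : (p : ℕ) ^ (k + 2) ≠ 0 := pow_ne_zero _ p.2.ne_zero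
    rw [LSeries.term_of_ne_zero hp, ArithmeticFunction.vonMangoldt_apply_pow (by omega),
      ArithmeticFunction.vonMangoldt_apply_prime p.2, div_eq_mul_inv, ← cpow_neg, mul_assoc,
      ← pow_add, Nat.cast_pow, ← natCast_cpow_natCast_mul, cpow_nat_mul, add_comm 2 k]
  rw [tsum_congr hterm, tsum_mul_left, tsum_geometric_of_norm_lt_one, primePowerTail,
    div_eq_mul_inv]
  exact (norm_natCast_cpow_neg_le_three_fourths p.2.two_le hz).trans_lt (by norm_num)

lemma hasSum_log_mul_prime_cpow_neg_sub_deriv_riemannZeta_div {z : ℂ} (hz : 1 < z.re) :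
    HasSum (fun p : Nat.Primes => Real.log p * (p : ℂ) ^ (-z))
      (-deriv riemannZeta z / riemannZeta z - ∑' p, primePowerTail p z) := by
  have hsum := ArithmeticFunction.LSeriesSummable_vonMangoldt hz
  have hprime (p : Nat.Primes) :
      LSeries.term (fun n => (Λ n : ℂ)) z p = Real.log p * (p : ℂ) ^ (-z) := by
    rw [LSeries.term_of_ne_zero p.2.ne_zero, ArithmeticFunction.vonMangoldt_apply_prime p.2,
      div_eq_mul_inv, cpow_neg]
  have hsupp : Function.support (LSeries.term (fun n => (Λ n : ℂ)) z) ⊆ {n | IsPrimePow n} :=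
      fun n hn => by
    contrapose! hn
    simp [LSeries.term_def, ArithmeticFunction.vonMangoldt_eq_zero_iff.mpr hn]
  have hsplit := tsum_eq_tsum_primes_add_tsum_primes_of_support_subset_prime_powers hsum hsupp
  rw [tsum_congr hprime, tsum_congr fun p => tsum_vonMangoldt_term_prime_pow p (by linarith)]
    at hsplit
  rw [← ArithmeticFunction.LSeries_vonMangoldt_eq_deriv_riemannZeta_div hz, LSeries, hsplit,
    add_sub_cancel_right]
  exact ((hsum.comp_injective Subtype.val_injective).congr hprime).hasSum

/-- The difference between `∑ p, log p / p ^ z` and its polar part `1 / (z - 1)`, continued to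
`1 / 2 < Re z` with the help of the entire function `riemannZeta₁ z = (z - 1) ζ(z)`. -/
noncomputable def primeSumRegularPart (z : ℂ) : ℂ :=
  -logDeriv riemannZeta₁ z - ∑' p, primePowerTail p z

lemma differentiableAt_primeSumRegularPart (h : RiemannHypothesis) {z : ℂ} (hz : 1 / 2 < z.re) :
    DifferentiableAt ℂ primeSumRegularPart z := by
  have hlogDeriv : DifferentiableAt ℂ (logDeriv riemannZeta₁) z :=
    differentiable_riemannZeta₁.deriv.differentiableAt.div
      differentiable_riemannZeta₁.differentiableAt (riemannZeta₁_ne_zero h hz)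
  obtain ⟨σ, hσ, hσz⟩ := exists_between hz
  have htail : DifferentiableOn ℂ (fun w => ∑' p, primePowerTail p w) {w | σ < w.re} :=
    differentiableOn_tsum_of_summable_norm (summable_primePowerTail_bound hσ)
      (fun p w hw => (differentiableAt_primePowerTail p
        (hσ.trans hw).le).differentiableWithinAt)
      (isOpen_re_gt σ) fun p w hw => norm_primePowerTail_le hσ p hw.le
  exact hlogDeriv.neg.sub (htail.differentiableAt ((isOpen_re_gt σ).mem_nhds hσz))

lemma logDeriv_riemannZeta₁ {z : ℂ} (hz : z ≠ 1) (hζ : riemannZeta z ≠ 0) :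
    logDeriv riemannZeta₁ z = 1 / (z - 1) + deriv riemannZeta z / riemannZeta z := by
  have heq : riemannZeta₁ =ᶠ[nhds z] fun w => (w - 1) * riemannZeta w := by
    filter_upwards [isOpen_ne.mem_nhds hz] with w hw using riemannZeta₁_of_ne_one hw
  rw [(logDeriv_congr_nhds heq).eq_of_nhds,
    logDeriv_mul (f := fun w => w - 1) z (sub_ne_zero.mpr hz) hζ (by fun_prop)
      (differentiableAt_riemannZeta hz), logDeriv_apply, logDeriv_apply]
  simp

theorem hasSum_log_mul_prime_cpow_neg {z : ℂ} (hz : 1 < z.re) :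
    HasSum (fun p : Nat.Primes => Real.log p * (p : ℂ) ^ (-z))
      (1 / (z - 1) + primeSumRegularPart z) := by
  have hz1 : z ≠ 1 := fun h => by simp [h] at hz
  convert hasSum_log_mul_prime_cpow_neg_sub_deriv_riemannZeta_div hz using 1
  rw [primeSumRegularPart, logDeriv_riemannZeta₁ hz1 (riemannZeta_ne_zero_of_one_le_re hz.le)]
  ring

end PrimeSum

section CauchyTransform

variable {R : Set ℂ} {ψ : ℂ → ℂ}

lemma differentiableAt_integral_mul_comp_sub (hR : IsCompact R) (hψ : IntegrableOn ψ R)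
    {U : Set ℂ} (hU : IsOpen U) {H : ℂ → ℂ} (hH : DifferentiableOn ℂ H U) {w₀ : ℂ}
    (hw₀ : ∀ s ∈ R, s - w₀ ∈ U) :
    DifferentiableAt ℂ (fun w => ∫ s in R, ψ s * H (s - w)) w₀ := by
  have hK : IsCompact ((fun s => s - w₀) '' R) := hR.image (by fun_prop)
  obtain ⟨δ, hδ, hsub⟩ := hK.exists_cthickening_subset_open hU (Set.image_subset_iff.mpr hw₀)
  obtain ⟨M, hM⟩ := hK.cthickening.exists_bound_of_continuousOn
    ((hH.deriv hU).continuousOn.mono hsub)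
  have hmem : ∀ s ∈ R, ∀ w ∈ Metric.ball w₀ δ,
      s - w ∈ Metric.cthickening δ ((fun s => s - w₀) '' R) := fun s hs w hw =>
    Metric.mem_cthickening_of_dist_le _ (s - w₀) _ _ ⟨s, hs, rfl⟩
      (by simpa only [dist_sub_left] using (Metric.mem_ball.mp hw).le)
  have hint : ∀ w ∈ Metric.ball w₀ δ, IntegrableOn (fun s => ψ s * H (s - w)) R := fun w hw =>
    hψ.mul_continuousOn (hH.continuousOn.comp (by fun_prop) fun s hs => hsub (hmem s hs w hw)) hR
  have hint' : IntegrableOn (fun s => ψ s * -deriv H (s - w₀)) R :=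
    hψ.mul_continuousOn ((hH.deriv hU).continuousOn.comp (by fun_prop) hw₀).neg hR
  refine (hasDerivAt_integral_of_dominated_loc_of_deriv_le (F := fun w s => ψ s * H (s - w))
    (F' := fun w s => ψ s * -deriv H (s - w)) (bound := fun s => ‖ψ s‖ * M)
    (Metric.ball_mem_nhds w₀ hδ) ?_ (hint w₀ (Metric.mem_ball_self hδ))
    hint'.aestronglyMeasurable ?_ (hψ.norm.mul_const M) ?_).2.differentiableAt
  · filter_upwards [Metric.ball_mem_nhds w₀ hδ] with w hw using (hint w hw).aestronglyMeasurable
  · filter_upwards [ae_restrict_mem hR.measurableSet] with s hs w hw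
    rw [norm_mul, norm_neg]
    exact mul_le_mul_of_nonneg_left (hM _ (hmem s hs w hw)) (norm_nonneg _)
  · filter_upwards [ae_restrict_mem hR.measurableSet] with s hs w hw
    have hHs := hH.differentiableAt (hU.mem_nhds (hsub (hmem s hs w hw)))
    exact (hHs.hasDerivAt.comp_const_sub s w).const_mul _

/-- The Cauchy transform of the density `ψ` on `R`, up to the usual factor. -/
noncomputable def cauchyTransform (R : Set ℂ) (ψ : ℂ → ℂ) (w : ℂ) : ℂ :=
  ∫ s in R, ψ s * (s - w)⁻¹

lemma differentiableAt_cauchyTransform (hR : IsCompact R) (hψ : IntegrableOn ψ R) {w : ℂ}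
    (hw : w ∉ R) : DifferentiableAt ℂ (cauchyTransform R ψ) w :=
  differentiableAt_integral_mul_comp_sub hR hψ isOpen_compl_singleton
    (fun _ hz => (differentiableAt_inv hz).differentiableWithinAt)
    fun _ hs h => hw (sub_eq_zero.mp h ▸ hs)

lemma tendsto_cauchyTransform_cocompact (hR : IsCompact R) (hψ : IntegrableOn ψ R) :
    Tendsto (cauchyTransform R ψ) (cocompact ℂ) (nhds 0) := by
  obtain ⟨M, hM0, hM⟩ := hR.isBounded.exists_pos_norm_le
  have hlim : Tendsto (fun w : ℂ => (∫ s in R, ‖ψ s‖) * (2 * ‖w‖⁻¹)) (cocompact ℂ) (nhds 0) := by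
    simpa using ((tendsto_inv_atTop_zero.comp
      (tendsto_norm_cocompact_atTop (E := ℂ))).const_mul 2).const_mul (∫ s in R, ‖ψ s‖)
  refine squeeze_zero_norm' ?_ hlim
  filter_upwards [tendsto_norm_cocompact_atTop.eventually_ge_atTop (2 * M)] with w hw
  rw [← integral_mul_const]
  refine norm_integral_le_of_norm_le (hψ.norm.mul_const _) ?_
  filter_upwards [ae_restrict_mem hR.measurableSet] with s hs
  have hsw : ‖w‖ / 2 ≤ ‖s - w‖ := by
    have := norm_sub_norm_le w s
    rw [norm_sub_rev] at this
    linarith [hM s hs]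
  have hw0 : 0 < ‖w‖ / 2 := by linarith
  calc ‖ψ s * (s - w)⁻¹‖ = ‖ψ s‖ * ‖s - w‖⁻¹ := by rw [norm_mul, norm_inv]
    _ ≤ ‖ψ s‖ * (‖w‖ / 2)⁻¹ := by gcongr
    _ = ‖ψ s‖ * (2 * ‖w‖⁻¹) := by rw [inv_div, div_eq_mul_inv]

theorem eqOn_cauchyTransform_zero_of_extension (hR : IsCompact R) (hψ : IntegrableOn ψ R)
    {U : Set ℂ} (hU : IsOpen U) (hRU : R ⊆ U) {L : ℂ → ℂ} (hL : DifferentiableOn ℂ L U)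
    (heq : Set.EqOn L (cauchyTransform R ψ) (U \ R)) :
    Set.EqOn (cauchyTransform R ψ) 0 Rᶜ := by
  classical
  set F : ℂ → ℂ := U.piecewise L (cauchyTransform R ψ)
  have hFC : Set.EqOn F (cauchyTransform R ψ) Rᶜ := fun z hz => by
    by_cases hzU : z ∈ U
    · exact (U.piecewise_eq_of_mem _ _ hzU).trans (heq ⟨hzU, hz⟩)
    · exact U.piecewise_eq_of_notMem _ _ hzU
  have hF : Differentiable ℂ F := fun z => by
    by_cases hz : z ∈ U
    · exact (hL.differentiableAt (hU.mem_nhds hz)).congr_of_eventuallyEq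
        ((U.piecewise_eqOn L _).eventuallyEq_of_mem (hU.mem_nhds hz))
    · have hzR : z ∈ Rᶜ := fun h => hz (hRU h)
      exact (differentiableAt_cauchyTransform hR hψ hzR).congr_of_eventuallyEq
        (hFC.eventuallyEq_of_mem (hR.isClosed.isOpen_compl.mem_nhds hzR))
  have hlim : Tendsto F (cocompact ℂ) (nhds 0) :=
    (tendsto_cauchyTransform_cocompact hR hψ).congr'
      (hFC.symm.eventuallyEq_of_mem hR.compl_mem_cocompact)
  exact fun w hw => (hFC hw).symm.trans (hF.apply_eq_of_tendsto_cocompact w hlim)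

end CauchyTransform

section PrimeMoments

variable {R : Set ℂ} {ψ : ℂ → ℂ}

/-- The pairing of the density `ψ` on `R` with the function `s ↦ p ^ (-s)`. -/
noncomputable def primeMoment (R : Set ℂ) (ψ : ℂ → ℂ) (p : Nat.Primes) : ℂ :=
  ∫ s in R, ψ s * (p : ℂ) ^ (-s)

/-- The termwise pairing of `ψ` with the Dirichlet series `∑ p, log p / p ^ (s - w + 1)`. -/
noncomputable def primeMomentSeries (R : Set ℂ) (ψ : ℂ → ℂ) (w : ℂ) : ℂ :=
  ∑' p : Nat.Primes, primeMoment R ψ p * (Real.log p * (p : ℂ) ^ (-(1 - w)))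

lemma norm_log_mul_natCast_cpow_neg_le {n : ℕ} (hn : 1 ≤ n) {η : ℝ} (hη : 0 < η) {z : ℂ} {σ : ℝ}
    (hz : σ ≤ z.re) : ‖(Real.log n : ℂ) * (n : ℂ) ^ (-z)‖ ≤ η⁻¹ * (n : ℝ) ^ (η - σ) := by
  have hn0 : (0 : ℝ) < n := by exact_mod_cast hn
  calc ‖(Real.log n : ℂ) * (n : ℂ) ^ (-z)‖ = Real.log n * ‖(n : ℂ) ^ (-z)‖ := by
        rw [norm_mul, norm_real, Real.norm_of_nonneg (Real.log_natCast_nonneg n)]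
    _ ≤ (n : ℝ) ^ η / η * (n : ℝ) ^ (-σ) := by
        gcongr
        · exact Real.log_le_rpow_div hn0.le hη
        · exact norm_natCast_cpow_neg_le hn hz
    _ = η⁻¹ * (n : ℝ) ^ (η - σ) := by rw [sub_eq_add_neg, Real.rpow_add hn0]; ring

lemma differentiableOn_primeMomentSeries (hsum : Summable fun p => ‖primeMoment R ψ p‖) :
    DifferentiableOn ℂ (primeMomentSeries R ψ) {w | w.re < 1} := by
  intro w hw
  obtain ⟨c, hwc, hc⟩ := exists_between (show w.re < 1 from hw)
  have hdiff : DifferentiableOn ℂ (primeMomentSeries R ψ) {w | w.re < c} := by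
    refine differentiableOn_tsum_of_summable_norm (hsum.mul_right (1 - c)⁻¹) (fun p z _ => ?_)
      (isOpen_re_lt c) fun p z hz => ?_
    · have hp := (differentiable_natCast_cpow_neg p.2.one_le).comp
        ((differentiable_const (1 : ℂ)).sub differentiable_id)
      exact ((hp.const_mul _).const_mul _).differentiableAt.differentiableWithinAt
    · have hle := norm_log_mul_natCast_cpow_neg_le p.2.one_le (sub_pos.mpr hc)
        (show 1 - c ≤ (1 - z).re by
          simpa only [sub_re, one_re, sub_le_sub_iff_left] using (show z.re < c from hz).le)
      rw [sub_self, Real.rpow_zero, mul_one] at hle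
      rw [norm_mul]
      gcongr
  exact (hdiff.differentiableAt ((isOpen_re_lt c).mem_nhds hwc)).differentiableWithinAt

lemma hasSum_primeMoment_mul (hR : IsCompact R) (hψ : IntegrableOn ψ R) {w : ℂ} {σ : ℝ}
    (hσ : 1 < σ) (hRw : ∀ s ∈ R, σ ≤ (s - w + 1).re) :
    HasSum (fun p : Nat.Primes => primeMoment R ψ p * (Real.log p * (p : ℂ) ^ (-(1 - w))))
      (∫ s in R, ψ s * ∑' p : Nat.Primes, Real.log p * (p : ℂ) ^ (-(s - w + 1))) := by
  have hint (p : Nat.Primes) :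
      IntegrableOn (fun s => ψ s * (Real.log p * (p : ℂ) ^ (-(s - w + 1)))) R := by
    have hp := (differentiable_natCast_cpow_neg p.2.one_le).continuous
    exact hψ.mul_continuousOn
      (continuous_const.mul (hp.comp (by fun_prop : Continuous fun s => s - w + 1))).continuousOn hR
  have hη : 0 < (σ - 1) / 2 := by linarith
  have hsum : Summable fun p : Nat.Primes =>
      ∫ s in R, ‖ψ s * (Real.log p * (p : ℂ) ^ (-(s - w + 1)))‖ := by
    refine Summable.of_nonneg_of_le (fun p => integral_nonneg fun _ => norm_nonneg _) (fun p => ?_)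
      (((Nat.Primes.summable_rpow (r := (σ - 1) / 2 - σ)).mpr (by linarith)).mul_left
        ((∫ s in R, ‖ψ s‖) * ((σ - 1) / 2)⁻¹))
    rw [mul_assoc, ← integral_mul_const]
    refine setIntegral_mono_on (hint p).norm (hψ.norm.mul_const _) hR.measurableSet fun s hs => ?_
    rw [norm_mul]
    gcongr
    exact norm_log_mul_natCast_cpow_neg_le p.2.one_le hη (hRw s hs)
  have hmoment (p : Nat.Primes) : ∫ s in R, ψ s * (Real.log p * (p : ℂ) ^ (-(s - w + 1))) =
      primeMoment R ψ p * (Real.log p * (p : ℂ) ^ (-(1 - w))) := by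
    have hp : (p : ℂ) ≠ 0 := by exact_mod_cast p.2.ne_zero
    rw [primeMoment, ← integral_mul_const]
    congr 1 with s
    rw [show -(s - w + 1) = -s + -(1 - w) by ring, cpow_add _ _ hp]
    ring
  simpa only [hmoment, tsum_mul_left] using
    hasSum_integral_of_summable_integral_norm hint hsum

lemma primeMomentSeries_eq (hRH : RiemannHypothesis) (hR : IsCompact R) (hRs : R ⊆ strip)
    (hψ : IntegrableOn ψ R) {w : ℂ} (hw : w.re < -1) :
    primeMomentSeries R ψ w =
      cauchyTransform R ψ w + ∫ s in R, ψ s * primeSumRegularPart (s - w + 1) := by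
  have hre : ∀ s ∈ R, 2 ≤ (s - w + 1).re := fun s hs => by
    have := (hRs hs).1
    simp only [add_re, sub_re, one_re]
    linarith
  have hinv : ContinuousOn (fun s => (s - w)⁻¹) R := by
    refine ContinuousOn.inv₀ (by fun_prop) fun s hs h => ?_
    have := hre s hs
    norm_num [h] at this
  have hreg : ContinuousOn (fun s => primeSumRegularPart (s - w + 1)) R := fun s hs =>
    (ContinuousAt.comp (f := fun s : ℂ => s - w + 1)
      (differentiableAt_primeSumRegularPart hRH (by linarith [hre s hs])).continuousAt
      (by fun_prop)).continuousWithinAt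
  rw [primeMomentSeries, (hasSum_primeMoment_mul hR hψ one_lt_two hre).tsum_eq, cauchyTransform,
    ← integral_add (hψ.mul_continuousOn hinv hR) (hψ.mul_continuousOn hreg hR)]
  refine setIntegral_congr_fun hR.measurableSet fun s hs => ?_
  have htsum := (hasSum_log_mul_prime_cpow_neg (one_lt_two.trans_le (hre s hs))).tsum_eq
  rw [add_sub_cancel_right, one_div] at htsum
  simp only [htsum, mul_add]

theorem eqOn_cauchyTransform_zero (hRH : RiemannHypothesis) (hR : IsCompact R) (hRs : R ⊆ strip)
    (hconn : IsPreconnected ({s : ℂ | s.re < 1} \ R)) (hψ : IntegrableOn ψ R)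
    (hsum : Summable fun p => ‖primeMoment R ψ p‖) : Set.EqOn (cauchyTransform R ψ) 0 Rᶜ := by
  set L : ℂ → ℂ := fun w =>
    primeMomentSeries R ψ w - ∫ s in R, ψ s * primeSumRegularPart (s - w + 1)
  have hL : DifferentiableOn ℂ L {s | s.re < 1} := by
    refine (differentiableOn_primeMomentSeries hsum).sub fun w hw => ?_
    refine (differentiableAt_integral_mul_comp_sub hR hψ (isOpen_re_gt (-(1 / 2)))
      (H := fun z => primeSumRegularPart (z + 1)) (fun z hz => ?_)
      fun s hs => ?_).differentiableWithinAt
    · have hz' : 1 / 2 < (z + 1).re := by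
        have : -(1 / 2) < z.re := hz
        simp only [add_re, one_re]
        linarith
      exact (DifferentiableAt.comp z (f := fun z : ℂ => z + 1)
        (differentiableAt_primeSumRegularPart hRH hz') (by fun_prop)).differentiableWithinAt
    · have hs' := (hRs hs).1
      have hw' : w.re < 1 := hw
      change -(1 / 2) < (s - w).re
      rw [sub_re]
      linarith
  have hopen : IsOpen ({s : ℂ | s.re < 1} \ R) := (isOpen_re_lt 1).sdiff hR.isClosed
  refine eqOn_cauchyTransform_zero_of_extension hR hψ (isOpen_re_lt 1) (fun s hs => (hRs hs).2)
    hL ?_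
  refine AnalyticOnNhd.eqOn_of_preconnected_of_eventuallyEq (z₀ := -2)
    ((hL.mono Set.sdiff_subset).analyticOnNhd hopen)
    (DifferentiableOn.analyticOnNhd (fun w hw =>
      (differentiableAt_cauchyTransform hR hψ hw.2).differentiableWithinAt) hopen) hconn
    ⟨by norm_num, fun h => ?_⟩ ?_
  · have := (hRs h).1
    norm_num at this
  · filter_upwards [(isOpen_re_lt (-1)).mem_nhds (show (-2 : ℂ).re < -1 by norm_num)] with w hw
    exact sub_eq_of_eq_add (primeMomentSeries_eq hRH hR hRs hψ hw)

end PrimeMoments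

lemma isPreconnected_re_lt_sdiff_reProdIm {a b c u v : ℝ} (hbc : b < c) :
    IsPreconnected ({s : ℂ | s.re < c} \ (Set.Icc a b ×ℂ Set.Icc u v)) := by
  set left : Set ℂ := {s | s.re < c} ∩ {s | s.re < a}
  set above : Set ℂ := {s | s.re < c} ∩ {s | v < s.im}
  set below : Set ℂ := {s | s.re < c} ∩ {s | s.im < u}
  set right : Set ℂ := {s | s.re < c} ∩ {s | b < s.re}
  have hleft : IsPreconnected left :=
    ((convex_halfSpace_re_lt c).inter (convex_halfSpace_re_lt a)).isPreconnected
  have habove : IsPreconnected above :=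
    ((convex_halfSpace_re_lt c).inter (convex_halfSpace_im_gt v)).isPreconnected
  have hbelow : IsPreconnected below :=
    ((convex_halfSpace_re_lt c).inter (convex_halfSpace_im_lt u)).isPreconnected
  have hright : IsPreconnected right :=
    ((convex_halfSpace_re_lt c).inter (convex_halfSpace_re_gt b)).isPreconnected
  obtain ⟨x, hxa, hxc⟩ : ∃ x, x < a ∧ x < c :=
    ⟨min a c - 1, by linarith [min_le_left a c], by linarith [min_le_right a c]⟩
  obtain ⟨y, hby, hyc⟩ := exists_between hbc
  have hunion : {s : ℂ | s.re < c} \ (Set.Icc a b ×ℂ Set.Icc u v) =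
      left ∪ above ∪ below ∪ right := by
    ext s
    simp only [Set.mem_sdiff, mem_reProdIm, Set.mem_Icc, Set.mem_union, Set.mem_inter_iff,
      Set.mem_ofPred_eq, left, above, below, right, ← not_le]
    tauto
  rw [hunion]
  refine .union ⟨y, v + 1⟩ (Or.inl (Or.inr ⟨hyc, lt_add_one v⟩)) ⟨hyc, hby⟩
    (.union ⟨x, u - 1⟩ (Or.inl ⟨hxc, hxa⟩) ⟨hxc, sub_one_lt u⟩
      (.union ⟨x, v + 1⟩ ⟨hxc, hxa⟩ ⟨hxc, lt_add_one v⟩ hleft habove) hbelow) hright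

section Halfspace

open scoped RealInnerProductSpace

lemma exists_subset_ball_subset_halfspace {E : Type*} [NormedAddCommGroup E]
    [InnerProductSpace ℝ E] {K : Set E} (hK : IsCompact K) {u : E} (hu : ‖u‖ = 1) {c : ℝ}
    (hKc : ∀ x ∈ K, c < ⟪u, x⟫) :
    ∃ z r, K ⊆ Metric.ball z r ∧ ∀ x ∈ Metric.ball z r, c < ⟪u, x⟫ := by
  obtain ⟨m, hm, hKm⟩ : ∃ m > 0, ∀ x ∈ K, m ≤ ⟪u, x⟫ - c := by
    rcases K.eq_empty_or_nonempty with rfl | hne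
    · exact ⟨1, one_pos, by simp⟩
    obtain ⟨y, hy, hmin⟩ := hK.exists_isMinOn (f := fun x => ⟪u, x⟫ - c) hne (by fun_prop)
    exact ⟨_, sub_pos.mpr (hKc y hy), hmin⟩
  obtain ⟨B, hB, hKB⟩ : ∃ B > 0, ∀ x ∈ K, ‖x - c • u‖ ^ 2 < B := by
    obtain ⟨C, hC⟩ := hK.exists_bound_of_continuousOn (f := fun x => ‖x - c • u‖ ^ 2) (by fun_prop)
    exact ⟨|C| + 1, by positivity, fun x hx => ((le_abs_self _).trans (hC x hx)).trans_lt
      ((le_abs_self C).trans_lt (lt_add_one _))⟩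
  set r := B / (2 * m)
  have hr : 0 < r := by positivity
  have hinner (x : E) : ⟪u, x - c • u⟫ = ⟪u, x⟫ - c := by
    rw [inner_sub_right, real_inner_smul_right, real_inner_self_eq_norm_sq, hu]
    ring
  have hshift (x : E) : x - (c + r) • u = (x - c • u) - r • u := by
    rw [add_smul, sub_add_eq_sub_sub]
  refine ⟨(c + r) • u, r, fun x hx => ?_, fun x hx => ?_⟩
  · rw [Metric.mem_ball, dist_eq_norm, hshift, ← sq_lt_sq₀ (norm_nonneg _) hr.le,
      norm_sub_sq_real, real_inner_smul_right, real_inner_comm, hinner, norm_smul, hu, mul_one,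
      Real.norm_of_nonneg hr.le]
    have hrm : 2 * (r * m) = B := by simp only [r]; field_simp
    nlinarith [hKB x hx, mul_le_mul_of_nonneg_left (hKm x hx) hr.le]
  · rw [Metric.mem_ball, dist_eq_norm, hshift] at hx
    have hle := (abs_le.mp ((abs_real_inner_le_norm u _).trans_eq (by rw [hu, one_mul]))).1.trans_eq
      (show ⟪u, x - c • u - r • u⟫ = ⟪u, x⟫ - c - r by
        rw [inner_sub_right, hinner, real_inner_smul_right, real_inner_self_eq_norm_sq, hu]
        ring)
    linarith

end Halfspace

lemma exists_subset_ball_subset_re_gt {K : Set ℂ} (hK : IsCompact K) {c : ℝ}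
    (hKc : ∀ s ∈ K, c < s.re) :
    ∃ z r, K ⊆ Metric.ball z r ∧ ∀ s ∈ Metric.ball z r, c < s.re := by
  simpa [Complex.inner] using
    exists_subset_ball_subset_halfspace hK (u := (1 : ℂ)) norm_one (c := c) (by simpa)

lemma exists_subset_ball_subset_re_lt {K : Set ℂ} (hK : IsCompact K) {c : ℝ}
    (hKc : ∀ s ∈ K, s.re < c) :
    ∃ z r, K ⊆ Metric.ball z r ∧ ∀ s ∈ Metric.ball z r, s.re < c := by
  simpa [Complex.inner] using
    exists_subset_ball_subset_halfspace hK (u := (-1 : ℂ)) (by simp) (c := -c) (by simpa)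

lemma exists_differentiableOn_exp_eq {c : ℂ} {r : ℝ} {f : ℂ → ℂ}
    (hf : DifferentiableOn ℂ f (Metric.ball c r)) (hf0 : ∀ z ∈ Metric.ball c r, f z ≠ 0) :
    ∃ g : ℂ → ℂ, DifferentiableOn ℂ g (Metric.ball c r) ∧
      ∀ z ∈ Metric.ball c r, exp (g z) = f z := by
  rcases le_or_gt r 0 with hr | hr
  · exact ⟨0, by simp [Metric.ball_eq_empty.mpr hr]⟩
  have hc := Metric.mem_ball_self (x := c) hr
  obtain ⟨g, hgc, hg⟩ := ((hf.deriv Metric.isOpen_ball).div hf hf0).isExactOn_ball.with_val_at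
    c (log (f c))
  have hderiv : ∀ z ∈ Metric.ball c r, HasDerivAt (fun z => f z * exp (-g z)) 0 z := fun z hz => by
    have hfz := (hf.differentiableAt (Metric.isOpen_ball.mem_nhds hz)).hasDerivAt
    refine (hfz.mul (hg z hz).fun_neg.cexp).congr_deriv ?_
    have := hf0 z hz
    simp only [Pi.div_apply]
    field_simp
    ring
  refine ⟨g, fun z hz => (hg z hz).differentiableAt.differentiableWithinAt, fun z hz => ?_⟩
  have hconst : f z * exp (-g z) = f c * exp (-g c) :=
    Metric.isOpen_ball.is_const_of_deriv_eq_zero (convex_ball c r).isPreconnected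
      (fun w hw => (hderiv w hw).differentiableAt.differentiableWithinAt)
      (fun w hw => (hderiv w hw).deriv) hz hc
  rw [hgc, exp_neg, exp_neg, exp_log (hf0 c hc), mul_inv_cancel₀ (hf0 c hc)] at hconst
  exact (mul_inv_eq_one₀ (exp_ne_zero _)).mp hconst |>.symm

section CauchyFormula

variable {R : Set ℂ} {ψ g : ℂ → ℂ} {c : ℂ} {r : ℝ}

/-- The density `ψ` times the integrand of Cauchy's formula for `g` on the circle of centre `c` and
radius `r`. -/
noncomputable def cauchyKernelMul (ψ g : ℂ → ℂ) (c : ℂ) (r : ℝ) (s : ℂ) (θ : ℝ) : ℂ :=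
  ψ s * (deriv (circleMap c r) θ * ((circleMap c r θ - s)⁻¹ * g (circleMap c r θ)))

lemma setIntegral_cauchyKernelMul_left (hC : Set.EqOn (cauchyTransform R ψ) 0 Rᶜ) {θ : ℝ}
    (hθ : circleMap c r θ ∉ R) : ∫ s in R, cauchyKernelMul ψ g c r s θ = 0 := by
  have hfactor (s : ℂ) : cauchyKernelMul ψ g c r s θ = ψ s * (s - circleMap c r θ)⁻¹ *
      -(deriv (circleMap c r) θ * g (circleMap c r θ)) := by
    rw [cauchyKernelMul, ← neg_sub s, inv_neg]
    ring
  have hzero : ∫ s in R, ψ s * (s - circleMap c r θ)⁻¹ = 0 := hC hθ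
  simp only [hfactor, integral_mul_const, hzero, zero_mul]

lemma setIntegral_cauchyKernelMul_right (hg : DiffContOnCl ℂ g (Metric.ball c r)) {s : ℂ}
    (hs : s ∈ Metric.ball c r) :
    ∫ θ in Set.Ioc 0 (2 * Real.pi), cauchyKernelMul ψ g c r s θ =
      (2 * Real.pi * I) * (ψ s * g s) := by
  have hcauchy := hg.circleIntegral_sub_inv_smul hs
  rw [circleIntegral, intervalIntegral.integral_of_le Real.two_pi_pos.le] at hcauchy
  simp only [cauchyKernelMul, integral_const_mul]
  simp only [smul_eq_mul] at hcauchy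
  rw [hcauchy]
  ring

lemma integrable_cauchyKernelMul (hR : IsCompact R) (hψ : IntegrableOn ψ R)
    (hg : ContinuousOn g (Metric.sphere c |r|)) (hdisj : ∀ θ, circleMap c r θ ∉ R) :
    Integrable (Function.uncurry (cauchyKernelMul ψ g c r))
      ((volume.restrict R).prod (volume.restrict (Set.Ioc 0 (2 * Real.pi)))) := by
  have hcont : ContinuousOn (fun x : ℂ × ℝ => deriv (circleMap c r) x.2 *
      ((circleMap c r x.2 - x.1)⁻¹ * g (circleMap c r x.2))) (R ×ˢ Set.Icc 0 (2 * Real.pi)) := by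
    have := continuous_circleMap c r
    refine ContinuousOn.mul ?_ (ContinuousOn.mul (ContinuousOn.inv₀ (by fun_prop) ?_) ?_)
    · have := continuous_circleMap 0 r
      simp only [deriv_circleMap]
      fun_prop
    · exact fun x hx h => hdisj x.2 (sub_eq_zero.mp h ▸ hx.1)
    · exact hg.comp (by fun_prop) fun x _ => circleMap_mem_sphere' c r x.2
  have hsub : R ×ˢ Set.Ioc 0 (2 * Real.pi) ⊆ R ×ˢ Set.Icc 0 (2 * Real.pi) :=
    Set.prod_mono le_rfl Set.Ioc_subset_Icc_self
  have hmeas := hR.measurableSet.prod (measurableSet_Ioc (a := 0) (b := 2 * Real.pi))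
  obtain ⟨M, hM⟩ := (hR.prod isCompact_Icc).exists_bound_of_continuousOn hcont
  refine (hψ.comp_fst _).mul_bdd (c := M) ?_ ?_ <;> rw [Measure.prod_restrict]
  · exact (hcont.mono hsub).aestronglyMeasurable hmeas
  · exact (ae_restrict_mem hmeas).mono fun x hx => hM x (hsub hx)

theorem setIntegral_mul_eq_zero_of_cauchyTransform (hR : IsCompact R) (hψ : IntegrableOn ψ R)
    (hC : Set.EqOn (cauchyTransform R ψ) 0 Rᶜ) (hRr : R ⊆ Metric.ball c r)
    (hg : DifferentiableOn ℂ g (Metric.ball c r)) : ∫ s in R, ψ s * g s = 0 := by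
  rcases le_or_gt r 0 with hr | hr
  · simp [Set.subset_empty_iff.mp (hRr.trans_eq (Metric.ball_eq_empty.mpr hr))]
  obtain ⟨ρ, ⟨hρ, hρr⟩, hRρ⟩ := exists_pos_lt_subset_ball hr hR.isClosed hRr
  have hsphere : Metric.sphere c |ρ| ⊆ Metric.ball c r := by
    rw [abs_of_pos hρ]
    exact Metric.sphere_subset_closedBall.trans (Metric.closedBall_subset_ball hρr)
  have hdisj (θ : ℝ) : circleMap c ρ θ ∉ R := fun h =>
    Set.disjoint_left.mp Metric.sphere_disjoint_ball (circleMap_mem_sphere c hρ.le θ) (hRρ h)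
  have hgρ : DiffContOnCl ℂ g (Metric.ball c ρ) :=
    hg.diffContOnCl_ball (Metric.closedBall_subset_ball hρr)
  have hswap := integral_integral_swap
    (integrable_cauchyKernelMul hR hψ (hg.continuousOn.mono hsphere) hdisj)
  simp only [setIntegral_cauchyKernelMul_left hC (hdisj _), integral_zero] at hswap
  rw [setIntegral_congr_fun hR.measurableSet
    fun s hs => setIntegral_cauchyKernelMul_right hgρ (hRρ hs), integral_const_mul] at hswap
  exact (mul_eq_zero.mp hswap).resolve_left two_pi_I_ne_zero

end CauchyFormula

lemma invEulerProduct_ne_zero (N : ℕ) {s : ℂ} (hs : 1 / 2 ≤ s.re) : invEulerProduct N s ≠ 0 :=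
  Finset.prod_ne_zero_iff.mpr fun p hp => norm_pos_iff.mp <| lt_of_lt_of_le (by norm_num) <|
    one_fourth_le_norm_one_sub_natCast_cpow_neg (Nat.prime_of_mem_primesBelow hp).two_le hs

-- `R` need not lie in a disc inside the strip, so `g` is a logarithm of `(s - 1) ζ(s) ∏ (1 - p⁻ˢ)`
-- on a disc in `Re s > 1/2` minus a logarithm of `s - 1` on a disc in `Re s < 1`.
theorem exists_log_invEulerProduct_mul_riemannZeta (hRH : RiemannHypothesis) {R : Set ℂ}
    (hR : IsCompact R) (hRs : R ⊆ strip) (N : ℕ) :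
    ∃ g : ℂ → ℂ, DifferentiableOn ℂ g R ∧
      (∀ s ∈ R, exp (g s) = invEulerProduct N s * riemannZeta s) ∧
      ∀ ψ, IntegrableOn ψ R → Set.EqOn (cauchyTransform R ψ) 0 Rᶜ → ∫ s in R, ψ s * g s = 0 := by
  obtain ⟨c₁, r₁, hR₁, hre₁⟩ := exists_subset_ball_subset_re_gt hR fun s hs => (hRs hs).1
  obtain ⟨c₂, r₂, hR₂, hre₂⟩ := exists_subset_ball_subset_re_lt hR fun s hs => (hRs hs).2
  obtain ⟨g₁, hg₁, hexp₁⟩ := exists_differentiableOn_exp_eq (c := c₁) (r := r₁)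
    (f := fun s => invEulerProduct N s * riemannZeta₁ s)
    ((differentiable_invEulerProduct N).mul differentiable_riemannZeta₁).differentiableOn
    fun s hs => mul_ne_zero (invEulerProduct_ne_zero N (hre₁ s hs).le)
      (riemannZeta₁_ne_zero hRH (hre₁ s hs))
  obtain ⟨g₂, hg₂, hexp₂⟩ := exists_differentiableOn_exp_eq (c := c₂) (r := r₂)
    (f := fun s => s - 1) (by fun_prop)
    fun s hs => sub_ne_zero.mpr (ne_one_of_re_lt_one (hre₂ s hs))
  refine ⟨fun s => g₁ s - g₂ s, (hg₁.mono hR₁).sub (hg₂.mono hR₂), fun s hs => ?_,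
    fun ψ hψ hC => ?_⟩
  · have hs1 : s ≠ 1 := ne_one_of_re_lt_one (hRs hs).2
    rw [exp_sub, hexp₁ s (hR₁ hs), hexp₂ s (hR₂ hs), riemannZeta₁_of_ne_one hs1,
      div_eq_iff (sub_ne_zero.mpr hs1)]
    ring
  · simp only [mul_sub (ψ _)]
    rw [integral_sub (hψ.mul_continuousOn (hg₁.continuousOn.mono hR₁) hR)
      (hψ.mul_continuousOn (hg₂.continuousOn.mono hR₂) hR),
      setIntegral_mul_eq_zero_of_cauchyTransform hR hψ hC hR₁ hg₁,
      setIntegral_mul_eq_zero_of_cauchyTransform hR hψ hC hR₂ hg₂, sub_zero]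

section SquareIntegrable

open scoped InnerProductSpace

variable {α : Type*} [MeasurableSpace α] {μ : Measure α}

lemma inner_toLp {f : α → ℂ} (φ : Lp ℂ 2 μ) (hf : MemLp f 2 μ) :
    ⟪φ, hf.toLp f⟫_ℂ = ∫ s, (starRingEnd ℂ) (φ s) * f s ∂μ := by
  rw [L2.inner_def]
  refine integral_congr_ae ?_
  filter_upwards [hf.coeFn_toLp] with s hs
  rw [hs, RCLike.inner_apply, mul_comm]

lemma norm_sq_eq_integral (φ : Lp ℂ 2 μ) : ‖φ‖ ^ 2 = ∫ s, ‖φ s‖ ^ 2 ∂μ := by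
  have hinner : ((‖φ‖ ^ 2 : ℝ) : ℂ) = ((∫ s, ‖φ s‖ ^ 2 ∂μ : ℝ) : ℂ) := by
    rw [← integral_complex_ofReal, ofReal_pow]
    simpa only [inner_self_eq_norm_sq_to_K, coe_algebraMap, ofReal_pow] using
      L2.inner_def (𝕜 := ℂ) φ φ
  exact ofReal_injective hinner

lemma eventually_exists_integral_norm_sq_sum_mul_sub_le {ι : Type*} {f : ι → α → ℂ} {g : α → ℂ}
    (hf : ∀ i, MemLp (f i) 2 μ) (hg : MemLp g 2 μ)
    (horth : ∀ ψ, MemLp ψ 2 μ → Summable (fun i => ‖∫ s, ψ s * f i s ∂μ‖) → ∫ s, ψ s * g s ∂μ = 0)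
    {ε : ℝ} (hε : 0 < ε) (hsq : ∀ F : Finset ι, ∑ i ∈ F, ∫ s, ‖f i s‖ ^ 2 ∂μ ≤ ε ^ 2) :
    ∀ᶠ F : Finset ι in atTop, ∃ ω : ι → ℂ, (∀ i, ‖ω i‖ = 1) ∧
      ∫ s, ‖∑ i ∈ F, ω i * f i s - g s‖ ^ 2 ∂μ ≤ (2 * ε) ^ 2 := by
  have hnorm (i : ι) : ‖(hf i).toLp‖ ^ 2 = ∫ s, ‖f i s‖ ^ 2 ∂μ := by
    rw [norm_sq_eq_integral]
    refine integral_congr_ae ?_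
    filter_upwards [(hf i).coeFn_toLp] with s hs
    rw [hs]
  have hround := eventually_exists_norm_sum_smul_sub_le (x := fun i => (hf i).toLp)
    (g := hg.toLp) (fun φ hφ => ?_) hε (by simpa only [hnorm] using hsq)
  · filter_upwards [hround] with F ⟨ω, hω, hle⟩
    refine ⟨ω, hω, le_of_eq_of_le ?_ (pow_le_pow_left₀ (norm_nonneg _) hle 2)⟩
    rw [norm_sq_eq_integral]
    refine integral_congr_ae ?_
    filter_upwards [Lp.coeFn_sub (∑ i ∈ F, ω i • (hf i).toLp) hg.toLp, hg.coeFn_toLp,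
      Lp.coeFn_finsetSum F fun i => ω i • (hf i).toLp,
      (ae_ball_iff F.countable_toSet).mpr fun i _ => (hf i).coeFn_toLp,
      (ae_ball_iff F.countable_toSet).mpr fun i _ => Lp.coeFn_smul (ω i) (hf i).toLp]
      with s hsub hgs hsum hfs hsmul
    rw [hsub, Pi.sub_apply, hgs, hsum, Finset.sum_apply]
    congr 3
    refine Finset.sum_congr rfl fun i hi => ?_
    rw [hsmul i hi, Pi.smul_apply, hfs i hi, smul_eq_mul]
  · simp only [inner_toLp] at hφ ⊢
    exact horth _ (Lp.memLp φ).star hφ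

lemma memLp_of_continuousOn [TopologicalSpace α] [OpensMeasurableSpace α]
    [IsFiniteMeasureOnCompacts μ] {K : Set α} (hK : IsCompact K) (hKm : MeasurableSet K)
    {f : α → ℂ} (hf : ContinuousOn f K) (p : ℝ≥0∞) : MemLp f p (μ.restrict K) := by
  obtain ⟨M, hM⟩ := hK.exists_bound_of_continuousOn hf
  have : IsFiniteMeasure (μ.restrict K) := isFiniteMeasure_restrict.mpr hK.measure_ne_top
  exact MemLp.of_bound (hf.aestronglyMeasurable_of_isCompact hK hKm) M
    ((ae_restrict_mem hKm).mono hM)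

end SquareIntegrable

section UnimodularPrimeSums

variable {R : Set ℂ}

/-- The function `s ↦ n ^ (-s)` if `n` is a prime `≥ M`, and zero otherwise. -/
noncomputable def primePowerFrom (M n : ℕ) (s : ℂ) : ℂ :=
  if n.Prime ∧ M ≤ n then (n : ℂ) ^ (-s) else 0

lemma continuous_primePowerFrom (M n : ℕ) : Continuous (primePowerFrom M n) := by
  unfold primePowerFrom
  split_ifs with hn
  · exact (differentiable_natCast_cpow_neg hn.1.one_le).continuous
  · exact continuous_const

lemma sum_mul_primePowerFrom (ω : ℕ → ℂ) (M P : ℕ) (s : ℂ) :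
    ∑ n ∈ Finset.range P, ω n * primePowerFrom M n s =
      ∑ p ∈ P.primesBelow with M ≤ p, ω p * (p : ℂ) ^ (-s) := by
  simp only [primePowerFrom, mul_ite, mul_zero, ← Finset.sum_filter, Nat.primesBelow,
    Finset.filter_filter]

lemma summable_norm_primeMoment {ψ : ℂ → ℂ} (M : ℕ)
    (h : Summable fun n => ‖∫ s in R, ψ s * primePowerFrom M n s‖) :
    Summable fun p => ‖primeMoment R ψ p‖ := by
  refine (h.comp_injective Nat.Primes.coe_nat_injective).congr_cofinite ?_
  filter_upwards [((Set.finite_lt_nat M).preimage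
    Nat.Primes.coe_nat_injective.injOn).compl_mem_cofinite] with p hp
  have hMp : M ≤ p := not_lt.mp hp
  simp only [Function.comp, primePowerFrom, primeMoment, if_pos (And.intro p.2 hMp)]

lemma setIntegral_norm_sq_primePowerFrom_le (hR : IsCompact R) {a : ℝ}
    (hRa : ∀ s ∈ R, a ≤ s.re) (M n : ℕ) :
    ∫ s in R, ‖primePowerFrom M n s‖ ^ 2 ≤
      if M ≤ n then volume.real R * (n : ℝ) ^ (-(2 * a)) else 0 := by
  by_cases hn : n.Prime ∧ M ≤ n
  · refine (setIntegral_mono_on (((continuous_primePowerFrom M n).norm.pow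
      2).continuousOn.integrableOn_compact hR) (integrableOn_const hR.measure_ne_top)
      hR.measurableSet (g := fun _ => (n : ℝ) ^ (-(2 * a))) fun s hs => ?_).trans ?_
    · simp only [primePowerFrom, if_pos hn]
      rw [show -(2 * a) = -a * (2 : ℕ) by push_cast; ring,
        Real.rpow_mul_natCast (Nat.cast_nonneg n)]
      exact pow_le_pow_left₀ (norm_nonneg _) (norm_natCast_cpow_neg_le hn.1.one_le (hRa s hs)) 2
    · rw [setIntegral_const, if_pos hn.2, smul_eq_mul]
  · simp only [primePowerFrom, if_neg hn, norm_zero, ne_eq, two_ne_zero, not_false_eq_true,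
      zero_pow, integral_zero]
    positivity

theorem eventually_exists_setIntegral_norm_sq_sum_sub_le (hRH : RiemannHypothesis)
    (hR : IsCompact R) (hRs : R ⊆ strip) (hconn : IsPreconnected ({s : ℂ | s.re < 1} \ R))
    {g : ℂ → ℂ} (hg : ContinuousOn g R)
    (horth : ∀ ψ, IntegrableOn ψ R → Set.EqOn (cauchyTransform R ψ) 0 Rᶜ → ∫ s in R, ψ s * g s = 0)
    {a : ℝ} (hRa : ∀ s ∈ R, a ≤ s.re) {M : ℕ} {ε : ℝ} (hε : 0 < ε)
    (hM : ∀ F : Finset ℕ, (∀ n ∈ F, M ≤ n) →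
      ∑ n ∈ F, volume.real R * (n : ℝ) ^ (-(2 * a)) ≤ ε ^ 2) :
    ∀ᶠ P : ℕ in atTop, ∃ ω : ℕ → ℂ, (∀ p, ‖ω p‖ = 1) ∧
      ∫ s in R, ‖∑ p ∈ P.primesBelow with M ≤ p, ω p * (p : ℂ) ^ (-s) - g s‖ ^ 2 ≤
        (2 * ε) ^ 2 := by
  have : IsFiniteMeasure (volume.restrict R) := isFiniteMeasure_restrict.mpr hR.measure_ne_top
  have hround := eventually_exists_integral_norm_sq_sum_mul_sub_le (μ := volume.restrict R)
    (f := primePowerFrom M)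
    (fun n => memLp_of_continuousOn hR hR.measurableSet
      (continuous_primePowerFrom M n).continuousOn 2)
    (memLp_of_continuousOn hR hR.measurableSet hg 2) (fun ψ hψ hsum => ?_) hε fun F => ?_
  · simpa only [sum_mul_primePowerFrom] using tendsto_finset_range.eventually hround
  · have hψ1 : IntegrableOn ψ R := hψ.integrable one_le_two
    exact horth ψ hψ1
      (eqOn_cauchyTransform_zero hRH hR hRs hconn hψ1 (summable_norm_primeMoment M hsum))
  · refine (Finset.sum_le_sum fun n _ =>
      setIntegral_norm_sq_primePowerFrom_le hR hRa M n).trans ?_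
    rw [← Finset.sum_filter]
    exact hM _ fun n hn => (Finset.mem_filter.mp hn).2

end UnimodularPrimeSums

lemma norm_one_sub_mul_exp_sub_one_le {x : ℂ} (hx : ‖x‖ ≤ 1) :
    ‖(1 - x) * exp x - 1‖ ≤ 3 * ‖x‖ ^ 2 := by
  have hexp := norm_exp_sub_one_sub_id_le hx
  have hsub : ‖1 - x‖ ≤ 2 := (norm_sub_le _ _).trans (by rw [norm_one]; linarith)
  calc ‖(1 - x) * exp x - 1‖ = ‖-x ^ 2 + (1 - x) * (exp x - 1 - x)‖ := by ring_nf
    _ ≤ ‖-x ^ 2‖ + ‖(1 - x) * (exp x - 1 - x)‖ := norm_add_le _ _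
    _ ≤ ‖x‖ ^ 2 + 2 * ‖x‖ ^ 2 := by
        rw [norm_neg, norm_pow, norm_mul]
        gcongr
    _ = 3 * ‖x‖ ^ 2 := by ring

lemma norm_prod_one_sub_mul_exp_sub_one_le {ι : Type*} {S : Finset ι} {x : ι → ℂ} {η : ℝ}
    (hx : ∀ i ∈ S, ‖x i‖ ≤ 1) (hsum : ∑ i ∈ S, ‖x i‖ ^ 2 ≤ η / 6) (hη : η ≤ 1) :
    ‖∏ i ∈ S, (1 - x i) * exp (x i) - 1‖ ≤ η := by
  set t := ∑ i ∈ S, ‖(1 - x i) * exp (x i) - 1‖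
  have ht0 : 0 ≤ t := Finset.sum_nonneg fun _ _ => norm_nonneg _
  have ht : t ≤ η / 2 :=
    calc t ≤ ∑ i ∈ S, 3 * ‖x i‖ ^ 2 :=
          Finset.sum_le_sum fun i hi => norm_one_sub_mul_exp_sub_one_le (hx i hi)
      _ ≤ η / 2 := by rw [← Finset.mul_sum]; linarith
  have hexp := Real.abs_exp_sub_one_le (x := t) (by rw [abs_of_nonneg ht0]; linarith)
  rw [abs_of_nonneg ht0] at hexp
  calc ‖∏ i ∈ S, (1 - x i) * exp (x i) - 1‖ ≤ Real.exp t - 1 := by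
        simpa only [add_sub_cancel] using
          Finset.norm_prod_one_add_sub_one_le S fun i => (1 - x i) * exp (x i) - 1
    _ ≤ 2 * t := (le_abs_self _).trans hexp
    _ ≤ η := by linarith

lemma norm_mul_sub_one_le {𝕜 : Type*} [SeminormedRing 𝕜] {x y : 𝕜} {η : ℝ} (hx : ‖x - 1‖ ≤ η)
    (hy : ‖y - 1‖ ≤ η) (hη : η ≤ 1) : ‖x * y - 1‖ ≤ 3 * η := by
  have hη0 : 0 ≤ η := (norm_nonneg _).trans hx
  calc ‖x * y - 1‖ = ‖(x - 1) * (y - 1) + (x - 1) + (y - 1)‖ := by noncomm_ring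
    _ ≤ ‖(x - 1) * (y - 1)‖ + ‖x - 1‖ + ‖y - 1‖ := norm_add₃_le
    _ ≤ η * 1 + η + η := by
        gcongr
        exact (norm_mul_le _ _).trans
          (mul_le_mul hx (hy.trans hη) (norm_nonneg _) hη0)
    _ = 3 * η := by ring

lemma twistedInvEulerProduct_ite {M P : ℕ} (hMP : M ≤ P) (ω : ℕ → ℂ) (s : ℂ) :
    twistedInvEulerProduct (fun p => if p < M then 1 else ω p) P s =
      invEulerProduct M s * ∏ p ∈ P.primesBelow with M ≤ p, (1 - ω p * (p : ℂ) ^ (-s)) := by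
  have hsmall : {p ∈ P.primesBelow | p < M} = M.primesBelow := by
    ext p
    simp only [Finset.mem_filter, Nat.mem_primesBelow]
    exact ⟨fun h => ⟨h.2, h.1.2⟩, fun h => ⟨⟨h.1.trans_le hMP, h.2⟩, h.1⟩⟩
  rw [twistedInvEulerProduct, ← Finset.prod_filter_mul_prod_filter_not _ (· < M), hsmall,
    invEulerProduct]
  simp only [not_lt]
  congr 1 <;> refine Finset.prod_congr rfl fun p hp => ?_
  · rw [if_pos (Nat.mem_primesBelow.mp hp).1, one_mul]
  · rw [if_neg (Finset.mem_filter.mp hp).2.not_gt]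

lemma norm_twistedInvEulerProduct_mul_sub_one_le {M P : ℕ} (hMP : M ≤ P) {ω : ℕ → ℂ}
    (hω : ∀ p, ‖ω p‖ = 1) {s z w : ℂ} {a η : ℝ} (ha : 0 ≤ a) (hs : a ≤ s.re)
    (hz : exp z = invEulerProduct M s * w)
    (hzs : ‖∑ p ∈ P.primesBelow with M ≤ p, ω p * (p : ℂ) ^ (-s) - z‖ ≤ η / 2)
    (htail : ∑ p ∈ P.primesBelow with M ≤ p, (p : ℝ) ^ (-(2 * a)) ≤ η / 6) (hη : η ≤ 1) :
    ‖twistedInvEulerProduct (fun p => if p < M then 1 else ω p) P s * w - 1‖ ≤ 3 * η := by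
  set S := {p ∈ P.primesBelow | M ≤ p}
  set x : ℕ → ℂ := fun p => ω p * (p : ℂ) ^ (-s)
  have hfactor : twistedInvEulerProduct (fun p => if p < M then 1 else ω p) P s * w =
      (∏ p ∈ S, (1 - x p) * exp (x p)) * exp (z - ∑ p ∈ S, x p) := by
    rw [twistedInvEulerProduct_ite hMP, mul_right_comm, ← hz, Finset.prod_mul_distrib, ← exp_sum,
      mul_assoc, ← exp_add, add_sub_cancel, mul_comm]
  have hprime : ∀ p ∈ S, 1 ≤ p := fun p hp =>
    (Nat.prime_of_mem_primesBelow (Finset.mem_filter.mp hp).1).one_le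
  have hx (p : ℕ) : ‖x p‖ = ‖(p : ℂ) ^ (-s)‖ := by rw [norm_mul, hω, one_mul]
  have hprod : ‖∏ p ∈ S, (1 - x p) * exp (x p) - 1‖ ≤ η := by
    refine norm_prod_one_sub_mul_exp_sub_one_le (fun p hp => ?_)
      ((Finset.sum_le_sum fun p hp => ?_).trans htail) hη
    · exact (hx p).trans_le (norm_natCast_cpow_neg_le_one (hprime p hp) (ha.trans hs))
    · rw [hx, show -(2 * a) = -a * (2 : ℕ) by push_cast; ring,
        Real.rpow_mul_natCast (Nat.cast_nonneg p)]
      exact pow_le_pow_left₀ (norm_nonneg _) (norm_natCast_cpow_neg_le (hprime p hp) hs) 2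
  have hexp : ‖exp (z - ∑ p ∈ S, x p) - 1‖ ≤ η := by
    rw [norm_sub_rev] at hzs
    linarith [norm_exp_sub_one_le (x := z - ∑ p ∈ S, x p) (by linarith)]
  rw [hfactor]
  exact norm_mul_sub_one_le hprod hexp hη

lemma norm_le_of_setIntegral_norm_sq_le {f : ℂ → ℂ} {R : Set ℂ} (hR : IsCompact R)
    (hf : DifferentiableOn ℂ f R) {s : ℂ} {r η : ℝ} (hr : 0 < r) (hη : 0 ≤ η)
    (hs : Metric.closedBall s r ⊆ R)
    (hint : ∫ w in R, ‖f w‖ ^ 2 ≤ (r * η) ^ 2) : ‖f s‖ ≤ η := by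
  have harea := mul_norm_sq_le_setIntegral_norm_sq hr
    ((hf.mono hs).diffContOnCl_ball le_rfl) (Metric.ball_subset_closedBall.trans hs)
    ((hf.continuousOn.norm.pow 2).integrableOn_compact hR)
  have hsq : (r * ‖f s‖) ^ 2 ≤ (r * η) ^ 2 :=
    calc (r * ‖f s‖) ^ 2 = 1 * (r ^ 2 * ‖f s‖ ^ 2) := by ring
      _ ≤ Real.pi * (r ^ 2 * ‖f s‖ ^ 2) := by
          gcongr
          linarith [Real.pi_gt_three]
      _ ≤ (r * η) ^ 2 := by linarith
  exact le_of_mul_le_mul_left (le_of_sq_le_sq hsq (by positivity)) hr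

lemma exists_closedBall_subset_reProdIm {K : Set ℂ} (hK : IsCompact K) (hKs : K ⊆ strip) :
    ∃ a b d r, 1 / 2 < a ∧ b < 1 ∧ 0 < r ∧
      ∀ s ∈ K, Metric.closedBall s r ⊆ Set.Icc a b ×ℂ Set.Icc (-d) d := by
  obtain ⟨r, hr, hsub⟩ := hK.exists_cthickening_subset_open isOpen_strip hKs
  obtain ⟨a, b, d, ha, hb, -, hKS⟩ := exists_subset_truncatedStrip hK.cthickening hsub
  refine ⟨a, b, d, r, ha, hb, hr, fun s hs w hw => ?_⟩
  obtain ⟨haw, hwb, hwd⟩ := hKS (Metric.closedBall_subset_cthickening hs r hw)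
  exact mem_reProdIm.mpr ⟨⟨haw, hwb⟩, abs_le.mp ((abs_im_le_norm w).trans hwd)⟩

lemma exists_twistedInvEulerProduct_mul_riemannZeta_near_one (hRH : RiemannHypothesis)
    {R : Set ℂ} (hR : IsCompact R) (hRs : R ⊆ strip) (hpre : IsPreconnected ({s | s.re < 1} \ R))
    {a : ℝ} (ha : 1 / 2 < a) (hRa : ∀ s ∈ R, a ≤ s.re) {r : ℝ} (hr : 0 < r) {δ : ℝ} (hδ : 0 < δ)
    (N : ℕ) :
    ∃ P ≥ N, ∃ ω : ℕ → ℂ, (∀ p, ‖ω p‖ = 1) ∧ ∀ s, Metric.closedBall s r ⊆ R →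
      ‖twistedInvEulerProduct ω P s * riemannZeta s - 1‖ ≤ δ := by
  obtain ⟨η, hη, hη1, hηδ⟩ : ∃ η > 0, η ≤ 1 ∧ 3 * η ≤ δ :=
    ⟨min 1 (δ / 3), by positivity, min_le_left _ _, by linarith [min_le_right 1 (δ / 3)]⟩
  set ε := r * η / 4
  have hε : 0 < ε := by positivity
  set V := volume.real R
  have : 0 ≤ V := measureReal_nonneg
  obtain ⟨N₀, -, htail⟩ := exists_forall_sum_rpow_neg_le (show 1 < 2 * a by linarith)
    (show 0 < min (η / 6) (ε ^ 2 / (V + 1)) by positivity)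
  set M := max N N₀
  have hMN₀ : N₀ ≤ M := le_max_right _ _
  obtain ⟨g, hg, hexp, horth⟩ := exists_log_invEulerProduct_mul_riemannZeta hRH hR hRs M
  have hphase := eventually_exists_setIntegral_norm_sq_sum_sub_le hRH hR hRs hpre hg.continuousOn
    horth hRa (M := M) hε fun F hF => by
      have hle := (htail F fun n hn => hMN₀.trans (hF n hn)).trans (min_le_right _ _)
      rw [le_div_iff₀ (by positivity)] at hle
      rw [← Finset.mul_sum]
      have hpos : 0 ≤ ∑ n ∈ F, (n : ℝ) ^ (-(2 * a)) := by positivity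
      linarith
  obtain ⟨P, ⟨ω, hω, hint⟩, hMP⟩ := (hphase.and (eventually_ge_atTop M)).exists
  refine ⟨P, (le_max_left _ _).trans hMP, fun p => if p < M then 1 else ω p, fun p => ?_,
    fun s hs => ?_⟩
  · by_cases hp : p < M <;> simp [hp, hω]
  have hsR : s ∈ R := hs (Metric.mem_closedBall_self hr.le)
  refine (norm_twistedInvEulerProduct_mul_sub_one_le hMP hω (by linarith) (hRa s hsR)
    (hexp s hsR) ?_ ?_ hη1).trans hηδ
  · refine norm_le_of_setIntegral_norm_sq_le hR (f := fun s =>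
      ∑ p ∈ P.primesBelow with M ≤ p, ω p * (p : ℂ) ^ (-s) - g s) ?_ hr (by positivity)
      hs (hint.trans_eq (by simp only [ε]; ring))
    refine DifferentiableOn.sub (DifferentiableOn.fun_sum fun p hp => ?_) hg
    have hp' := Nat.prime_of_mem_primesBelow (Finset.mem_filter.mp hp).1
    exact ((differentiable_natCast_cpow_neg hp'.one_le).const_mul _).differentiableOn
  · exact (htail _ fun p hp => hMN₀.trans (Finset.mem_filter.mp hp).2).trans (min_le_left _ _)

theorem exists_norm_twistedInvEulerProduct_mul_riemannZeta_sub_one_le (hRH : RiemannHypothesis)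
    {K : Set ℂ} (hK : IsCompact K) (hKs : K ⊆ strip) {δ : ℝ} (hδ : 0 < δ) (N : ℕ) :
    ∃ P ≥ N, ∃ ω : ℕ → ℂ, (∀ p, ‖ω p‖ = 1) ∧
      ∀ s ∈ K, ‖twistedInvEulerProduct ω P s * riemannZeta s - 1‖ ≤ δ := by
  obtain ⟨a, b, d, r, ha, hb, hr, hKR⟩ := exists_closedBall_subset_reProdIm hK hKs
  set R := Set.Icc a b ×ℂ Set.Icc (-d) d
  have hRa : ∀ s ∈ R, a ≤ s.re := fun s hs => (mem_reProdIm.mp hs).1.1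
  have hRs : R ⊆ strip := fun s hs =>
    ⟨ha.trans_le (hRa s hs), (mem_reProdIm.mp hs).1.2.trans_lt hb⟩
  obtain ⟨P, hP, ω, hω, hnear⟩ := exists_twistedInvEulerProduct_mul_riemannZeta_near_one hRH
    (isCompact_Icc.reProdIm isCompact_Icc) hRs (isPreconnected_re_lt_sdiff_reProdIm hb) ha hRa hr
    hδ N
  exact ⟨P, hP, ω, hω, fun s hs => hnear s (hKR s hs)⟩

theorem rh_iff_self_approx_zeta_general {𝒦 : Set (Set ℂ)}
    (h𝒦 : ∀ K ∈ 𝒦, IsCompact K ∧ K ⊆ strip)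
    (hball : ∀ c r, 0 < r → Metric.closedBall c r ⊆ strip → Metric.closedBall c r ∈ 𝒦) :
    RiemannHypothesis ↔
      ∀ K ∈ 𝒦, ∀ ε : ℝ, 0 < ε →
        0 < lowerDens {τ : ℝ |
          supNorm K (fun s => riemannZeta (s + τ * Complex.I) - riemannZeta s)
            < ENNReal.ofReal ε} := by
  refine ⟨fun hRH K hK ε hε => ?_, fun h =>
    riemannHypothesis_of_selfApprox fun c r hr hsub ε hε => h _ (hball c r hr hsub) ε hε⟩
  exact lowerDens_selfApproxTimes_pos (h𝒦 K hK).1 (h𝒦 K hK).2 (fun δ hδ N =>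
    exists_norm_twistedInvEulerProduct_mul_riemannZeta_sub_one_le hRH (h𝒦 K hK).1 (h𝒦 K hK).2
      hδ N) hε

theorem rh_iff_self_approx_zeta :
    RiemannHypothesis ↔
      ∀ K : Set ℂ, IsCompact K → K ⊆ strip → IsConnected Kᶜ → ∀ ε : ℝ, 0 < ε →
        0 < lowerDens {τ : ℝ |
          supNorm K (fun s => riemannZeta (s + τ * Complex.I) - riemannZeta s)
            < ENNReal.ofReal ε} := by
  simpa only [Set.mem_ofPred_eq, and_imp] using rh_iff_self_approx_zeta_general
    (𝒦 := {K | IsCompact K ∧ K ⊆ strip ∧ IsConnected Kᶜ}) (fun K hK => ⟨hK.1, hK.2.1⟩)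
    fun c r hr hsub => ⟨isCompact_closedBall c r, hsub,
      isConnected_compl_closedBall (by simp [Complex.rank_real_complex]) c hr.le⟩
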